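/- Let d ≥ 2, let Ω ⊂ ℝ^d be a bounded Lipschitz domain, let 1 < p < ∞ and 1/p + 1/q = 1. Suppose that for each x ∈ Ω there exists a function V^x, biharmonic in Ω, with (∇V^x)* ∈ L^q(∂Ω, σ) and with D^α V^x = D^α Γ^x nontangentially σ-a.e. on ∂Ω for every |α| ≤ 1 (i.e., a solution of the L^q Dirichlet problem with boundary data D^α Γ^x). Then any solution of the L^p regularity problem is unique: if u is biharmonic in Ω, (∇²u)* ∈ L^p(∂Ω, σ), and u and ∇u have nontangential limit 0 σ-a.e. on ∂Ω, then u ≡ 0 in Ω. -/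

import Mathlib

open MeasureTheory Metric Filter Set
open scoped ENNReal NNReal Topology RealInnerProductSpace

noncomputable section

/-- Euclidean space `ℝ^d`. -/
abbrev Euc (d : ℕ) := EuclideanSpace ℝ (Fin d)

variable {d : ℕ}

/-- The partial derivative `D_i u` in the `i`-th coordinate direction. -/
def pder (i : Fin d) (u : Euc d → ℝ) : Euc d → ℝ :=
  fun x => fderiv ℝ u x (EuclideanSpace.single i 1)

/-- The Laplacian `Δu = ∑ i, D_i D_i u`. -/
def lap (u : Euc d → ℝ) : Euc d → ℝ := fun x => ∑ i, pder i (pder i u) x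

/-- The bilaplacian `Δ²u`. -/
def bilap (u : Euc d → ℝ) : Euc d → ℝ := lap (lap u)

/-- `u` is biharmonic in the open set `Ω` : it is smooth there and `Δ²u = 0`. -/
def Biharmonic (Ω : Set (Euc d)) (u : Euc d → ℝ) : Prop :=
  ContDiffOn ℝ (⊤ : ℕ∞) u Ω ∧ ∀ x ∈ Ω, bilap u x = 0

/-- `|∇u|`. -/
def gnorm1 (u : Euc d → ℝ) : Euc d → ℝ :=
  fun x => Real.sqrt (∑ i, (pder i u x) ^ 2)

/-- `|∇²u|`. -/
def gnorm2 (u : Euc d → ℝ) : Euc d → ℝ :=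
  fun x => Real.sqrt (∑ i, ∑ j, (pder i (pder j u) x) ^ 2)

/-- `|∇³u|`. -/
def gnorm3 (u : Euc d → ℝ) : Euc d → ℝ :=
  fun x => Real.sqrt (∑ i, ∑ j, ∑ k, (pder i (pder j (pder k u)) x) ^ 2)

/-- The last ("vertical") coordinate `x_d` of a point of `ℝ^d`. -/
def vertCoord (d : ℕ) (x : Euc d) : ℝ :=
  if h : 0 < d then x ⟨d - 1, Nat.sub_lt h one_pos⟩ else 0

/-- The vertical unit vector `e_d`. -/
def vertDir (d : ℕ) : Euc d :=
  if h : 0 < d then EuclideanSpace.single ⟨d - 1, Nat.sub_lt h one_pos⟩ 1 else 0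

/-- The horizontal coordinates `x′` of a point of `ℝ^d`. -/
def graphCoord (d : ℕ) (x : Euc d) : Euc (d - 1) :=
  WithLp.toLp 2 fun i => x (Fin.castLE (Nat.sub_le d 1) i)

/-- The partial derivative `D_d u` in the vertical direction. -/
def pdLast (u : Euc d → ℝ) : Euc d → ℝ := fun x => fderiv ℝ u x (vertDir d)

/-- A bounded Lipschitz domain: a bounded connected open set whose boundary is covered by
finitely many open sets, in each of which, after a rigid motion, the boundary is the graph of
a Lipschitz function and the domain lies above the graph. -/
def IsLipschitzDomain (Ω : Set (Euc d)) : Prop :=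
  IsOpen Ω ∧ Bornology.IsBounded Ω ∧ IsConnected Ω ∧
  ∃ (N : ℕ) (U : Fin N → Set (Euc d)),
    (∀ i, IsOpen (U i)) ∧ (frontier Ω ⊆ ⋃ i, U i) ∧
    ∀ i, ∃ (R : Euc d ≃ᵢ Euc d) (M : ℝ≥0) (η : Euc (d - 1) → ℝ),
      LipschitzWith M η ∧
      U i ∩ Ω = U i ∩ (R ⁻¹' {x | η (graphCoord d x) < vertCoord d x}) ∧
      U i ∩ frontier Ω = U i ∩ (R ⁻¹' {x | vertCoord d x = η (graphCoord d x)})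

/-- The nontangential approach cone (aperture 1) with vertex `Q ∈ ∂Ω`. -/
def ntCone (Ω : Set (Euc d)) (Q : Euc d) : Set (Euc d) :=
  {x | x ∈ Ω ∧ dist x Q < 2 * Metric.infDist x (frontier Ω)}

/-- The nontangential maximal function `(w)*`. -/
def ntMax (Ω : Set (Euc d)) (w : Euc d → ℝ) (Q : Euc d) : ℝ≥0∞ :=
  ⨆ x ∈ ntCone Ω Q, (‖w x‖₊ : ℝ≥0∞)

/-- `w` has nontangential limit `L` at the boundary point `Q`. -/
def NTLim (Ω : Set (Euc d)) (w : Euc d → ℝ) (Q : Euc d) (L : ℝ) : Prop :=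
  Filter.Tendsto w (nhdsWithin Q (ntCone Ω Q)) (nhds L)

/-- The surface measure on `∂Ω`: the `(d-1)`-dimensional Hausdorff measure restricted
to the boundary. -/
def sMeasure (Ω : Set (Euc d)) : Measure (Euc d) :=
  (μH[(d : ℝ) - 1]).restrict (frontier Ω)

/-- The `L^p(∂Ω)` norm of the nontangential maximal function of `w`. -/
def ntMaxLp (Ω : Set (Euc d)) (w : Euc d → ℝ) (p : ℝ) : ℝ≥0∞ :=
  (∫⁻ Q, (ntMax Ω w Q) ^ p ∂(sMeasure Ω)) ^ (1 / p)

/-- The `L^p(∂Ω, σ)` norm of a function. -/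
def bLp (Ω : Set (Euc d)) (f : Euc d → ℝ) (p : ℝ) : ℝ≥0∞ :=
  eLpNorm f (ENNReal.ofReal p) (sMeasure Ω)

/-- A test function: smooth with compact support in `ℝ^d`. -/
def TestFun (f : Euc d → ℝ) : Prop := ContDiff ℝ (⊤ : ℕ∞) f ∧ HasCompactSupport f

/-- `u` has boundary data `(D^α f)_{|α| ≤ 1}` in the sense of nontangential convergence
`σ`-a.e. on `∂Ω`. -/
def HasBVals1 (Ω : Set (Euc d)) (u f : Euc d → ℝ) : Prop :=
  ∀ᵐ Q ∂(sMeasure Ω), NTLim Ω u Q (f Q) ∧ ∀ i, NTLim Ω (pder i u) Q (pder i f Q)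

/-- `n` is the (σ-a.e. defined) outward unit normal of `Ω`, characterized by the
Gauss–Green formula. -/
def IsOutwardNormal (Ω : Set (Euc d)) (n : Euc d → Euc d) : Prop :=
  (∀ᵐ Q ∂(sMeasure Ω), ‖n Q‖ = 1) ∧
  ∀ φ : Euc d → Euc d, ContDiff ℝ (⊤ : ℕ∞) φ → HasCompactSupport φ →
    ∫ x in Ω, (∑ i, pder i (fun y => φ y i) x) = ∫ Q, (inner ℝ (φ Q) (n Q) : ℝ) ∂(sMeasure Ω)

/-- `|∇_t h|`, the norm of the tangential gradient `∇h − (∇h·n)n` of `h` on `∂Ω`. -/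
def tgradNorm (n : Euc d → Euc d) (h : Euc d → ℝ) (Q : Euc d) : ℝ :=
  Real.sqrt (∑ i, (pder i h Q - (∑ j, n Q j * pder j h Q) * n Q i) ^ 2)

/-- `|∇_t ∇f|`, the norm of the tangential gradient of the full gradient of `f`. -/
def tgrad2Norm (n : Euc d → Euc d) (f : Euc d → ℝ) (Q : Euc d) : ℝ :=
  Real.sqrt (∑ k, (tgradNorm n (pder k f) Q) ^ 2)

/-- Unique solvability of the `L^q` Dirichlet problem `(D)_q` for `Δ²u = 0` in `Ω`:
existence, with uniform estimate, of solutions with Whitney-array boundary data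
`(D^α f)_{|α|≤1}`, together with uniqueness. -/
def DirichletSolvable (Ω : Set (Euc d)) (q : ℝ) : Prop :=
  (∃ C : ℝ≥0, ∀ f : Euc d → ℝ, TestFun f →
    ∃ u : Euc d → ℝ, Biharmonic Ω u ∧ ntMaxLp Ω (gnorm1 u) q < ⊤ ∧ HasBVals1 Ω u f ∧
      ntMaxLp Ω (gnorm1 u) q + ntMaxLp Ω u q ≤
        C * (bLp Ω f q + ∑ i : Fin d, bLp Ω (pder i f) q)) ∧
  (∀ u : Euc d → ℝ, Biharmonic Ω u → ntMaxLp Ω (gnorm1 u) q < ⊤ →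
    HasBVals1 Ω u (fun _ => 0) → ∀ x ∈ Ω, u x = 0)

/-- Unique solvability of the `L^p` regularity problem `(R)_p` for `Δ²u = 0` in `Ω`:
existence, with uniform estimate, of solutions with Whitney-array boundary data
`(D^α g)_{|α|≤2}`, together with uniqueness. -/
def RegularitySolvable (Ω : Set (Euc d)) (p : ℝ) : Prop :=
  (∃ (n : Euc d → Euc d) (C : ℝ≥0), IsOutwardNormal Ω n ∧
    ∀ g : Euc d → ℝ, TestFun g →
    ∃ u : Euc d → ℝ, Biharmonic Ω u ∧ ntMaxLp Ω (gnorm2 u) p < ⊤ ∧ HasBVals1 Ω u g ∧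
      ntMaxLp Ω (gnorm2 u) p ≤
        C * ((∑ i : Fin d, bLp Ω (tgradNorm n (pder i g)) p) + bLp Ω g p +
          ∑ i : Fin d, bLp Ω (pder i g) p)) ∧
  (∀ u : Euc d → ℝ, Biharmonic Ω u → ntMaxLp Ω (gnorm2 u) p < ⊤ →
    HasBVals1 Ω u (fun _ => 0) → ∀ x ∈ Ω, u x = 0)

/-- `u` is the solution of the `L²` regularity problem in `Ω` with boundary data
`(D^α f)_{|α|≤1}`. -/
def IsL2Sol (Ω : Set (Euc d)) (f u : Euc d → ℝ) : Prop :=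
  Biharmonic Ω u ∧ ntMaxLp Ω (gnorm2 u) 2 < ⊤ ∧ HasBVals1 Ω u f

open Classical in
/-- The solution of the `L²` regularity problem with data `f` (junk value if none exists). -/
def L2Sol (Ω : Set (Euc d)) (f : Euc d → ℝ) : Euc d → ℝ :=
  if h : ∃ u, IsL2Sol Ω f u then h.choose else 0

/-- The bilinear form `Λ[f,g] = −∫_Ω Δu·Δv`, where `u, v` solve the `L²` regularity
problem with data `f, g`. -/
def biForm (Ω : Set (Euc d)) (f g : Euc d → ℝ) : ℝ :=
  - ∫ x in Ω, lap (L2Sol Ω f) x * lap (L2Sol Ω g) x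

/-- The bilinear estimate `|Λ[f,g]| ≤ C (‖∇_t∇f‖_p + ‖∇f‖_p + ‖f‖_p)(‖∇g‖_q + ‖g‖_q)`
for all test functions `f, g`. -/
def BilinearEstimate (Ω : Set (Euc d)) (p q : ℝ) : Prop :=
  ∃ (n : Euc d → Euc d) (C : ℝ≥0), IsOutwardNormal Ω n ∧
    ∀ f g : Euc d → ℝ, TestFun f → TestFun g →
      (‖biForm Ω f g‖₊ : ℝ≥0∞) ≤
        C * (bLp Ω (tgrad2Norm n f) p + bLp Ω (gnorm1 f) p + bLp Ω f p) *
          (bLp Ω (gnorm1 g) q + bLp Ω g q)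

/-- The fundamental solution of `Δ²` in `ℝ^d` with pole at the origin (with a dimensional
normalizing constant `c ≠ 0`). -/
def fundSol (d : ℕ) (c : ℝ) (x : Euc d) : ℝ :=
  if d = 2 ∨ d = 4 then c * ‖x‖ ^ ((4 : ℝ) - d) * Real.log ‖x‖
  else c * ‖x‖ ^ ((4 : ℝ) - d)

/-! ### Calculus of coordinate derivatives -/

lemma pder_eqOn {f g : Euc d → ℝ} {O : Set (Euc d)} (hO : IsOpen O) (h : EqOn f g O)
    (i : Fin d) : EqOn (pder i f) (pder i g) O := by
  intro x hx
  have : f =ᶠ[𝓝 x] g := h.eventuallyEq_of_mem (hO.mem_nhds hx)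
  simp only [pder, this.fderiv_eq]

lemma lap_eqOn {f g : Euc d → ℝ} {O : Set (Euc d)} (hO : IsOpen O) (h : EqOn f g O) :
    EqOn (lap f) (lap g) O := by
  intro x hx
  exact Finset.sum_congr rfl fun i _ => pder_eqOn hO (pder_eqOn hO h i) i hx

lemma bilap_eqOn {f g : Euc d → ℝ} {O : Set (Euc d)} (hO : IsOpen O) (h : EqOn f g O) :
    EqOn (bilap f) (bilap g) O :=
  lap_eqOn hO (lap_eqOn hO h)

lemma pder_smooth {f : Euc d → ℝ} (hf : ContDiff ℝ (⊤ : ℕ∞) f) (i : Fin d) :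
    ContDiff ℝ (⊤ : ℕ∞) (pder i f) :=
  (hf.fderiv_right (m := (⊤ : ℕ∞)) (by simp)).clm_apply contDiff_const

lemma pder_smoothOn {f : Euc d → ℝ} {Ω : Set (Euc d)} (hΩ : IsOpen Ω)
    (hf : ContDiffOn ℝ (⊤ : ℕ∞) f Ω) (i : Fin d) :
    ContDiffOn ℝ (⊤ : ℕ∞) (pder i f) Ω :=
  (hf.fderiv_of_isOpen (m := (⊤ : ℕ∞)) hΩ (by simp)).clm_apply contDiffOn_const

lemma lap_smooth {f : Euc d → ℝ} (hf : ContDiff ℝ (⊤ : ℕ∞) f) :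
    ContDiff ℝ (⊤ : ℕ∞) (lap f) :=
  ContDiff.sum fun i _ => pder_smooth (pder_smooth hf i) i

lemma differentiable_of_smooth {f : Euc d → ℝ} (hf : ContDiff ℝ (⊤ : ℕ∞) f) :
    Differentiable ℝ f :=
  hf.differentiable (by simp)

lemma pder_add {f g : Euc d → ℝ} (hf : Differentiable ℝ f) (hg : Differentiable ℝ g)
    (i : Fin d) (x : Euc d) :
    pder i (fun y => f y + g y) x = pder i f x + pder i g x := by
  simp only [pder, fderiv_fun_add (hf x) (hg x), add_apply]

lemma pder_sub_at {f g : Euc d → ℝ} {x : Euc d} (hf : DifferentiableAt ℝ f x)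
    (hg : DifferentiableAt ℝ g x) (i : Fin d) :
    pder i (fun y => f y - g y) x = pder i f x - pder i g x := by
  simp only [pder, fderiv_fun_sub hf hg, sub_apply]

lemma pder_sub {f g : Euc d → ℝ} (hf : Differentiable ℝ f) (hg : Differentiable ℝ g)
    (i : Fin d) (x : Euc d) :
    pder i (fun y => f y - g y) x = pder i f x - pder i g x :=
  pder_sub_at (hf x) (hg x) i

lemma pder_mul {f g : Euc d → ℝ} (hf : Differentiable ℝ f) (hg : Differentiable ℝ g)
    (i : Fin d) (x : Euc d) :
    pder i (fun y => f y * g y) x = f x * pder i g x + pder i f x * g x := by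
  simp only [pder, fderiv_fun_mul (hf x) (hg x), add_apply,
    smul_apply, smul_eq_mul]
  ring

lemma pder_sum {ι : Type*} (s : Finset ι) {f : ι → Euc d → ℝ}
    (hf : ∀ j, Differentiable ℝ (f j)) (i : Fin d) (x : Euc d) :
    pder i (fun y => ∑ j ∈ s, f j y) x = ∑ j ∈ s, pder i (f j) x := by
  simp only [pder]
  rw [fderiv_fun_sum (fun j _ => (hf j) x)]
  simp

lemma pder_hasCompactSupport {f : Euc d → ℝ} (hf : HasCompactSupport f) (i : Fin d) :
    HasCompactSupport (pder i f) :=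
  hf.fderiv_apply ℝ _

lemma integral_pder_eq_zero {f : Euc d → ℝ} (hf : ContDiff ℝ (⊤ : ℕ∞) f)
    (hc : HasCompactSupport f) (i : Fin d) : ∫ x, pder i f x = 0 := by
  have i0 : Integrable (pder i f) (volume : Measure (Euc d)) :=
    (pder_smooth hf i).continuous.integrable_of_hasCompactSupport (pder_hasCompactSupport hc i)
  have i1 : Integrable f (volume : Measure (Euc d)) :=
    hf.continuous.integrable_of_hasCompactSupport hc
  have h := integral_mul_fderiv_eq_neg_fderiv_mul_of_integrable (μ := (volume : Measure (Euc d)))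
    (f := fun _ => (1 : ℝ)) (g := f) (v := EuclideanSpace.single i 1) (by simp)
    (by simp only [one_mul]; exact i0) (by simp only [one_mul]; exact i1)
    (fun x _ => differentiableAt_const _) (fun x _ => differentiable_of_smooth hf x)
  simpa [pder] using h

/-- The density left after moving `φ` through Green's second identity for `Δ²`; every term
carries a derivative of `φ` and at most one derivative of `w` and two of `u`. -/
def greenDensity (u w φ : Euc d → ℝ) (x : Euc d) : ℝ :=
  lap u x * (2 * ∑ i, pder i w x * pder i φ x + w x * lap φ x) +
    ∑ i, pder i w x * (2 * ∑ j, (pder i (pder j u) x * pder j φ x +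
      pder j u x * pder i (pder j φ) x) + pder i u x * lap φ x + u x * pder i (lap φ) x)

lemma green_identity {u w φ : Euc d → ℝ} (hu : ContDiff ℝ (⊤ : ℕ∞) u)
    (hw : ContDiff ℝ (⊤ : ℕ∞) w) (hφ : ContDiff ℝ (⊤ : ℕ∞) φ) (hc : HasCompactSupport φ) :
    ∫ x, φ x * (u x * bilap w x - w x * bilap u x) = - ∫ x, greenDensity u w φ x := by
  have D : ∀ {f : Euc d → ℝ}, ContDiff ℝ (⊤ : ℕ∞) f → Differentiable ℝ f :=
    differentiable_of_smooth
  set S : Euc d → ℝ := fun x => 2 * ∑ j, pder j u x * pder j φ x + u x * lap φ x with hS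
  set A : Fin d → Euc d → ℝ := fun i x =>
    u x * pder i (lap w) x - pder i u x * lap w x +
      (lap u x * pder i w x - w x * pder i (lap u) x) with hA
  set B : Euc d → ℝ := fun x => w x * lap u x - u x * lap w x with hB
  set F : Fin d → Euc d → ℝ := fun i x => φ x * A i x + (B x * pder i φ x + S x * pder i w x)
    with hF
  have sS : ContDiff ℝ (⊤ : ℕ∞) S :=
    (contDiff_const.mul (ContDiff.sum fun j _ => (pder_smooth hu j).mul (pder_smooth hφ j))).add
      (hu.mul (lap_smooth hφ))
  have sA : ∀ i, ContDiff ℝ (⊤ : ℕ∞) (A i) := fun i =>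
    ((hu.mul (pder_smooth (lap_smooth hw) i)).sub ((pder_smooth hu i).mul (lap_smooth hw))).add
      (((lap_smooth hu).mul (pder_smooth hw i)).sub (hw.mul (pder_smooth (lap_smooth hu) i)))
  have sB : ContDiff ℝ (⊤ : ℕ∞) B := (hw.mul (lap_smooth hu)).sub (hu.mul (lap_smooth hw))
  have sF : ∀ i, ContDiff ℝ (⊤ : ℕ∞) (F i) := fun i =>
    (hφ.mul (sA i)).add ((sB.mul (pder_smooth hφ i)).add (sS.mul (pder_smooth hw i)))
  have z1 : ∀ x, x ∉ tsupport φ → φ x = 0 := fun x hx => image_eq_zero_of_notMem_tsupport hx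
  have zO : IsOpen (tsupport φ)ᶜ := (isClosed_tsupport φ).isOpen_compl
  have z0 : EqOn φ (fun _ => 0) (tsupport φ)ᶜ := fun x hx => z1 x hx
  have zp : ∀ i, EqOn (pder i φ) (fun _ => 0) (tsupport φ)ᶜ := fun i x hx => by
    rw [pder_eqOn zO z0 i hx]; simp [pder]
  have zpp : ∀ i j, EqOn (pder i (pder j φ)) (fun _ => 0) (tsupport φ)ᶜ := fun i j x hx => by
    rw [pder_eqOn zO (zp j) i hx]; simp [pder]
  have zl : EqOn (lap φ) (fun _ => 0) (tsupport φ)ᶜ := fun x hx => by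
    simp only [lap]; exact Finset.sum_eq_zero fun i _ => zpp i i hx
  have cF : ∀ i, HasCompactSupport (F i) := fun i =>
    HasCompactSupport.intro hc fun x hx => by
      have : S x = 0 := by
        simp only [hS]
        rw [zl hx, Finset.sum_eq_zero fun j _ => by rw [zp j hx, mul_zero]]
        simp
      simp only [hF, this, z1 x hx, zp i hx]
      simp
  have pS : ∀ i x, pder i S x = 2 * ∑ j, (pder i (pder j u) x * pder j φ x +
      pder j u x * pder i (pder j φ) x) + pder i u x * lap φ x + u x * pder i (lap φ) x := by
    intro i x
    have d1 : Differentiable ℝ fun x => ∑ j, pder j u x * pder j φ x :=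
      D (ContDiff.sum fun j _ => (pder_smooth hu j).mul (pder_smooth hφ j))
    rw [hS, pder_add (f := fun x => 2 * ∑ j, pder j u x * pder j φ x)
      ((differentiable_const _).mul d1) (D (hu.mul (lap_smooth hφ))),
      pder_mul (differentiable_const _) d1, pder_mul (D hu) (D (lap_smooth hφ)),
      pder_sum _ (fun j => D ((pder_smooth hu j).mul (pder_smooth hφ j)))]
    have : pder i (fun _ : Euc d => (2 : ℝ)) x = 0 := by simp [pder]
    rw [this, Finset.sum_congr rfl fun j _ =>
      pder_mul (D (pder_smooth hu j)) (D (pder_smooth hφ j)) i x]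
    simp only [add_comm (pder _ u x * _)]
    ring
  have pF : ∀ i x, pder i (F i) x =
      φ x * (u x * pder i (pder i (lap w)) x - pder i (pder i u) x * lap w x +
        (lap u x * pder i (pder i w) x - w x * pder i (pder i (lap u)) x))
      + (pder i φ x * A i x
      + (B x * pder i (pder i φ) x + (pder i w x * lap u x + w x * pder i (lap u) x
          - pder i u x * lap w x - u x * pder i (lap w) x) * pder i φ x
      + (S x * pder i (pder i w) x + pder i S x * pder i w x))) := by
    intro i x
    have e1 : pder i (A i) x = (u x * pder i (pder i (lap w)) x - pder i (pder i u) x * lap w x +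
        (lap u x * pder i (pder i w) x - w x * pder i (pder i (lap u)) x)) := by
      rw [hA]
      simp only
      rw [pder_add, pder_sub, pder_sub, pder_mul, pder_mul, pder_mul, pder_mul]
      · ring
      all_goals first
        | exact D hu
        | exact D hw
        | exact D (lap_smooth hu)
        | exact D (lap_smooth hw)
        | exact D (pder_smooth hu i)
        | exact D (pder_smooth hw i)
        | exact D (pder_smooth (lap_smooth hu) i)
        | exact D (pder_smooth (lap_smooth hw) i)
        | exact D (hu.mul (pder_smooth (lap_smooth hw) i))
        | exact D ((pder_smooth hu i).mul (lap_smooth hw))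
        | exact D ((lap_smooth hu).mul (pder_smooth hw i))
        | exact D (hw.mul (pder_smooth (lap_smooth hu) i))
        | exact (D (hu.mul (pder_smooth (lap_smooth hw) i))).sub
            (D ((pder_smooth hu i).mul (lap_smooth hw)))
        | exact (D ((lap_smooth hu).mul (pder_smooth hw i))).sub
            (D (hw.mul (pder_smooth (lap_smooth hu) i)))
    have e2 : pder i B x = (pder i w x * lap u x + w x * pder i (lap u) x
          - pder i u x * lap w x - u x * pder i (lap w) x) := by
      rw [hB, pder_sub (D (hw.mul (lap_smooth hu))) (D (hu.mul (lap_smooth hw))),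
        pder_mul (D hw) (D (lap_smooth hu)), pder_mul (D hu) (D (lap_smooth hw))]
      ring
    have e3 : pder i (F i) x = pder i (fun x => φ x * A i x) x +
        (pder i (fun x => B x * pder i φ x) x + pder i (fun x => S x * pder i w x) x) := by
      rw [hF]
      simp only
      rw [pder_add (D (hφ.mul (sA i)))
        (D ((sB.mul (pder_smooth hφ i)).add (sS.mul (pder_smooth hw i)))),
        pder_add (D (sB.mul (pder_smooth hφ i))) (D (sS.mul (pder_smooth hw i)))]
    rw [e3, pder_mul (D hφ) (D (sA i)), pder_mul (D sB) (D (pder_smooth hφ i)),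
      pder_mul (D sS) (D (pder_smooth hw i)), e1, e2]
    ring
  have key : ∀ x, φ x * (u x * bilap w x - w x * bilap u x) + greenDensity u w φ x
      = ∑ i, pder i (F i) x := by
    intro x
    have hdS : greenDensity u w φ x = lap u x * (2 * ∑ i, pder i w x * pder i φ x + w x * lap φ x)
        + ∑ i, pder i w x * pder i S x := by
      simp only [greenDensity, pS]
    have hb : bilap w x = ∑ i, pder i (pder i (lap w)) x := rfl
    have hb' : bilap u x = ∑ i, pder i (pder i (lap u)) x := rfl
    have step : ∀ i, pder i (F i) x =
        φ x * u x * pder i (pder i (lap w)) x - φ x * w x * pder i (pder i (lap u)) x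
        - φ x * lap w x * pder i (pder i u) x + φ x * lap u x * pder i (pder i w) x
        + 2 * lap u x * (pder i w x * pder i φ x) - 2 * lap w x * (pder i u x * pder i φ x)
        + B x * pder i (pder i φ) x + S x * pder i (pder i w) x + pder i w x * pder i S x := by
      intro i
      rw [pF i x]
      simp only [hA]
      ring
    rw [Finset.sum_congr rfl fun i _ => step i]
    simp only [Finset.sum_add_distrib, Finset.sum_sub_distrib, ← Finset.mul_sum]
    rw [← hb, ← hb', hdS]
    have l1 : ∑ i, pder i (pder i u) x = lap u x := rfl
    have l2 : ∑ i, pder i (pder i w) x = lap w x := rfl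
    have l3 : ∑ i, pder i (pder i φ) x = lap φ x := rfl
    rw [l1, l2, l3]
    simp only [hB, hS]
    ring
  have i1 : Integrable fun x => φ x * (u x * bilap w x - w x * bilap u x) := by
    refine Continuous.integrable_of_hasCompactSupport ?_ hc.mul_right
    exact hφ.continuous.mul ((hu.continuous.mul (lap_smooth (lap_smooth hw)).continuous).sub
      (hw.continuous.mul (lap_smooth (lap_smooth hu)).continuous))
  have iF : ∀ i, Integrable (pder i (F i)) := fun i =>
    (pder_smooth (sF i) i).continuous.integrable_of_hasCompactSupport
      (pder_hasCompactSupport (cF i) i)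
  have i2 : Integrable (greenDensity u w φ) := by
    have : greenDensity u w φ = fun x => ∑ i, pder i (F i) x
        - φ x * (u x * bilap w x - w x * bilap u x) := by
      funext x; rw [← key x]; ring
    rw [this]
    exact (integrable_finsetSum _ fun i _ => iF i).sub i1
  have h0 : ∫ x, (φ x * (u x * bilap w x - w x * bilap u x) + greenDensity u w φ x) = 0 := by
    rw [integral_congr_ae (Eventually.of_forall key), integral_finsetSum _ fun i _ => iF i]
    exact Finset.sum_eq_zero fun i _ => integral_pder_eq_zero (sF i) (cF i) i
  rw [integral_add i1 i2] at h0
  linarith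

/-! ### A smooth regularization of the fundamental solution -/

/-- The Laplacian acting on profiles `g` of radial functions `x ↦ g (‖x‖²)`. -/
def radLap (d : ℕ) (g : ℝ → ℝ) : ℝ → ℝ :=
  fun s => 2 * d * deriv g s + 4 * s * deriv (deriv g) s

lemma deriv_smooth {g : ℝ → ℝ} (hg : ContDiff ℝ (⊤ : ℕ∞) g) : ContDiff ℝ (⊤ : ℕ∞) (deriv g) :=
  ((contDiff_infty_iff_deriv (𝕜 := ℝ)).1 hg).2

lemma radLap_smooth (d : ℕ) {g : ℝ → ℝ} (hg : ContDiff ℝ (⊤ : ℕ∞) g) :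
    ContDiff ℝ (⊤ : ℕ∞) (radLap d g) :=
  (contDiff_const.mul (deriv_smooth hg)).add
    ((contDiff_const.mul contDiff_id).mul (deriv_smooth (deriv_smooth hg)))

lemma pder_normSq_comp {g : ℝ → ℝ} (hg : Differentiable ℝ g) (i : Fin d) (x : Euc d) :
    pder i (fun y => g (‖y‖ ^ 2)) x = 2 * x i * deriv g (‖x‖ ^ 2) := by
  have h1 : HasFDerivAt (fun y : Euc d => ‖y‖ ^ 2) (2 • innerSL ℝ x) x :=
    (hasStrictFDerivAt_norm_sq x).hasFDerivAt
  have h2 := (hg (‖x‖ ^ 2)).hasDerivAt.comp_hasFDerivAt x h1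
  have h3 : fderiv ℝ (fun y : Euc d => g (‖y‖ ^ 2)) x = _ := h2.fderiv
  rw [pder, h3]
  simp only [smul_apply, innerSL_apply_apply, EuclideanSpace.inner_single_right, nsmul_eq_mul,
    smul_eq_mul]
  simp
  ring

lemma pder_coord (i : Fin d) (x : Euc d) : pder i (fun y => y i) x = 1 := by
  have : (fun y : Euc d => y i) = EuclideanSpace.proj (𝕜 := ℝ) i := rfl
  rw [pder, this, ContinuousLinearMap.fderiv]
  simp

lemma lap_normSq_comp {g : ℝ → ℝ} (hg : ContDiff ℝ (⊤ : ℕ∞) g) :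
    lap (fun y : Euc d => g (‖y‖ ^ 2)) = fun x => radLap d g (‖x‖ ^ 2) := by
  have hg' := deriv_smooth hg
  funext x
  have hp : ∀ i : Fin d, pder i (fun y : Euc d => g (‖y‖ ^ 2)) =
      fun y => (2 * y i) * deriv g (‖y‖ ^ 2) := fun i => by
    funext y; exact pder_normSq_comp (hg.differentiable (by simp)) i y
  have hc : ∀ i : Fin d, Differentiable ℝ (fun y : Euc d => y i) := fun i =>
    (EuclideanSpace.proj (𝕜 := ℝ) i : Euc d →L[ℝ] ℝ).differentiable
  have hpp : ∀ i : Fin d, pder i (pder i (fun y : Euc d => g (‖y‖ ^ 2))) x =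
      2 * deriv g (‖x‖ ^ 2) + 4 * deriv (deriv g) (‖x‖ ^ 2) * x i ^ 2 := fun i => by
    rw [hp i, pder_mul (f := fun y => 2 * y i) (g := fun y => deriv g (‖y‖ ^ 2))
      ((hc i).const_mul 2) ((hg'.differentiable (by simp)).comp ((contDiff_norm_sq ℝ (n := 1)).differentiable (by simp))),
      pder_normSq_comp (hg'.differentiable (by simp)), pder_mul (differentiable_const _) (hc i),
      pder_coord]
    have : pder i (fun _ : Euc d => (2 : ℝ)) x = 0 := by simp [pder]
    rw [this]
    ring
  rw [lap, Finset.sum_congr rfl fun i _ => hpp i, Finset.sum_add_distrib, ← Finset.mul_sum,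
    ← Finset.mul_sum, ← EuclideanSpace.real_norm_sq_eq]
  simp only [radLap, Finset.sum_const, Finset.card_univ, Fintype.card_fin, nsmul_eq_mul]
  ring

lemma bilap_normSq_comp {g : ℝ → ℝ} (hg : ContDiff ℝ (⊤ : ℕ∞) g) :
    bilap (fun y : Euc d => g (‖y‖ ^ 2)) = fun x => radLap d (radLap d g) (‖x‖ ^ 2) := by
  rw [bilap, lap_normSq_comp hg, lap_normSq_comp (radLap_smooth d hg)]

/-- The profile of the fundamental solution as a function of `s = ‖x‖²`. -/
def fundProfile (d : ℕ) (c : ℝ) (s : ℝ) : ℝ :=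
  if d = 2 ∨ d = 4 then c * s ^ (((4 : ℝ) - d) / 2) * (Real.log s / 2)
  else c * s ^ (((4 : ℝ) - d) / 2)

lemma fundSol_eq (c : ℝ) (x : Euc d) :
    fundSol d c x = fundProfile d c (‖x‖ ^ 2) := by
  have h1 : (‖x‖ ^ 2) ^ (((4 : ℝ) - d) / 2) = ‖x‖ ^ ((4 : ℝ) - d) := by
    rw [← Real.rpow_natCast, ← Real.rpow_mul (norm_nonneg _)]
    congr 1
    push_cast
    ring
  simp only [fundSol, fundProfile, h1, Real.log_pow]
  norm_num

lemma radLap_congr {g h : ℝ → ℝ} {O : Set ℝ} (hO : IsOpen O) (e : EqOn g h O) :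
    EqOn (radLap d g) (radLap d h) O := by
  intro s hs
  have h1 : EqOn (deriv g) (deriv h) O := e.deriv hO
  have h2 := h1.deriv hO
  simp only [radLap, h1 hs, h2 hs]

lemma radLap_of_hasDerivAt {g g' g'' : ℝ → ℝ} (h1 : ∀ s > 0, HasDerivAt g (g' s) s)
    (h2 : ∀ s > 0, HasDerivAt g' (g'' s) s) :
    EqOn (radLap d g) (fun s => 2 * d * g' s + 4 * s * g'' s) (Ioi 0) := by
  intro s hs
  have e1 : EqOn (deriv g) g' (Ioi 0) := fun t ht => (h1 t ht).deriv
  have e2 := e1.deriv isOpen_Ioi hs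
  simp only [radLap, e1 hs, e2, (h2 s hs).deriv]

lemma hasDerivAt_const_mul_rpow (a b : ℝ) {s : ℝ} (hs : 0 < s) :
    HasDerivAt (fun t => a * t ^ b) (a * b * s ^ (b - 1)) s := by
  have := (Real.hasDerivAt_rpow_const (p := b) (Or.inl hs.ne')).const_mul a
  exact this.congr_deriv (by ring)

lemma radLap_const_mul_rpow (a b : ℝ) :
    EqOn (radLap d fun s => a * s ^ b) (fun s => a * b * (2 * d + 4 * b - 4) * s ^ (b - 1))
      (Ioi 0) := by
  intro s hs
  have hs : 0 < s := hs
  rw [radLap_of_hasDerivAt (fun t ht => hasDerivAt_const_mul_rpow a b ht)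
    (fun t ht => hasDerivAt_const_mul_rpow (a * b) (b - 1) ht) hs]
  have : s ^ (b - 1) = s * s ^ (b - 1 - 1) := by
    rw [Real.rpow_sub_one hs.ne' (b - 1)]
    field_simp
  simp only
  rw [this]
  ring

lemma fundProfile_radLap (hd : 2 ≤ d) {c : ℝ} (hc : c ≠ 0) :
    EqOn (radLap d (radLap d (fundProfile d c))) 0 (Ioi 0) ∧
      deriv (radLap d (fundProfile d c)) 1 ≠ 0 := by
  -- it suffices to identify the first radial Laplacian
  have fin : ∀ h : ℝ → ℝ, EqOn (radLap d (fundProfile d c)) h (Ioi 0) →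
      EqOn (radLap d h) 0 (Ioi 0) → deriv h 1 ≠ 0 →
      EqOn (radLap d (radLap d (fundProfile d c))) 0 (Ioi 0) ∧
      deriv (radLap d (fundProfile d c)) 1 ≠ 0 := by
    intro h e1 e2 e3
    exact ⟨(radLap_congr isOpen_Ioi e1).trans e2,
      by rwa [e1.deriv isOpen_Ioi (mem_Ioi.2 one_pos)]⟩
  have logd : ∀ a : ℝ, ∀ s > 0, HasDerivAt (fun t => a * Real.log t) (a * s⁻¹) s :=
    fun a s hs => (Real.hasDerivAt_log (ne_of_gt hs)).const_mul a
  have invd : ∀ a : ℝ, ∀ s > 0, HasDerivAt (fun t : ℝ => a * t⁻¹) (-a * (s ^ 2)⁻¹) s :=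
    fun a s hs => by
      have := (hasDerivAt_inv (ne_of_gt hs)).const_mul a
      exact this.congr_deriv (by ring)
  by_cases h2 : d = 2
  · subst h2
    have e0 : fundProfile 2 c = fun s => c / 2 * (s * Real.log s) := by
      funext s
      simp only [fundProfile, true_or, if_true]
      norm_num
      ring
    have d1 : ∀ s > 0, HasDerivAt (fundProfile 2 c) (c / 2 * Real.log s + c / 2) s := by
      intro s hs
      rw [e0]
      have := ((hasDerivAt_id s).mul (Real.hasDerivAt_log (ne_of_gt hs))).const_mul (c / 2)
      have hs' : s ≠ 0 := ne_of_gt hs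
      refine this.congr_deriv ?_
      simp only [id]
      field_simp
    have d2 : ∀ s > 0, HasDerivAt (fun s => c / 2 * Real.log s + c / 2) (c / 2 * s⁻¹) s :=
      fun s hs => (logd (c / 2) s hs).add_const _
    have d3 : ∀ s > 0, HasDerivAt (fun s => 2 * c * Real.log s + 4 * c) (2 * c * s⁻¹) s :=
      fun s hs => (logd (2 * c) s hs).add_const _
    refine fin (fun s => 2 * c * Real.log s + 4 * c) ?_ ?_ ?_
    · intro s hs
      have hs' : s ≠ 0 := ne_of_gt hs
      rw [radLap_of_hasDerivAt d1 d2 hs]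
      simp only
      push_cast
      field_simp
      ring
    · intro s hs
      have hs' : s ≠ 0 := ne_of_gt hs
      rw [radLap_of_hasDerivAt d3 (invd (2 * c)) hs]
      simp only [Pi.zero_apply]
      push_cast
      field_simp
      ring
    · rw [(d3 1 one_pos).deriv]
      simpa using hc
  by_cases h4 : d = 4
  · subst h4
    have e0 : fundProfile 4 c = fun s => c / 2 * Real.log s := by
      funext s
      simp only [fundProfile, or_true, if_true]
      norm_num
      ring
    refine fin (fun s => 2 * c * s⁻¹) ?_ ?_ ?_
    · intro s hs
      have hs' : s ≠ 0 := ne_of_gt hs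
      rw [e0, radLap_of_hasDerivAt (logd (c / 2)) (invd (c / 2)) hs]
      simp only
      push_cast
      field_simp
      ring
    · have dd : ∀ s > 0, HasDerivAt (fun s : ℝ => -(2 * c) * (s ^ 2)⁻¹) (4 * c * (s ^ 3)⁻¹) s := by
        intro s hs
        have hs' : s ≠ 0 := ne_of_gt hs
        have := ((hasDerivAt_pow 2 s).inv (pow_ne_zero 2 hs')).const_mul (-(2 * c))
        refine this.congr_deriv ?_
        push_cast
        field_simp
        ring
      intro s hs
      have hs' : s ≠ 0 := ne_of_gt hs
      rw [radLap_of_hasDerivAt (invd (2 * c)) dd hs]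
      simp only [Pi.zero_apply]
      push_cast
      field_simp
      ring
    · rw [(invd (2 * c) 1 one_pos).deriv]
      simpa using hc
  · have e0 : fundProfile d c = fun s => c * s ^ (((4 : ℝ) - d) / 2) := by
      funext s
      simp only [fundProfile, h2, h4, or_self, if_false]
    set a : ℝ := ((4 : ℝ) - d) / 2 with ha
    have hda : (d : ℝ) = 4 - 2 * a := by rw [ha]; ring
    have a0 : a ≠ 0 := fun h => h4 (by rw [h] at hda; exact_mod_cast (by linarith : (d : ℝ) = 4))
    have a1 : a - 1 ≠ 0 := fun h =>
      h2 (by exact_mod_cast (by linarith : (d : ℝ) = 2))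
    refine fin (fun s => c * a * (2 * d + 4 * a - 4) * s ^ (a - 1)) ?_ ?_ ?_
    · rw [e0]; exact radLap_const_mul_rpow c a
    · intro s hs
      rw [radLap_const_mul_rpow _ _ hs, hda]
      simp only [Pi.zero_apply]
      ring
    · rw [(hasDerivAt_const_mul_rpow _ _ one_pos).deriv, hda]
      rw [Real.one_rpow, mul_one]
      refine mul_ne_zero (mul_ne_zero (mul_ne_zero hc a0) ?_) a1
      ring_nf
      norm_num

lemma fundProfile_contDiffAt (c : ℝ) {s : ℝ} (hs : 0 < s) :
    ContDiffAt ℝ (⊤ : ℕ∞) (fundProfile d c) s := by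
  have h1 : ContDiffAt ℝ (⊤ : ℕ∞) (fun t : ℝ => c * t ^ (((4 : ℝ) - d) / 2)) s :=
    contDiffAt_const.mul (Real.contDiffAt_rpow_const_of_ne hs.ne')
  by_cases h : d = 2 ∨ d = 4
  · have : fundProfile d c = fun s => c * s ^ (((4 : ℝ) - d) / 2) * (Real.log s / 2) := by
      funext s; simp only [fundProfile, h, if_true]
    rw [this]
    exact h1.mul ((Real.contDiffAt_log.2 hs.ne').div_const 2)
  · have : fundProfile d c = fun s => c * s ^ (((4 : ℝ) - d) / 2) := by
      funext s; simp only [fundProfile, h, if_false]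
    rw [this]
    exact h1

lemma exists_smooth_profile (c : ℝ) :
    ∃ g : ℝ → ℝ, ContDiff ℝ (⊤ : ℕ∞) g ∧ EqOn g (fundProfile d c) (Ioi (1 / 2)) := by
  refine ⟨fun s => Real.smoothTransition (4 * s - 1) * fundProfile d c s, ?_, ?_⟩
  · rw [contDiff_iff_contDiffAt]
    intro s
    by_cases hs : 0 < s
    · exact (Real.smoothTransition.contDiff.comp (by fun_prop : ContDiff ℝ (⊤ : ℕ∞)
        fun s : ℝ => 4 * s - 1)).contDiffAt.mul (fundProfile_contDiffAt c hs)
    · have : (fun s => Real.smoothTransition (4 * s - 1) * fundProfile d c s) =ᶠ[𝓝 s]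
          fun _ => 0 := by
        filter_upwards [Iio_mem_nhds (show s < 1 / 4 by linarith)] with t ht
        rw [Real.smoothTransition.zero_of_nonpos (by linarith [mem_Iio.1 ht]), zero_mul]
      exact contDiffAt_const.congr_of_eventuallyEq this
  · intro s hs
    have : (1 : ℝ) / 2 < s := hs
    simp only
    rw [Real.smoothTransition.one_of_one_le (by linarith), one_mul]

lemma integral_radLap_normSq (hd : 2 ≤ d) {h : ℝ → ℝ} (hh : ContDiff ℝ (⊤ : ℕ∞) h)
    (hz : ∀ s ≥ 1, radLap d h s = 0) :
    ∫ x : Euc d, radLap d h (‖x‖ ^ 2) =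
      d * (volume : Measure (Euc d)).real (ball 0 1) * (2 * deriv h 1) := by
  have : Nontrivial (Euc d) := by
    have : Nonempty (Fin d) := ⟨⟨0, by omega⟩⟩
    infer_instance
  have hr := integral_fun_norm_addHaar (volume : Measure (Euc d))
    (fun r => radLap d h (r ^ 2))
  rw [hr]
  simp only [finrank_euclideanSpace, Fintype.card_fin, nsmul_eq_mul, smul_eq_mul]
  have hder : ∀ r : ℝ, HasDerivAt (fun r => 2 * r ^ d * deriv h (r ^ 2))
      (r ^ (d - 1) * radLap d h (r ^ 2)) r := by
    intro r
    have h1 : HasDerivAt (fun r : ℝ => deriv h (r ^ 2)) (deriv (deriv h) (r ^ 2) * (2 * r)) r := by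
      have := ((deriv_smooth hh).differentiable (by simp) (r ^ 2)).hasDerivAt.comp r
        (hasDerivAt_pow 2 r)
      exact this.congr_deriv (by simp)
    have h2 := ((hasDerivAt_pow d r).const_mul 2).mul h1
    refine h2.congr_deriv ?_
    obtain ⟨n, rfl⟩ : ∃ n, d = n + 1 := ⟨d - 1, by omega⟩
    simp only [radLap, Nat.add_sub_cancel]
    push_cast
    ring
  have e1 : ∫ r in Ioi (0 : ℝ), r ^ (d - 1) * radLap d h (r ^ 2) =
      ∫ r in (0 : ℝ)..1, r ^ (d - 1) * radLap d h (r ^ 2) := by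
    rw [intervalIntegral.integral_of_le zero_le_one]
    refine setIntegral_eq_of_subset_of_forall_sdiff_eq_zero measurableSet_Ioi
      (fun r (hr : r ∈ Ioc (0 : ℝ) 1) => hr.1) ?_
    intro r hr
    have h0 : 0 < r := hr.1
    have h1 : 1 < r := by
      by_contra hcon
      exact hr.2 ⟨h0, not_lt.1 hcon⟩
    rw [hz _ (by nlinarith), mul_zero]
  rw [e1, intervalIntegral.integral_eq_sub_of_hasDerivAt (fun r _ => hder r)]
  · have : d ≠ 0 := by omega
    simp [this, mul_assoc]
  · refine Continuous.intervalIntegrable ?_ _ _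
    exact (continuous_pow _).mul ((radLap_smooth d hh).continuous.comp (continuous_pow 2))

lemma radLap_scale (g : ℝ → ℝ) (A m : ℝ) :
    radLap d (fun s => A * g (s * m)) = fun s => A * m * radLap d g (s * m) := by
  have h1 : ∀ (f : ℝ → ℝ) (B : ℝ),
      deriv (fun s => B * f (s * m)) = fun s => B * m * deriv f (s * m) := by
    intro f B
    funext s
    have h2 : deriv (fun s => f (s * m)) s = m * deriv f (s * m) := by
      simpa [mul_comm] using deriv_comp_mul_left m f s
    rw [deriv_const_mul_field, h2]
    ring
  funext s
  simp only [radLap, h1]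
  ring

lemma radLap_add {g h : ℝ → ℝ} (hg : ContDiff ℝ (⊤ : ℕ∞) g) (hh : ContDiff ℝ (⊤ : ℕ∞) h) :
    radLap d (fun s => g s + h s) = fun s => radLap d g s + radLap d h s := by
  have h1 : ∀ {g h : ℝ → ℝ}, ContDiff ℝ (⊤ : ℕ∞) g → ContDiff ℝ (⊤ : ℕ∞) h →
      deriv (fun s => g s + h s) = fun s => deriv g s + deriv h s := by
    intro g h hg hh
    funext s
    exact deriv_fun_add (hg.differentiable (by simp) s) (hh.differentiable (by simp) s)
  funext s
  simp only [radLap, h1 hg hh, h1 (deriv_smooth hg) (deriv_smooth hh)]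
  ring

/-- Smooth functions that agree with the fundamental solution off small balls; their
bilaplacians form an approximate identity up to a nonzero factor. -/
lemma exists_regularized_fundSol (hd : 2 ≤ d) {c : ℝ} (hc : c ≠ 0) :
    ∃ K : Euc d → ℝ, Continuous K ∧ (∀ y, 1 ≤ ‖y‖ → K y = 0) ∧ ∫ y, K y ≠ 0 ∧
      ∀ ε > 0, ∃ E : Euc d → ℝ, ContDiff ℝ (⊤ : ℕ∞) E ∧
        (∀ y, ε ≤ ‖y‖ → E y = fundSol d c y) ∧
        ∃ A : ℝ, A ≠ 0 ∧ ∀ y, bilap E y = A * K (ε⁻¹ • y) := by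
  obtain ⟨g, hg, hge⟩ := exists_smooth_profile (d := d) c
  have hfp := fundProfile_radLap hd hc
  have sub : Ioi ((1 : ℝ) / 2) ⊆ Ioi 0 := Ioi_subset_Ioi (by norm_num)
  have e1 : EqOn (radLap d g) (radLap d (fundProfile d c)) (Ioi (1 / 2)) :=
    radLap_congr isOpen_Ioi hge
  have e2 := radLap_congr (d := d) isOpen_Ioi e1
  have hz : ∀ s ≥ 1, radLap d (radLap d g) s = 0 := fun s hs => by
    have hs' : s ∈ Ioi ((1 : ℝ) / 2) := mem_Ioi.2 (by linarith)
    rw [e2 hs', hfp.1 (sub hs')]; rfl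
  have hg1 := radLap_smooth d hg
  have hg2 := radLap_smooth d hg1
  refine ⟨fun y => radLap d (radLap d g) (‖y‖ ^ 2), ?_, ?_, ?_, ?_⟩
  · exact hg2.continuous.comp (continuous_norm.pow 2)
  · intro y hy
    exact hz _ (by nlinarith)
  · rw [integral_radLap_normSq hd hg1 hz,
      e1.deriv isOpen_Ioi (mem_Ioi.2 (by norm_num : (1 : ℝ) / 2 < 1))]
    refine mul_ne_zero (mul_ne_zero (by positivity) ?_) (mul_ne_zero two_ne_zero hfp.2)
    exact (ENNReal.toReal_pos (measure_ball_pos _ _ one_pos).ne' measure_ball_lt_top.ne).ne'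
  · intro ε hε
    set m : ℝ := (ε ^ 2)⁻¹ with hm
    have hm0 : 0 < m := by positivity
    -- a correction by a radial polynomial of degree at most one absorbs the logarithm of `ε`
    obtain ⟨P, hP, hP0, hPe⟩ : ∃ P : ℝ → ℝ, ContDiff ℝ (⊤ : ℕ∞) P ∧
        (∀ s, radLap d (radLap d P) s = 0) ∧ ∀ t > 0,
          fundProfile d c t = ε ^ ((4 : ℝ) - d) * fundProfile d c (t * m) + P t := by
      have hpw : ∀ t > 0, ε ^ ((4 : ℝ) - d) * (t * m) ^ (((4 : ℝ) - d) / 2) =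
          t ^ (((4 : ℝ) - d) / 2) := by
        intro t ht
        rw [Real.mul_rpow (le_of_lt ht) hm0.le, hm, Real.inv_rpow (by positivity),
          ← Real.rpow_natCast ε 2, ← Real.rpow_mul hε.le]
        have : ((2 : ℕ) : ℝ) * (((4 : ℝ) - d) / 2) = (4 : ℝ) - d := by push_cast; ring
        rw [this]
        have : ε ^ ((4 : ℝ) - d) ≠ 0 := (Real.rpow_pos_of_pos hε _).ne'
        field_simp
      by_cases h : d = 2 ∨ d = 4
      · refine ⟨fun s => -(c * (Real.log m / 2)) * s ^ (if d = 2 then 1 else 0), ?_, ?_, ?_⟩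
        · fun_prop
        · intro s
          rcases h with h | h
          · have : radLap d (fun s : ℝ => -(c * (Real.log m / 2)) * s ^ (if d = 2 then 1 else 0)) =
                fun _ => 2 * d * -(c * (Real.log m / 2)) := by
              have hd1 : deriv (fun s : ℝ => -(c * (Real.log m / 2)) * s) =
                  fun _ => -(c * (Real.log m / 2)) := by
                funext s; simp
              funext s
              simp only [radLap, h, if_true, pow_one, hd1]
              simp
            rw [this]
            simp [radLap]
          · have h2 : d ≠ 2 := by omega
            have : radLap d (fun s : ℝ => -(c * (Real.log m / 2)) * s ^ (if d = 2 then 1 else 0)) =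
                fun _ => 0 := by
              funext s
              simp [radLap, h2]
            rw [this]
            simp [radLap]
        · intro t ht
          have e : t ^ (((4 : ℝ) - d) / 2) = t ^ (if d = 2 then 1 else 0) := by
            rcases h with h | h
            · subst h; norm_num
            · subst h; norm_num
          simp only [fundProfile, h, if_true]
          rw [Real.log_mul (ne_of_gt ht) hm0.ne', ← e]
          have := hpw t ht
          calc c * t ^ (((4 : ℝ) - d) / 2) * (Real.log t / 2)
              = c * (t ^ (((4 : ℝ) - d) / 2)) * ((Real.log t + Real.log m) / 2)
                + -(c * (Real.log m / 2)) * t ^ (((4 : ℝ) - d) / 2) := by ring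
            _ = _ := by
              nth_rewrite 1 [← this]
              ring
      · have h0 : radLap d (fun _ => 0) = fun _ => 0 := by funext s; simp [radLap]
        refine ⟨fun _ => 0, contDiff_const, fun s => by rw [h0, h0], ?_⟩
        intro t ht
        simp only [fundProfile, h, if_false]
        rw [← hpw t ht]
        ring
    have hgs : ContDiff ℝ (⊤ : ℕ∞) (fun s => ε ^ ((4 : ℝ) - d) * g (s * m)) :=
      contDiff_const.mul (hg.comp (contDiff_id.mul contDiff_const))
    have hG : ContDiff ℝ (⊤ : ℕ∞) (fun s => ε ^ ((4 : ℝ) - d) * g (s * m) + P s) := hgs.add hP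
    refine ⟨fun y => ε ^ ((4 : ℝ) - d) * g (‖y‖ ^ 2 * m) + P (‖y‖ ^ 2),
      hG.comp (contDiff_norm_sq ℝ), ?_, ε ^ ((4 : ℝ) - d) * m * m, ?_, ?_⟩
    · intro y hy
      have hy0 : 0 < ‖y‖ := hε.trans_le hy
      have h1 : 1 ≤ ‖y‖ ^ 2 * m := by
        rw [hm, ← div_eq_mul_inv, one_le_div (by positivity)]
        gcongr
      rw [fundSol_eq, hPe _ (by positivity),
        ← hge (mem_Ioi.2 (by linarith : 1 / 2 < ‖y‖ ^ 2 * m))]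
    · have : ε ^ ((4 : ℝ) - d) ≠ 0 := (Real.rpow_pos_of_pos hε _).ne'
      positivity
    · intro y
      rw [bilap_normSq_comp hG, radLap_add hgs hP, radLap_scale,
        radLap_add (g := fun s => ε ^ ((4 : ℝ) - d) * m * radLap d g (s * m)) (contDiff_const.mul (hg1.comp (contDiff_id.mul contDiff_const)))
          (radLap_smooth d hP), radLap_scale]
      simp only [hP0, add_zero]
      rw [norm_smul, norm_inv, Real.norm_of_nonneg hε.le, mul_pow, inv_pow, ← hm, mul_comm m]

/-- The point of `ℝ^d` with given horizontal and vertical coordinates. -/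
def ofCoords (d : ℕ) (p : Euc (d - 1) × ℝ) : Euc d :=
  WithLp.toLp 2 fun i => if h : (i : ℕ) < d - 1 then p.1 ⟨i, h⟩ else p.2

lemma graphCoord_ofCoords (p : Euc (d - 1) × ℝ) : graphCoord d (ofCoords d p) = p.1 := by
  ext i
  simp [graphCoord, ofCoords]

lemma vertCoord_ofCoords (hd : 1 ≤ d) (p : Euc (d - 1) × ℝ) : vertCoord d (ofCoords d p) = p.2 := by
  simp [vertCoord, ofCoords, show 0 < d by omega]

lemma ofCoords_coords (hd : 1 ≤ d) (x : Euc d) :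
    ofCoords d (graphCoord d x, vertCoord d x) = x := by
  ext i
  by_cases h : (i : ℕ) < d - 1
  · simp [graphCoord, ofCoords, h]
  · have : i = ⟨d - 1, Nat.sub_lt (by omega) one_pos⟩ := by ext; simp; omega
    simp [vertCoord, ofCoords, show 0 < d by omega, this]

lemma dist_sq_coords (hd : 1 ≤ d) (x y : Euc d) :
    dist x y ^ 2 = dist (graphCoord d x) (graphCoord d y) ^ 2 +
      (vertCoord d x - vertCoord d y) ^ 2 := by
  obtain ⟨n, rfl⟩ : ∃ n, d = n + 1 := ⟨d - 1, by omega⟩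
  rw [EuclideanSpace.dist_eq, EuclideanSpace.dist_eq, Real.sq_sqrt (by positivity),
    Real.sq_sqrt (by positivity), Fin.sum_univ_castSucc]
  simp [graphCoord, vertCoord, Real.dist_eq, sq_abs]
  rfl

lemma dist_graphCoord_le (hd : 1 ≤ d) (x y : Euc d) :
    dist (graphCoord d x) (graphCoord d y) ≤ dist x y := by
  have := dist_sq_coords hd x y
  exact le_of_sq_le_sq (by nlinarith [sq_nonneg (vertCoord d x - vertCoord d y)]) dist_nonneg

lemma abs_vertCoord_sub_le (hd : 1 ≤ d) (x y : Euc d) :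
    |vertCoord d x - vertCoord d y| ≤ dist x y := by
  have := dist_sq_coords hd x y
  exact abs_le_of_sq_le_sq (by nlinarith [sq_nonneg (dist (graphCoord d x) (graphCoord d y))]) dist_nonneg

lemma continuous_ofCoords : Continuous (ofCoords d) := by
  refine (PiLp.continuous_toLp 2 _).comp (continuous_pi fun i => ?_)
  by_cases h : (i : ℕ) < d - 1 <;> simp only [h, dite_true, dite_false] <;> fun_prop

lemma measurePreserving_ofCoords (hd : 1 ≤ d) : MeasurePreserving (ofCoords d) := by
  obtain ⟨n, rfl⟩ : ∃ n, d = n + 1 := ⟨d - 1, by omega⟩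
  have h1 : MeasurePreserving (Prod.swap : Euc n × ℝ → ℝ × Euc n) :=
    Measure.measurePreserving_swap
  have h2 : MeasurePreserving (Prod.map id (WithLp.ofLp) : ℝ × Euc n → ℝ × (Fin n → ℝ)) :=
    (MeasurePreserving.id _).prod (PiLp.volume_preserving_ofLp (Fin n))
  have h3 := (volume_preserving_piFinSuccAbove (fun _ : Fin (n + 1) => ℝ) (Fin.last n)).symm
  have h4 := PiLp.volume_preserving_toLp (Fin (n + 1))
  have h5 := h4.comp (h3.comp (h2.comp h1))
  have h6 : ofCoords (n + 1) = WithLp.toLp 2 ∘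
      ((MeasurableEquiv.piFinSuccAbove (fun _ : Fin (n + 1) => ℝ) (Fin.last n)).symm ∘
        (Prod.map id WithLp.ofLp ∘ (Prod.swap : Euc n × ℝ → ℝ × Euc n))) := by
    funext p
    ext i
    refine Fin.lastCases ?_ (fun j => ?_) i
    · simp [ofCoords, MeasurableEquiv.piFinSuccAbove]
    · simp [ofCoords, MeasurableEquiv.piFinSuccAbove, Fin.insertNthEquiv, Fin.snoc]
  rw [h6]
  exact h5

/-- A local graph description of the boundary of `Ω`: `map (x, t)` is the point at height `t`
above the boundary point over `x`. -/
structure GraphChart (Ω : Set (Euc d)) where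
  /-- The flattening coordinates. -/
  map : Euc (d - 1) × ℝ → Euc d
  /-- The horizontal projection. -/
  proj : Euc d → Euc (d - 1)
  /-- The vertical direction. -/
  dir : Euc d
  /-- The centre of the base. -/
  center : Euc (d - 1)
  /-- The radius of the base. -/
  radius : ℝ
  /-- The height of the cylinder. -/
  height : ℝ
  /-- The Lipschitz constant of the boundary parametrization. -/
  lip : ℝ≥0
  radius_pos : 0 < radius
  height_pos : 0 < height
  one_le_lip : 1 ≤ lip
  norm_dir : ‖dir‖ = 1
  continuous_map : Continuous map
  injective_map : Function.Injective map
  measurePreserving_map : MeasurePreserving map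
  map_eq : ∀ x t, map (x, t) = map (x, 0) + t • dir
  lipschitz_map : LipschitzWith lip fun x => map (x, 0)
  lipschitz_proj : LipschitzWith 1 proj
  proj_map : ∀ p, proj (map p) = p.1
  isOpen_image : IsOpen (map '' (ball center radius ×ˢ Ioo (-height) height))
  map_mem : ∀ x ∈ ball center (2 * radius), ∀ t ∈ Ioo 0 height, map (x, t) ∈ Ω
  map_mem_frontier : ∀ x ∈ ball center (2 * radius), map (x, 0) ∈ frontier Ω
  eq_zero : ∀ x ∈ ball center (2 * radius), ∀ t ∈ Ioo (-height) height,
    map (x, t) ∈ frontier Ω → t = 0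
  pos_of_mem : ∀ x ∈ ball center (2 * radius), ∀ t ∈ Ioo (-height) height, map (x, t) ∈ Ω →
    0 < t ∧ t ≤ lip * infDist (map (x, t)) (frontier Ω)

/-- The part of space covered by a chart. -/
def GraphChart.cyl {Ω : Set (Euc d)} (κ : GraphChart Ω) : Set (Euc d) :=
  κ.map '' (ball κ.center κ.radius ×ˢ Ioo (-κ.height) κ.height)

lemma exists_graphChart (hd : 1 ≤ d) {Ω : Set (Euc d)} (hΩ : IsLipschitzDomain Ω) {Q : Euc d}
    (hQ : Q ∈ frontier Ω) : ∃ κ : GraphChart Ω, Q ∈ κ.cyl := by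
  obtain ⟨-, -, -, N, U, hU, hcov, hch⟩ := hΩ
  obtain ⟨i, hi⟩ := mem_iUnion.1 (hcov hQ)
  obtain ⟨R, M, η, hη, hin, hfr⟩ := hch i
  obtain ⟨ρ, hρ, hball⟩ := Metric.isOpen_iff.1 (hU i) Q hi
  set A := R.symm.toRealAffineIsometryEquiv with hA
  have hAR : ∀ x, A x = R.symm x := fun x => by simp [hA]
  set L : Euc d ≃ₗᵢ[ℝ] Euc d := A.linearIsometryEquiv with hL
  have hadd : ∀ x v, R.symm (x + v) = R.symm x + L v := fun x v => by
    rw [← hAR, ← hAR, add_comm x v, add_comm _ (L v)]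
    exact A.map_vadd x v
  have hofadd : ∀ (x : Euc (d - 1)) (s t : ℝ),
      ofCoords d (x, s + t) = ofCoords d (x, s) + t • ofCoords d (0, 1) := fun x s t => by
    ext j
    by_cases h : (j : ℕ) < d - 1 <;> simp [ofCoords, h]
  set Φ : Euc (d - 1) × ℝ → Euc d := fun p => R.symm (ofCoords d (p.1, η p.1 + p.2)) with hΦ
  have hRΦ : ∀ p, R (Φ p) = ofCoords d (p.1, η p.1 + p.2) := fun p => by simp [hΦ]
  have hg : ∀ p, graphCoord d (R (Φ p)) = p.1 := fun p => by rw [hRΦ, graphCoord_ofCoords]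
  have hv : ∀ p, vertCoord d (R (Φ p)) = η p.1 + p.2 := fun p => by
    rw [hRΦ, vertCoord_ofCoords hd]
  have hΦinv : ∀ x, Φ (graphCoord d (R x), vertCoord d (R x) - η (graphCoord d (R x))) = x :=
    fun x => by simp [hΦ, ofCoords_coords hd]
  have hΦc : Continuous Φ := by
    have := hη.continuous
    exact R.symm.continuous.comp (continuous_ofCoords.comp (by fun_prop))
  have hgc : Continuous fun x => graphCoord d (R x) := by
    refine LipschitzWith.continuous (K := 1) (LipschitzWith.of_dist_le_mul fun x y => ?_)
    simpa using (dist_graphCoord_le hd (R x) (R y)).trans (R.isometry.dist_eq x y).le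
  have hvc : Continuous fun x => vertCoord d (R x) := by
    refine LipschitzWith.continuous (K := 1) (LipschitzWith.of_dist_le_mul fun x y => ?_)
    simpa [Real.dist_eq] using
      (abs_vertCoord_sub_le hd (R x) (R y)).trans (R.isometry.dist_eq x y).le
  have hQ0 : Φ (graphCoord d (R Q), 0) = Q := by
    have h1 : Q ∈ U i ∩ frontier Ω := ⟨hi, hQ⟩
    rw [hfr] at h1
    have h2 : vertCoord d (R Q) = η (graphCoord d (R Q)) := h1.2
    have h3 := hΦinv Q
    rwa [h2, sub_self] at h3
  have hnb : Φ ⁻¹' ball Q (ρ / 2) ∈ 𝓝 (graphCoord d (R Q), (0 : ℝ)) :=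
    hΦc.continuousAt.preimage_mem_nhds (by rw [hQ0]; exact ball_mem_nhds _ (by positivity))
  obtain ⟨r, hr, hrs⟩ := Metric.mem_nhds_iff.1 hnb
  have hsub : ∀ x ∈ ball (graphCoord d (R Q)) (2 * (r / 2)), ∀ t ∈ Ioo (-r) r,
      Φ (x, t) ∈ ball Q (ρ / 2) := fun x hx t ht => by
    refine hrs ?_
    rw [← ball_prod_same]
    refine ⟨by simpa [mul_div_cancel₀] using hx, ?_⟩
    simpa [abs_lt] using ht
  have hinU : ∀ x ∈ ball (graphCoord d (R Q)) (2 * (r / 2)), ∀ t ∈ Ioo (-r) r,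
      Φ (x, t) ∈ U i := fun x hx t ht =>
    hball (ball_subset_ball (by linarith) (hsub x hx t ht))
  have hmemΩ : ∀ x, x ∈ U i → (x ∈ Ω ↔ η (graphCoord d (R x)) < vertCoord d (R x)) :=
    fun x hx => by
      have := congrArg (x ∈ ·) hin
      simpa [hx] using this
  have hmemF : ∀ x, x ∈ U i → (x ∈ frontier Ω ↔ vertCoord d (R x) = η (graphCoord d (R x))) :=
    fun x hx => by
      have := congrArg (x ∈ ·) hfr
      simpa [hx] using this
  refine ⟨{ map := Φ, proj := fun x => graphCoord d (R x), dir := L (ofCoords d (0, 1)),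
            center := graphCoord d (R Q), radius := r / 2, height := r, lip := 1 + M,
            radius_pos := by positivity, height_pos := hr, one_le_lip := le_self_add,
            norm_dir := ?_, continuous_map := hΦc, injective_map := ?_,
            measurePreserving_map := ?_, map_eq := ?_, lipschitz_map := ?_, lipschitz_proj := ?_,
            proj_map := hg, isOpen_image := ?_, map_mem := ?_, map_mem_frontier := ?_,
            eq_zero := ?_, pos_of_mem := ?_ }, ?_⟩
  · rw [L.norm_map]
    have h := dist_sq_coords hd (ofCoords d (0, 1)) 0
    have h0 : ofCoords d (0, 0) = 0 := by ext j; simp [ofCoords]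
    rw [graphCoord_ofCoords, vertCoord_ofCoords hd, ← h0, graphCoord_ofCoords,
      vertCoord_ofCoords hd, h0, dist_zero_right] at h
    have h1 : ‖ofCoords d (0, 1)‖ = 1 ∨ ‖ofCoords d (0, 1)‖ = -1 := by simpa using h
    exact h1.resolve_right fun h2 => by linarith [norm_nonneg (ofCoords d (0, 1))]
  · intro p p' h
    have h1 := hg p
    have h2 := hv p
    rw [h, hg p'] at h1
    rw [h, hv p', h1] at h2
    exact Prod.ext h1.symm (by linarith)
  · have h1 : MeasurePreserving (fun p : Euc (d - 1) × ℝ => (p.1, η p.1 + p.2)) := by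
      have := hη.continuous
      exact (MeasurePreserving.id volume).skew_product (g := fun x t => η x + t) (μc := volume)
        (by unfold Function.uncurry; fun_prop)
        (ae_of_all _ fun x => (measurePreserving_add_left volume (η x)).map_eq)
    have h2 : MeasurePreserving (R.symm : Euc d → Euc d) := by
      have : (R.symm : Euc d → Euc d) = (fun y => R.symm 0 + y) ∘ L := by
        funext x
        have := hadd 0 x
        simpa using this
      rw [this]
      exact (measurePreserving_add_left volume _).comp L.measurePreserving
    exact h2.comp ((measurePreserving_ofCoords hd).comp h1)
  · intro x t
    simp only [hΦ, add_zero, hofadd x (η x) t, hadd, map_smul]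
  · refine LipschitzWith.of_dist_le_mul fun x y => ?_
    have h := dist_sq_coords hd (R (Φ (x, 0))) (R (Φ (y, 0)))
    rw [hg, hg, hv, hv, R.isometry.dist_eq] at h
    have h1 := hη.dist_le_mul x y
    rw [Real.dist_eq] at h1
    simp only [add_zero] at h
    have h2 := sq_le_sq' (by linarith [abs_nonneg (η x - η y)]) h1
    rw [sq_abs] at h2
    refine le_of_sq_le_sq (h.trans_le ?_) (by positivity)
    push_cast
    nlinarith [M.2, sq_nonneg (dist x y), mul_nonneg M.2 (sq_nonneg (dist x y))]
  · refine LipschitzWith.of_dist_le_mul fun x y => ?_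
    simpa using (dist_graphCoord_le hd (R x) (R y)).trans (R.isometry.dist_eq x y).le
  · have : Φ '' (ball (graphCoord d (R Q)) (r / 2) ×ˢ Ioo (-r) r) =
        (fun x => (graphCoord d (R x), vertCoord d (R x) - η (graphCoord d (R x)))) ⁻¹'
          (ball (graphCoord d (R Q)) (r / 2) ×ˢ Ioo (-r) r) := by
      ext x
      constructor
      · rintro ⟨p, hp, rfl⟩
        simpa [hg, hv] using hp
      · intro hx
        exact ⟨_, hx, hΦinv x⟩
    rw [this]
    have := hη.continuous
    exact (isOpen_ball.prod isOpen_Ioo).preimage (by fun_prop)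
  · intro x hx t ht
    rw [hmemΩ _ (hinU x hx t ⟨by linarith [ht.1], ht.2⟩), hg, hv]
    simpa using ht.1
  · intro x hx
    rw [hmemF _ (hinU x hx 0 ⟨by linarith, hr⟩), hg, hv]
    simp
  · intro x hx t ht h
    rw [hmemF _ (hinU x hx t ht), hg, hv] at h
    simpa using h
  · intro x hx t ht h
    refine ⟨by rw [hmemΩ _ (hinU x hx t ht), hg, hv] at h; simpa using h, ?_⟩
    obtain ⟨P, hP, hPd⟩ := isClosed_frontier.exists_infDist_eq_dist ⟨Q, hQ⟩ (Φ (x, t))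
    have h1 : dist (Φ (x, t)) P ≤ dist (Φ (x, t)) Q := hPd ▸ infDist_le_dist_of_mem hQ
    have h2 : dist (Φ (x, t)) Q < ρ / 2 := hsub x hx t ht
    have h3 : P ∈ U i := hball (by
      rw [mem_ball]
      linarith [dist_triangle_left P Q (Φ (x, t))])
    have h4 := (hmemF P h3).1 hP
    have h5 := abs_vertCoord_sub_le hd (R (Φ (x, t))) (R P)
    have h6 := hη.dist_le_mul (graphCoord d (R (Φ (x, t)))) (graphCoord d (R P))
    have h7 := dist_graphCoord_le hd (R (Φ (x, t))) (R P)
    rw [R.isometry.dist_eq] at h5 h7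
    rw [Real.dist_eq] at h6
    have h8 : (M : ℝ) * dist (graphCoord d (R (Φ (x, t)))) (graphCoord d (R P)) ≤
      M * dist (Φ (x, t)) P := mul_le_mul_of_nonneg_left h7 M.2
    rw [hg, hv] at *
    rw [hPd]
    push_cast
    linarith [(abs_le.1 h5).2, (abs_le.1 h6).1]
  · exact ⟨(graphCoord d (R Q), 0), ⟨mem_ball_self (by positivity), by simpa using hr⟩, hQ0⟩

lemma hausdorff_isAddHaar (hd : 1 ≤ d) :
    (μH[(d : ℝ) - 1] : Measure (Euc (d - 1))).IsAddHaarMeasure := by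
  have h := MeasureTheory.isAddHaarMeasure_hausdorffMeasure (E := Euc (d - 1))
  rwa [finrank_euclideanSpace_fin, Nat.cast_sub hd, Nat.cast_one] at h

lemma IsLipschitzDomain.frontier_nonempty (hd : 1 ≤ d) {Ω : Set (Euc d)}
    (hΩ : IsLipschitzDomain Ω) : (frontier Ω).Nonempty := by
  have : Nonempty (Fin d) := ⟨⟨0, by omega⟩⟩
  refine nonempty_frontier_iff.2 ⟨hΩ.2.2.1.nonempty, fun h => ?_⟩
  exact NormedSpace.unbounded_univ ℝ (Euc d) (h ▸ hΩ.2.1)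

lemma IsLipschitzDomain.isCompact_frontier {Ω : Set (Euc d)}
    (hΩ : IsLipschitzDomain Ω) : IsCompact (frontier Ω) :=
  Metric.isCompact_of_isClosed_isBounded isClosed_frontier
    (hΩ.2.1.closure.subset frontier_subset_closure)

lemma GraphChart.eq_of_mem_frontier {Ω : Set (Euc d)} (κ : GraphChart Ω) {P : Euc d}
    (hP : P ∈ frontier Ω) (hc : P ∈ κ.cyl) : ∃ x ∈ ball κ.center κ.radius, P = κ.map (x, 0) := by
  obtain ⟨⟨x, t⟩, ⟨hx, ht⟩, rfl⟩ := hc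
  have hx2 : x ∈ ball κ.center (2 * κ.radius) :=
    ball_subset_ball (by linarith [κ.radius_pos]) hx
  have := κ.eq_zero x hx2 t ht hP
  exact ⟨x, hx, by rw [this]⟩

/-- Finitely many charts cover a neighbourhood of the boundary. -/
lemma IsLipschitzDomain.exists_charts (hd : 1 ≤ d) {Ω : Set (Euc d)}
    (hΩ : IsLipschitzDomain Ω) : ∃ (s : Finset (GraphChart Ω)) (δ Λ : ℝ), 0 < δ ∧
      1 ≤ Λ ∧ (∀ κ ∈ s, δ ≤ κ.radius ∧ δ ≤ κ.height ∧ κ.lip ≤ Λ) ∧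
      ∀ x, infDist x (frontier Ω) < δ → ∃ κ ∈ s, x ∈ κ.cyl := by
  obtain ⟨s, hs⟩ := hΩ.isCompact_frontier.elim_finite_subcover
    (fun κ : GraphChart Ω => κ.cyl) (fun κ => κ.isOpen_image)
    (fun Q hQ => mem_iUnion.2 (exists_graphChart hd hΩ hQ))
  obtain ⟨δ, hδ, hsub⟩ := hΩ.isCompact_frontier.exists_thickening_subset_open
    (isOpen_biUnion fun κ _ => κ.isOpen_image) hs
  obtain ⟨ε, hε, hεs⟩ : ∃ ε > 0, ∀ κ ∈ s, ε ≤ min κ.radius κ.height := by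
    rcases s.eq_empty_or_nonempty with rfl | hne
    · exact ⟨1, one_pos, by simp⟩
    · exact ⟨s.inf' hne fun κ => min κ.radius κ.height,
        (Finset.lt_inf'_iff _).2 fun κ _ => lt_min κ.radius_pos κ.height_pos,
        fun κ hκ => Finset.inf'_le _ hκ⟩
  obtain ⟨Λ, hΛ, hΛs⟩ : ∃ Λ : ℝ, 1 ≤ Λ ∧ ∀ κ ∈ s, (κ.lip : ℝ) ≤ Λ := by
    rcases s.eq_empty_or_nonempty with rfl | hne
    · exact ⟨1, le_rfl, by simp⟩
    · obtain ⟨κ₀, hκ₀⟩ := hne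
      exact ⟨s.sup' ⟨κ₀, hκ₀⟩ fun κ => (κ.lip : ℝ),
        (show (1 : ℝ) ≤ κ₀.lip from κ₀.one_le_lip).trans (Finset.le_sup' (fun κ => (κ.lip : ℝ)) hκ₀),
        fun κ hκ => Finset.le_sup' (fun κ => (κ.lip : ℝ)) hκ⟩
  refine ⟨s, min δ ε, Λ, lt_min hδ hε, hΛ, fun κ hκ => ?_, fun x hx => ?_⟩
  · have := hεs κ hκ
    exact ⟨(min_le_right _ _).trans (this.trans (min_le_left _ _)),
      (min_le_right _ _).trans (this.trans (min_le_right _ _)), hΛs κ hκ⟩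
  · have h1 : x ∈ thickening δ (frontier Ω) := by
      rw [thickening_eq_biUnion_ball]
      obtain ⟨P, hP, hPd⟩ := (infDist_lt_iff (hΩ.frontier_nonempty hd)).1 hx
      exact mem_biUnion hP (hPd.trans_le (min_le_left _ _))
    simpa using hsub h1

/-- The surface measure of a bounded Lipschitz domain is finite. -/
lemma IsLipschitzDomain.isFiniteMeasure (hd : 1 ≤ d) {Ω : Set (Euc d)}
    (hΩ : IsLipschitzDomain Ω) : IsFiniteMeasure (sMeasure Ω) := by
  obtain ⟨s, δ, -, hδ, -, -, hs⟩ := hΩ.exists_charts hd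
  have := hausdorff_isAddHaar hd
  have hd' : 0 ≤ (d : ℝ) - 1 := by
    have : (1 : ℝ) ≤ d := by exact_mod_cast hd
    linarith
  refine ⟨?_⟩
  rw [sMeasure, Measure.restrict_apply_univ]
  have hsub : frontier Ω ⊆ ⋃ κ ∈ s, (fun x => κ.map (x, 0)) '' ball κ.center κ.radius := by
    intro P hP
    obtain ⟨κ, hκ, hPκ⟩ := hs P (by rwa [infDist_zero_of_mem hP])
    obtain ⟨x, hx, rfl⟩ := κ.eq_of_mem_frontier hP hPκ
    exact mem_biUnion hκ ⟨x, hx, rfl⟩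
  refine (measure_mono hsub).trans_lt ((measure_biUnion_finset_le _ _).trans_lt ?_)
  refine ENNReal.sum_lt_top.2 fun κ _ => ?_
  refine (κ.lipschitz_map.hausdorffMeasure_image_le hd' _).trans_lt ?_
  exact ENNReal.mul_lt_top (ENNReal.rpow_lt_top_of_nonneg hd' ENNReal.coe_ne_top)
    measure_ball_lt_top

/-- Lower Ahlfors regularity of the surface measure. -/
lemma IsLipschitzDomain.ahlfors_lower (hd : 1 ≤ d) {Ω : Set (Euc d)}
    (hΩ : IsLipschitzDomain Ω) : ∃ c > 0, ∃ δ > 0, ∀ P ∈ frontier Ω, ∀ r, 0 < r → r ≤ δ →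
      ENNReal.ofReal (c * r ^ (d - 1)) ≤ sMeasure Ω (ball P r) := by
  obtain ⟨s, δ, Λ, hδ, hΛ, hrad, hs⟩ := hΩ.exists_charts hd
  have hhaar := hausdorff_isAddHaar hd
  have hd' : 0 ≤ (d : ℝ) - 1 := by
    have : (1 : ℝ) ≤ d := by exact_mod_cast hd
    linarith
  set m : ℝ := (μH[(d : ℝ) - 1] : Measure (Euc (d - 1))).real (ball 0 1) with hm
  have hm0 : 0 < m := ENNReal.toReal_pos (measure_ball_pos _ _ one_pos).ne' measure_ball_lt_top.ne
  have hΛ0 : 0 < Λ := by linarith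
  refine ⟨m / Λ ^ (d - 1), by positivity, δ, hδ, fun P hP r hr hrδ => ?_⟩
  obtain ⟨κ, hκ, hPκ⟩ := hs P (by rwa [infDist_zero_of_mem hP])
  obtain ⟨x, hx, rfl⟩ := κ.eq_of_mem_frontier hP hPκ
  have hsub : ball x (r / Λ) ⊆ κ.proj '' (ball (κ.map (x, 0)) r ∩ frontier Ω) := by
    intro y hy
    rw [mem_ball, lt_div_iff₀ hΛ0] at hy
    have h0 := (hrad κ hκ).1
    refine ⟨κ.map (y, 0), ⟨?_, κ.map_mem_frontier y ?_⟩, κ.proj_map _⟩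
    · rw [mem_ball]
      refine (κ.lipschitz_map.dist_le_mul y x).trans_lt ?_
      nlinarith [(hrad κ hκ).2.2, dist_nonneg (x := y) (y := x)]
    · rw [mem_ball] at hx ⊢
      have := dist_triangle y x κ.center
      nlinarith [dist_nonneg (x := y) (y := x)]
  rw [sMeasure, Measure.restrict_apply isOpen_ball.measurableSet]
  calc ENNReal.ofReal (m / Λ ^ (d - 1) * r ^ (d - 1))
      = (μH[(d : ℝ) - 1] : Measure (Euc (d - 1))) (ball x (r / Λ)) := by
        rw [Measure.addHaar_ball_of_pos _ _ (by positivity), finrank_euclideanSpace_fin,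
          show m / Λ ^ (d - 1) * r ^ (d - 1) = (r / Λ) ^ (d - 1) * m by rw [div_pow]; ring,
          ENNReal.ofReal_mul (by positivity), hm, ofReal_measureReal measure_ball_lt_top.ne]
    _ ≤ _ := measure_mono hsub
    _ ≤ _ := by
        have := κ.lipschitz_proj.hausdorffMeasure_image_le hd'
          (ball (κ.map (x, 0)) r ∩ frontier Ω)
        simpa using this

lemma lintegral_ball_inv_norm_pow (hd : 1 ≤ d) : ∃ C : ℝ, 0 ≤ C ∧ ∀ r, 0 < r →
    ∫⁻ x in ball (0 : Euc d) r, ENNReal.ofReal ((‖x‖ ^ (d - 1))⁻¹) ≤ ENNReal.ofReal (C * r) := by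
  have : Nonempty (Fin d) := ⟨⟨0, by omega⟩⟩
  refine ⟨d * volume.real (ball (0 : Euc d) 1), by positivity, fun r hr => ?_⟩
  have hmul : ∀ y ∈ Ioo 0 r, y ^ (d - 1) * (y ^ (d - 1))⁻¹ = 1 := fun y hy =>
    mul_inv_cancel₀ (pow_ne_zero _ hy.1.ne')
  have hintegrable : IntegrableOn (fun x : Euc d => (‖x‖ ^ (d - 1))⁻¹) (ball 0 r) := by
    refine (integrableOn_fun_norm_addHaar volume (f := fun y => (y ^ (d - 1))⁻¹)).2 ?_
    rw [finrank_euclideanSpace_fin]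
    refine (integrableOn_congr_fun (f := fun _ => (1 : ℝ)) (fun y hy => ?_) measurableSet_Ioo).1
      (integrableOn_const (by simp))
    exact (hmul y hy).symm
  rw [← ofReal_integral_eq_lintegral_ofReal hintegrable (ae_of_all _ fun x => by positivity)]
  refine ENNReal.ofReal_le_ofReal (le_of_eq ?_)
  rw [← integral_indicator isOpen_ball.measurableSet]
  have h1 := integral_fun_norm_addHaar (volume : Measure (Euc d))
    ((Iio r).indicator fun y => (y ^ (d - 1))⁻¹)
  rw [finrank_euclideanSpace_fin] at h1
  have h2 : ∫ y in Ioi (0 : ℝ), y ^ (d - 1) • (Iio r).indicator (fun y => (y ^ (d - 1))⁻¹) y =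
      r := by
    have h3 : ∫ y in Ioi (0 : ℝ), y ^ (d - 1) • (Iio r).indicator (fun y => (y ^ (d - 1))⁻¹) y =
        ∫ y in Ioi (0 : ℝ), (Ioo 0 r).indicator (fun _ => (1 : ℝ)) y := by
      refine setIntegral_congr_fun measurableSet_Ioi fun y (hy : 0 < y) => ?_
      by_cases hyr : y < r
      · simp [hyr, hy, hy.ne']
      · simp [hyr]
    rw [h3, setIntegral_indicator measurableSet_Ioo, inter_eq_right.2 Ioo_subset_Ioi_self]
    simp [hr.le]
  rw [h2] at h1
  rw [show (d : ℝ) * volume.real (ball (0 : Euc d) 1) * r =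
    d • volume.real (ball (0 : Euc d) 1) • r by simp [mul_assoc], ← h1]
  refine integral_congr_ae (ae_of_all _ fun x => ?_)
  simp [indicator]

/-- The part of `Ω` at distance less than `δ` from the boundary. -/
def collar (Ω : Set (Euc d)) (δ : ℝ) : Set (Euc d) := {x | x ∈ Ω ∧ infDist x (frontier Ω) < δ}

/-- The nontangential maximal function truncated at distance `δ`. -/
def truncMax (Ω : Set (Euc d)) (δ : ℝ) (h : Euc d → ℝ≥0∞) (Q : Euc d) : ℝ≥0∞ :=
  ⨆ x ∈ ntCone Ω Q ∩ ball Q δ, h x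

lemma measurableSet_collar {Ω : Set (Euc d)} (hΩ : IsOpen Ω) (δ : ℝ) :
    MeasurableSet (collar Ω δ) :=
  hΩ.measurableSet.inter (measurableSet_lt (measurable_infDist) measurable_const)

lemma infDist_frontier_pos {Ω : Set (Euc d)} (hΩ : IsOpen Ω) (hne : (frontier Ω).Nonempty)
    {x : Euc d} (hx : x ∈ Ω) : 0 < infDist x (frontier Ω) := by
  rw [← isClosed_frontier.notMem_iff_infDist_pos hne]
  exact fun h => (hΩ.frontier_eq ▸ h).2 hx

lemma measurable_truncMax (Ω : Set (Euc d)) (δ : ℝ) (h : Euc d → ℝ≥0∞) :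
    Measurable (truncMax Ω δ h) := by
  refine measurable_of_Ioi fun a => IsOpen.measurableSet ?_
  have : truncMax Ω δ h ⁻¹' Ioi a = ⋃ x ∈ {x | x ∈ Ω ∧ a < h x},
      ball x (2 * infDist x (frontier Ω)) ∩ ball x δ := by
    ext Q
    simp only [truncMax, mem_preimage, mem_Ioi, lt_iSup_iff, mem_inter_iff, ntCone, mem_ofPred_eq,
      mem_iUnion, exists_prop, mem_ball, dist_comm Q]
    constructor
    · rintro ⟨x, ⟨⟨h1, h2⟩, h3⟩, h4⟩
      exact ⟨x, ⟨h1, h4⟩, h2, h3⟩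
    · rintro ⟨x, ⟨h1, h4⟩, h2, h3⟩
      exact ⟨x, ⟨⟨h1, h2⟩, h3⟩, h4⟩
  rw [this]
  exact isOpen_biUnion fun x _ => isOpen_ball.inter isOpen_ball

/-- Integrals over thin collars are controlled by boundary integrals of the truncated
nontangential maximal function. -/
lemma IsLipschitzDomain.lintegral_collar_le (hd : 1 ≤ d) {Ω : Set (Euc d)}
    (hΩ : IsLipschitzDomain Ω) : ∃ C : ℝ≥0, ∃ δ₀ > 0, ∀ δ, 0 < δ → δ ≤ δ₀ →
      ∀ h : Euc d → ℝ≥0∞, ∫⁻ x in collar Ω δ, h x ≤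
        C * ENNReal.ofReal δ * ∫⁻ Q, truncMax Ω (2 * δ) h Q ∂(sMeasure Ω) := by
  obtain ⟨c, hc, δ₀, hδ₀, hahl⟩ := hΩ.ahlfors_lower hd
  obtain ⟨C, hC, hCr⟩ := lintegral_ball_inv_norm_pow hd
  have hne := hΩ.frontier_nonempty hd
  have hfin := hΩ.isFiniteMeasure hd
  set B : ℝ := 2 ^ (d - 1) / c with hB
  have hB0 : 0 ≤ B := by positivity
  refine ⟨(B * (C * 2)).toNNReal, δ₀, hδ₀, fun δ hδ hδδ h => ?_⟩
  set T := truncMax Ω (2 * δ) h with hT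
  have hTm : Measurable T := measurable_truncMax _ _ _
  set k : Euc d → Euc d → ℝ≥0∞ := fun x Q => (ball (0 : Euc d) (2 * δ)).indicator
    (fun y => ENNReal.ofReal B * ENNReal.ofReal ((‖y‖ ^ (d - 1))⁻¹)) (x - Q) with hk
  have hpt : ∀ x ∈ collar Ω δ, h x ≤ ∫⁻ Q, T Q * k x Q ∂(sMeasure Ω) := by
    rintro x ⟨hxΩ, hxδ⟩
    set ρ := infDist x (frontier Ω) with hρ
    have hρ0 : 0 < ρ := infDist_frontier_pos hΩ.1 hne hxΩ
    obtain ⟨P, hP, hPd⟩ := isClosed_frontier.exists_infDist_eq_dist hne x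
    have h1 := hahl P hP ρ hρ0 (hxδ.le.trans hδδ)
    have h2 : ball P ρ ⊆ ball x (2 * ρ) := fun Q hQ => by
      rw [mem_ball] at hQ ⊢
      have := dist_triangle Q P x
      rw [dist_comm P x, ← hPd] at this
      linarith
    have h3 := h1.trans (measure_mono h2)
    have hpos : 0 < c * ρ ^ (d - 1) := by positivity
    calc h x = h x * (ENNReal.ofReal (c * ρ ^ (d - 1))⁻¹ * ENNReal.ofReal (c * ρ ^ (d - 1))) := by
          rw [← ENNReal.ofReal_mul (by positivity), inv_mul_cancel₀ hpos.ne']; simp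
      _ ≤ h x * (ENNReal.ofReal (c * ρ ^ (d - 1))⁻¹ * sMeasure Ω (ball x (2 * ρ))) := by gcongr
      _ = ∫⁻ Q in ball x (2 * ρ), h x * ENNReal.ofReal (c * ρ ^ (d - 1))⁻¹ ∂(sMeasure Ω) := by
          rw [setLIntegral_const, mul_assoc]
      _ ≤ ∫⁻ Q in ball x (2 * ρ), T Q * k x Q ∂(sMeasure Ω) := by
          refine lintegral_mono_ae ?_
          have hfr : ∀ᵐ Q ∂(sMeasure Ω), Q ∈ frontier Ω :=
            ae_restrict_mem isClosed_frontier.measurableSet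
          filter_upwards [ae_restrict_mem isOpen_ball.measurableSet,
            ae_restrict_of_ae hfr] with Q hQ hQf
          rw [mem_ball, dist_comm] at hQ
          have hxQ : ρ ≤ dist x Q := infDist_le_dist_of_mem hQf
          have hxQ0 : 0 < dist x Q := hρ0.trans_le hxQ
          have hmem : x ∈ ntCone Ω Q ∩ ball Q (2 * δ) :=
            ⟨⟨hxΩ, hQ⟩, by rw [mem_ball]; linarith⟩
          refine mul_le_mul' (le_iSup₂ (f := fun x _ => h x) x hmem) ?_
          have hmem' : x - Q ∈ ball (0 : Euc d) (2 * δ) := by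
            rw [mem_ball_zero_iff, ← dist_eq_norm]; linarith
          rw [hk]
          simp only [indicator_of_mem hmem']
          rw [← ENNReal.ofReal_mul hB0]
          refine ENNReal.ofReal_le_ofReal ?_
          rw [← dist_eq_norm, hB, ← div_eq_mul_inv, div_div, inv_eq_one_div,
            div_le_div_iff₀ hpos (by positivity), one_mul]
          calc c * dist x Q ^ (d - 1) ≤ c * (2 * ρ) ^ (d - 1) := by gcongr
            _ = 2 ^ (d - 1) * (c * ρ ^ (d - 1)) := by rw [mul_pow]; ring
      _ ≤ _ := setLIntegral_le_lintegral _ _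
  have hkm : Measurable (Function.uncurry k) := by
    have : Measurable ((ball (0 : Euc d) (2 * δ)).indicator
      (fun y => ENNReal.ofReal B * ENNReal.ofReal ((‖y‖ ^ (d - 1))⁻¹))) :=
      Measurable.indicator (by fun_prop) isOpen_ball.measurableSet
    exact this.comp (measurable_fst.sub measurable_snd)
  have hkint : ∀ Q, ∫⁻ x, k x Q ≤ (B * (C * 2)).toNNReal * ENNReal.ofReal δ := fun Q => by
    have h1 : ∫⁻ x, k x Q = ∫⁻ x in ball (0 : Euc d) (2 * δ),
        ENNReal.ofReal B * ENNReal.ofReal ((‖x‖ ^ (d - 1))⁻¹) := by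
      rw [← lintegral_indicator isOpen_ball.measurableSet]
      exact lintegral_sub_right_eq_self (μ := volume) ((ball (0 : Euc d) (2 * δ)).indicator
        fun y => ENNReal.ofReal B * ENNReal.ofReal ((‖y‖ ^ (d - 1))⁻¹)) Q
    rw [h1, lintegral_const_mul _ (by fun_prop)]
    refine (mul_le_mul_right (hCr _ (by positivity)) _).trans (le_of_eq ?_)
    rw [← ENNReal.ofReal_mul hB0, ENNReal.ofNNReal_toNNReal, ← ENNReal.ofReal_mul (by positivity)]
    congr 1
    ring
  clear_value k T B
  calc ∫⁻ x in collar Ω δ, h x ≤ ∫⁻ x in collar Ω δ, ∫⁻ Q, T Q * k x Q ∂(sMeasure Ω) :=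
        setLIntegral_mono' (measurableSet_collar hΩ.1 δ) hpt
    _ ≤ ∫⁻ x, ∫⁻ Q, T Q * k x Q ∂(sMeasure Ω) := setLIntegral_le_lintegral _ _
    _ = ∫⁻ Q, (∫⁻ x, T Q * k x Q) ∂(sMeasure Ω) :=
        lintegral_lintegral_swap ((hTm.comp measurable_snd).mul hkm).aemeasurable
    _ ≤ ∫⁻ Q, (B * (C * 2)).toNNReal * ENNReal.ofReal δ * T Q ∂(sMeasure Ω) := by
        refine lintegral_mono fun Q => ?_
        have hkQ : Measurable fun x => k x Q := hkm.comp measurable_prodMk_right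
        rw [lintegral_const_mul _ hkQ, mul_comm]
        exact mul_le_mul_left (hkint Q) _
    _ = _ := lintegral_const_mul _ hTm

lemma ae_mem_frontier (Ω : Set (Euc d)) :
    ∀ᵐ Q ∂(sMeasure Ω), Q ∈ frontier Ω :=
  ae_restrict_mem isClosed_frontier.measurableSet

/-- If `h` tends nontangentially to zero and has integrable maximal function, then its mean over
thin collars tends to zero. -/
lemma IsLipschitzDomain.lintegral_collar_small (hd : 1 ≤ d) {Ω : Set (Euc d)}
    (hΩ : IsLipschitzDomain Ω) {h : Euc d → ℝ≥0∞}
    (hlim : ∀ᵐ Q ∂(sMeasure Ω), Tendsto h (𝓝[ntCone Ω Q] Q) (𝓝 0))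
    (hmax : ∫⁻ Q, (⨆ x ∈ ntCone Ω Q, h x) ∂(sMeasure Ω) ≠ ∞) {ε : ℝ≥0∞} (hε : ε ≠ 0) :
    ∃ δ₁ > 0, ∀ δ, 0 < δ → δ ≤ δ₁ → ∫⁻ x in collar Ω δ, h x ≤ ε * ENNReal.ofReal δ := by
  obtain ⟨C, δ₀, hδ₀, hC⟩ := hΩ.lintegral_collar_le hd
  have hle : ∀ r Q, truncMax Ω r h Q ≤ ⨆ x ∈ ntCone Ω Q, h x := fun r Q =>
    iSup₂_le fun x hx => le_iSup₂ (f := fun x _ => h x) x hx.1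
  have hmono : ∀ {r r' : ℝ} (Q), r ≤ r' → truncMax Ω r h Q ≤ truncMax Ω r' h Q := fun Q hr =>
    iSup₂_le fun x hx => le_iSup₂ (f := fun x _ => h x) x ⟨hx.1, ball_subset_ball hr hx.2⟩
  have hu : Tendsto (fun k : ℕ => 1 / ((k : ℝ) + 1)) atTop (𝓝 0) :=
    tendsto_one_div_add_atTop_nhds_zero_nat
  have htend : Tendsto (fun k : ℕ => ∫⁻ Q, truncMax Ω (1 / ((k : ℝ) + 1)) h Q ∂(sMeasure Ω)) atTop
      (𝓝 (∫⁻ _, 0 ∂(sMeasure Ω))) := by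
    refine tendsto_lintegral_of_dominated_convergence (truncMax Ω 1 h)
      (fun k => measurable_truncMax _ _ _) (fun k => ae_of_all _ fun Q => hmono Q ?_) ?_ ?_
    · exact div_le_one_of_le₀ (by linarith [(Nat.cast_nonneg k : (0 : ℝ) ≤ k)]) (by positivity)
    · exact ((lintegral_mono fun Q => hle 1 Q).trans_lt hmax.lt_top).ne
    · filter_upwards [hlim] with Q hQ
      refine ENNReal.tendsto_nhds_zero.2 fun e he => ?_
      have h1 := hQ.eventually (gt_mem_nhds he)
      obtain ⟨r, hr, hrs⟩ := Metric.mem_nhdsWithin_iff.1 h1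
      filter_upwards [hu.eventually (gt_mem_nhds hr)] with k hk
      refine iSup₂_le fun x hx => le_of_lt ?_
      exact hrs ⟨ball_subset_ball hk.le hx.2, hx.1⟩
  rw [lintegral_zero] at htend
  have hε' : 0 < ε / (C + 1) := ENNReal.div_pos hε (by simp)
  obtain ⟨k, hk⟩ := (htend.eventually (gt_mem_nhds hε')).exists
  refine ⟨min δ₀ (1 / ((k : ℝ) + 1) / 2), by positivity, fun δ hδ hδδ => ?_⟩
  calc _ ≤ C * ENNReal.ofReal δ * ∫⁻ Q, truncMax Ω (2 * δ) h Q ∂(sMeasure Ω) :=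
        hC δ hδ (hδδ.trans (min_le_left _ _)) h
    _ ≤ (C + 1) * ENNReal.ofReal δ * (ε / (C + 1)) := by
        gcongr
        · exact le_self_add
        · refine (lintegral_mono fun Q => hmono Q ?_).trans hk.le
          linarith [hδδ.trans (min_le_right _ _)]
    _ = ε * ENNReal.ofReal δ := by
        rw [mul_right_comm, ENNReal.mul_div_cancel (by simp) (by simp)]

lemma measurable_indicator_of_continuousOn {X Y : Type*} [TopologicalSpace X] [MeasurableSpace X]
    [OpensMeasurableSpace X] [TopologicalSpace Y] [MeasurableSpace Y] [BorelSpace Y] [Zero Y]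
    {O : Set X} (hO : IsOpen O) {f : X → Y} (hf : ContinuousOn f O) :
    Measurable (O.indicator f) := by
  classical
  have := ContinuousOn.measurable_piecewise (f := f) (g := fun _ => (0 : Y)) (s := O) hf
    continuousOn_const hO.measurableSet
  exact this

lemma GraphChart.map_mem_collar {Ω : Set (Euc d)} (κ : GraphChart Ω) {x : Euc (d - 1)}
    (hx : x ∈ ball κ.center κ.radius) {t ℓ : ℝ} (ht : t ∈ Ioo 0 ℓ) (hℓ : ℓ ≤ κ.height) :
    κ.map (x, t) ∈ collar Ω ℓ := by
  have hx2 : x ∈ ball κ.center (2 * κ.radius) :=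
    ball_subset_ball (by linarith [κ.radius_pos]) hx
  refine ⟨κ.map_mem x hx2 t ⟨ht.1, ht.2.trans_le hℓ⟩, ?_⟩
  refine (infDist_le_dist_of_mem (κ.map_mem_frontier x hx2)).trans_lt ?_
  rw [κ.map_eq x t, dist_eq_norm, add_sub_cancel_left, norm_smul, κ.norm_dir, mul_one,
    Real.norm_eq_abs, abs_of_pos ht.1]
  exact ht.2

/-- Integrals over a cylinder in chart coordinates are bounded by integrals over a collar. -/
lemma GraphChart.lintegral_map_le {Ω : Set (Euc d)} (κ : GraphChart Ω) (hΩ : IsOpen Ω) {ℓ : ℝ}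
    (hℓ : ℓ ≤ κ.height) {F : Euc d → ℝ≥0∞} (hF : Measurable F) :
    ∫⁻ x in ball κ.center κ.radius, ∫⁻ t in Ioo 0 ℓ, F (κ.map (x, t)) ≤
      ∫⁻ y in collar Ω ℓ, F y := by
  have hm : Measurable fun z => F (κ.map z) := hF.comp κ.continuous_map.measurable
  rw [← lintegral_prod (μ := volume.restrict (ball κ.center κ.radius))
    (ν := volume.restrict (Ioo (0 : ℝ) ℓ)) (fun z => F (κ.map z)) hm.aemeasurable,
    Measure.prod_restrict,
    ← κ.measurePreserving_map.setLIntegral_comp_preimage (measurableSet_collar hΩ ℓ) hF]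
  refine lintegral_mono_set ?_
  rintro ⟨x, t⟩ ⟨hx, ht⟩
  exact κ.map_mem_collar hx ht hℓ

/-- Integrals over the part of a collar in a chart are bounded by integrals over a cylinder in
chart coordinates. -/
lemma GraphChart.lintegral_collar_le {Ω : Set (Euc d)} (κ : GraphChart Ω) (hΩ : IsOpen Ω) {δ : ℝ}
    {F : Euc d → ℝ≥0∞} (hF : Measurable F) :
    ∫⁻ y in collar Ω δ ∩ κ.cyl, F y ≤
      ∫⁻ x in ball κ.center κ.radius, ∫⁻ t in Ioo 0 (κ.lip * δ), F (κ.map (x, t)) := by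
  have hm : Measurable fun z => F (κ.map z) := hF.comp κ.continuous_map.measurable
  have hms : MeasurableSet (collar Ω δ ∩ κ.cyl) :=
    (measurableSet_collar hΩ δ).inter κ.isOpen_image.measurableSet
  rw [← lintegral_prod (μ := volume.restrict (ball κ.center κ.radius))
    (ν := volume.restrict (Ioo (0 : ℝ) (κ.lip * δ))) (fun z => F (κ.map z)) hm.aemeasurable,
    Measure.prod_restrict, ← κ.measurePreserving_map.setLIntegral_comp_preimage hms hF]
  refine lintegral_mono_set ?_
  rintro ⟨x, t⟩ ⟨hcol, ⟨x', t'⟩, ⟨hx, ht⟩, he⟩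
  obtain ⟨rfl, rfl⟩ := Prod.mk.inj (κ.injective_map he)
  have hx2 : x' ∈ ball κ.center (2 * κ.radius) :=
    ball_subset_ball (by linarith [κ.radius_pos]) hx
  obtain ⟨h1, h2⟩ := κ.pos_of_mem x' hx2 t' ht hcol.1
  have h3 : (0 : ℝ) < κ.lip := by exact_mod_cast zero_lt_one.trans_le κ.one_le_lip
  exact ⟨hx, h1, h2.trans_lt (mul_lt_mul_of_pos_left hcol.2 h3)⟩

/-- The fundamental theorem of calculus along a vertical segment. -/
lemma GraphChart.enorm_le_add {Ω : Set (Euc d)} (κ : GraphChart Ω) (hΩ : IsOpen Ω)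
    {f : Euc d → ℝ} (hf : ContDiffOn ℝ (⊤ : ℕ∞) f Ω) {ℓ : ℝ} (hℓ : ℓ ≤ κ.height)
    {x : Euc (d - 1)} (hx : x ∈ ball κ.center κ.radius) {s t : ℝ} (hs : s ∈ Ioo 0 ℓ)
    (ht : t ∈ Ioo 0 ℓ) :
    ‖f (κ.map (x, t))‖ₑ ≤ ‖f (κ.map (x, s))‖ₑ +
      ∫⁻ r in Ioo 0 ℓ, ‖fderiv ℝ f (κ.map (x, r))‖ₑ := by
  have hsub : uIcc s t ⊆ Ioo 0 ℓ := ordConnected_Ioo.uIcc_subset hs ht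
  have hmem : ∀ r ∈ Ioo 0 ℓ, κ.map (x, r) ∈ Ω := fun r hr => (κ.map_mem_collar hx hr hℓ).1
  have hder : ∀ r ∈ uIcc s t, HasDerivAt (fun r => f (κ.map (x, r)))
      (fderiv ℝ f (κ.map (x, r)) κ.dir) r := fun r hr => by
    have h1 : HasDerivAt (fun r => κ.map (x, r)) κ.dir r := by
      have : (fun r => κ.map (x, r)) = fun r => κ.map (x, 0) + r • κ.dir := funext (κ.map_eq x)
      rw [this]
      simpa using ((hasDerivAt_id r).smul_const κ.dir).const_add (κ.map (x, 0))
    have h2 : DifferentiableAt ℝ f (κ.map (x, r)) :=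
      ((hf.contDiffAt (hΩ.mem_nhds (hmem r (hsub hr)))).differentiableAt (by simp))
    exact h2.hasFDerivAt.comp_hasDerivAt r h1
  have hcont : ContinuousOn (fun r => fderiv ℝ f (κ.map (x, r)) κ.dir) (uIcc s t) := by
    have h1 : ContinuousOn (fderiv ℝ f) Ω := hf.continuousOn_fderiv_of_isOpen hΩ (by simp)
    have h2 : Continuous fun r => κ.map (x, r) := κ.continuous_map.comp (by fun_prop)
    exact (h1.comp h2.continuousOn fun r hr => hmem r (hsub hr)).clm_apply continuousOn_const
  have hFTC := intervalIntegral.integral_eq_sub_of_hasDerivAt hder hcont.intervalIntegrable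
  have hle : ‖f (κ.map (x, t)) - f (κ.map (x, s))‖ₑ ≤
      ∫⁻ r in Ioo 0 ℓ, ‖fderiv ℝ f (κ.map (x, r))‖ₑ := by
    rw [← hFTC, ← ofReal_norm, intervalIntegral.norm_intervalIntegral_eq,
      ofReal_norm]
    refine (enorm_integral_le_lintegral_enorm _).trans ?_
    refine (lintegral_mono_set (uIoc_subset_uIcc.trans hsub)).trans (lintegral_mono fun r => ?_)
    have := (fderiv ℝ f (κ.map (x, r))).le_opNorm κ.dir
    rw [κ.norm_dir, mul_one] at this
    exact enorm_le_iff_norm_le.2 this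
  calc ‖f (κ.map (x, t))‖ₑ = ‖f (κ.map (x, s)) + (f (κ.map (x, t)) - f (κ.map (x, s)))‖ₑ := by
        congr 1; ring
    _ ≤ _ := (enorm_add_le _ _).trans (by gcongr)

/-- A function with vanishing nontangential boundary values is controlled by the vertical integral
of its gradient. -/
lemma GraphChart.ae_enorm_le (hd : 1 ≤ d) {Ω : Set (Euc d)} (κ : GraphChart Ω)
    (hΩ : IsLipschitzDomain Ω) {f : Euc d → ℝ} (hf : ContDiffOn ℝ (⊤ : ℕ∞) f Ω)
    (hlim : ∀ᵐ Q ∂(sMeasure Ω), NTLim Ω f Q 0) {ℓ : ℝ} (hℓ0 : 0 < ℓ) (hℓ : ℓ ≤ κ.height) :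
    ∀ᵐ x ∂(volume.restrict (ball κ.center κ.radius)), ∀ t ∈ Ioo 0 ℓ,
      ‖f (κ.map (x, t))‖ₑ ≤ ∫⁻ r in Ioo 0 ℓ, ‖fderiv ℝ f (κ.map (x, r))‖ₑ := by
  have hfin := hΩ.isFiniteMeasure hd
  set h : Euc d → ℝ≥0∞ := Ω.indicator fun x => min ‖f x‖ₑ 1 with hh
  have hhm : Measurable h := measurable_indicator_of_continuousOn hΩ.1
    (hf.continuousOn.enorm.inf continuousOn_const)
  have hlim' : ∀ᵐ Q ∂(sMeasure Ω), Tendsto h (𝓝[ntCone Ω Q] Q) (𝓝 0) := by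
    filter_upwards [hlim] with Q hQ
    refine tendsto_of_tendsto_of_tendsto_of_le_of_le tendsto_const_nhds
      (h := fun x => ‖f x‖ₑ) ?_ (fun _ => zero_le) (fun x => ?_)
    · simpa using Filter.Tendsto.enorm hQ
    · exact (indicator_le_self _ _ x).trans (min_le_left _ _)
  have hmax : ∫⁻ Q, (⨆ x ∈ ntCone Ω Q, h x) ∂(sMeasure Ω) ≠ ∞ := by
    have h1 : ∫⁻ Q, (⨆ x ∈ ntCone Ω Q, h x) ∂(sMeasure Ω) ≤ ∫⁻ _, 1 ∂(sMeasure Ω) :=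
      lintegral_mono fun Q => iSup₂_le fun x _ =>
        (indicator_le_self _ _ x).trans (min_le_right _ _)
    exact (h1.trans_lt (by simp)).ne
  set ρ : ℕ → ℝ := fun k => ℓ / (k + 1) with hρ
  have hρ0 : ∀ k, 0 < ρ k := fun k => by positivity
  have hρℓ : ∀ k, ρ k ≤ ℓ := fun k =>
    div_le_self hℓ0.le (by linarith [(Nat.cast_nonneg k : (0 : ℝ) ≤ k)])
  have hρlim : Tendsto ρ atTop (𝓝 0) := by
    have := (tendsto_one_div_add_atTop_nhds_zero_nat (𝕜 := ℝ)).const_mul ℓ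
    simpa [hρ, div_eq_mul_inv] using this
  set m : ℕ → Euc (d - 1) → ℝ≥0∞ := fun k x =>
    (∫⁻ s in Ioo 0 (ρ k), h (κ.map (x, s))) / ENNReal.ofReal (ρ k) with hm
  have hmm : ∀ k, Measurable (m k) := fun k => by
    have h1 : Measurable fun z => h (κ.map z) := hhm.comp κ.continuous_map.measurable
    exact (h1.lintegral_prod_right' (ν := volume.restrict (Ioo 0 (ρ k)))).div_const _
  have hzero : ∫⁻ x in ball κ.center κ.radius, ⨅ k, m k x = 0 := by
    refine le_antisymm (le_of_forall_pos_le_add fun ε hε => ?_) zero_le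
    rw [zero_add]
    obtain ⟨δ₁, hδ₁, hδ⟩ := hΩ.lintegral_collar_small hd hlim' hmax hε.ne'
    obtain ⟨k, hk⟩ := (hρlim.eventually (gt_mem_nhds hδ₁)).exists
    refine (lintegral_mono fun x => iInf_le _ k).trans ?_
    simp only [hm, div_eq_mul_inv]
    rw [lintegral_mul_const' _ _ (by simp [hρ0 k]), ← div_eq_mul_inv]
    refine ENNReal.div_le_of_le_mul ?_
    exact (κ.lintegral_map_le hΩ.1 ((hρℓ k).trans hℓ) hhm).trans (hδ _ (hρ0 k) hk.le)
  rw [lintegral_eq_zero_iff (Measurable.iInf hmm)] at hzero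
  filter_upwards [hzero, ae_restrict_mem isOpen_ball.measurableSet] with x hx0 hx t ht
  rw [Pi.zero_apply] at hx0
  have hmin : min (‖f (κ.map (x, t))‖ₑ - ∫⁻ r in Ioo 0 ℓ, ‖fderiv ℝ f (κ.map (x, r))‖ₑ) 1 ≤
      ⨅ k, m k x := by
    refine le_iInf fun k => ?_
    rw [hm, ENNReal.le_div_iff_mul_le (by simp [hρ0 k]) (by simp)]
    calc _ = ∫⁻ s in Ioo 0 (ρ k),
          min (‖f (κ.map (x, t))‖ₑ - ∫⁻ r in Ioo 0 ℓ, ‖fderiv ℝ f (κ.map (x, r))‖ₑ) 1 := by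
          rw [setLIntegral_const, Real.volume_Ioo, sub_zero]
      _ ≤ _ := by
          refine setLIntegral_mono' measurableSet_Ioo fun s hs => ?_
          have hs' : s ∈ Ioo 0 ℓ := ⟨hs.1, hs.2.trans_le (hρℓ k)⟩
          rw [hh, indicator_of_mem (κ.map_mem_collar hx hs' hℓ).1]
          exact min_le_min_right _ (tsub_le_iff_right.2 (κ.enorm_le_add hΩ.1 hf hℓ hx hs' ht))
  rw [hx0, nonpos_iff_eq_zero, min_eq_iff] at hmin
  exact tsub_eq_zero_iff_le.1 (hmin.resolve_right fun h => one_ne_zero h.1).1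

lemma lintegral_rpow_le_of_Ioo {g : ℝ → ℝ≥0∞} (hg : Measurable g) {p : ℝ} (hp : 1 < p) {ℓ : ℝ} :
    (∫⁻ r in Ioo 0 ℓ, g r) ^ p ≤
      ENNReal.ofReal ℓ ^ (p - 1) * ∫⁻ r in Ioo 0 ℓ, g r ^ p := by
  have hpq := Real.HolderConjugate.conjExponent hp
  have h1 := ENNReal.lintegral_mul_le_Lp_mul_Lq (volume.restrict (Ioo 0 ℓ)) hpq hg.aemeasurable
    (aemeasurable_const (b := (1 : ℝ≥0∞)))
  have h2 := ENNReal.rpow_le_rpow h1 (by linarith : 0 ≤ p)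
  simp only [Pi.mul_apply, mul_one, ENNReal.one_rpow, lintegral_const, one_mul,
    Measure.restrict_apply_univ, Real.volume_Ioo, sub_zero] at h2
  refine h2.trans (le_of_eq ?_)
  rw [ENNReal.mul_rpow_of_nonneg _ _ (by linarith), ← ENNReal.rpow_mul, ← ENNReal.rpow_mul,
    one_div_mul_cancel (by linarith), ENNReal.rpow_one, mul_comm]
  congr 2
  have := hpq.symm.ne_zero
  rw [Real.conjExponent]
  have h3 : p - 1 ≠ 0 := by linarith
  field_simp

/-- Hardy's inequality in a chart. -/
lemma GraphChart.hardy (hd : 1 ≤ d) {Ω : Set (Euc d)} (κ : GraphChart Ω)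
    (hΩ : IsLipschitzDomain Ω) {f : Euc d → ℝ} (hf : ContDiffOn ℝ (⊤ : ℕ∞) f Ω)
    (hlim : ∀ᵐ Q ∂(sMeasure Ω), NTLim Ω f Q 0) {p : ℝ} (hp : 1 < p) {δ : ℝ} (hδ : 0 < δ)
    (hδκ : κ.lip * δ ≤ κ.height) :
    ∫⁻ y in collar Ω δ ∩ κ.cyl, ‖f y‖ₑ ^ p ≤ ENNReal.ofReal (κ.lip * δ) ^ p *
      ∫⁻ y in collar Ω (κ.lip * δ), ‖fderiv ℝ f y‖ₑ ^ p := by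
  set ℓ : ℝ := κ.lip * δ with hℓ
  have hl : (0 : ℝ) < κ.lip := by exact_mod_cast zero_lt_one.trans_le κ.one_le_lip
  have hℓ0 : 0 < ℓ := by positivity
  have hp0 : 0 < p := by linarith
  have hcf : ContinuousOn (fderiv ℝ f) Ω := hf.continuousOn_fderiv_of_isOpen hΩ.1 (by simp)
  set F : Euc d → ℝ≥0∞ := Ω.indicator fun x => ‖f x‖ₑ with hF
  set G : Euc d → ℝ≥0∞ := Ω.indicator fun x => ‖fderiv ℝ f x‖ₑ with hG
  have hFm : Measurable F := measurable_indicator_of_continuousOn hΩ.1 hf.continuousOn.enorm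
  have hGm : Measurable G := measurable_indicator_of_continuousOn hΩ.1 hcf.enorm
  have hGκ : Measurable fun z => G (κ.map z) := hGm.comp κ.continuous_map.measurable
  have hms : MeasurableSet (collar Ω δ ∩ κ.cyl) :=
    (measurableSet_collar hΩ.1 δ).inter κ.isOpen_image.measurableSet
  calc ∫⁻ y in collar Ω δ ∩ κ.cyl, ‖f y‖ₑ ^ p = ∫⁻ y in collar Ω δ ∩ κ.cyl, F y ^ p := by
        refine setLIntegral_congr_fun hms fun y hy => ?_
        simp only [hF, indicator_of_mem hy.1.1]
    _ ≤ ∫⁻ x in ball κ.center κ.radius, ∫⁻ t in Ioo 0 ℓ, F (κ.map (x, t)) ^ p :=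
        κ.lintegral_collar_le hΩ.1 (hFm.pow_const p)
    _ ≤ ∫⁻ x in ball κ.center κ.radius, ENNReal.ofReal ℓ ^ p *
          ∫⁻ t in Ioo 0 ℓ, G (κ.map (x, t)) ^ p := by
        refine lintegral_mono_ae ?_
        filter_upwards [κ.ae_enorm_le hd hΩ hf hlim hℓ0 hδκ,
          ae_restrict_mem isOpen_ball.measurableSet] with x hx hxb
        have hGx : ∫⁻ r in Ioo 0 ℓ, ‖fderiv ℝ f (κ.map (x, r))‖ₑ =
            ∫⁻ r in Ioo 0 ℓ, G (κ.map (x, r)) :=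
          setLIntegral_congr_fun measurableSet_Ioo fun r hr => by
            simp only [hG, indicator_of_mem (κ.map_mem_collar hxb hr hδκ).1]
        calc ∫⁻ t in Ioo 0 ℓ, F (κ.map (x, t)) ^ p
            ≤ ∫⁻ t in Ioo 0 ℓ, (∫⁻ r in Ioo 0 ℓ, G (κ.map (x, r))) ^ p := by
              refine setLIntegral_mono' measurableSet_Ioo fun t ht => ?_
              gcongr
              rw [← hGx]
              exact (indicator_le_self _ _ _).trans (hx t ht)
          _ = (∫⁻ r in Ioo 0 ℓ, G (κ.map (x, r))) ^ p * ENNReal.ofReal ℓ := by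
              rw [setLIntegral_const, Real.volume_Ioo, sub_zero]
          _ ≤ (ENNReal.ofReal ℓ ^ (p - 1) * ∫⁻ r in Ioo 0 ℓ, G (κ.map (x, r)) ^ p) *
                ENNReal.ofReal ℓ := by
              gcongr
              exact lintegral_rpow_le_of_Ioo (hGκ.comp measurable_prodMk_left) hp
          _ = _ := by
              rw [mul_right_comm]
              congr 1
              conv_lhs => rw [← ENNReal.rpow_one (ENNReal.ofReal ℓ), ← ENNReal.rpow_mul, one_mul]
              rw [← ENNReal.rpow_add _ _ (by simp [hℓ0]) (by simp), sub_add_cancel]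
    _ = ENNReal.ofReal ℓ ^ p * ∫⁻ x in ball κ.center κ.radius,
          ∫⁻ t in Ioo 0 ℓ, G (κ.map (x, t)) ^ p :=
        lintegral_const_mul' _ _ (by simp [hp0.le])
    _ ≤ ENNReal.ofReal ℓ ^ p * ∫⁻ y in collar Ω ℓ, G y ^ p := by
        gcongr
        exact κ.lintegral_map_le hΩ.1 hδκ (hGm.pow_const p)
    _ = _ := by
        congr 1
        refine setLIntegral_congr_fun (measurableSet_collar hΩ.1 ℓ) fun y hy => ?_
        simp only [hG, indicator_of_mem hy.1]

lemma collar_mono (Ω : Set (Euc d)) {δ δ' : ℝ} (h : δ ≤ δ') : collar Ω δ ⊆ collar Ω δ' :=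
  fun _ hx => ⟨hx.1, hx.2.trans_le h⟩

/-- Hardy's inequality near the boundary of a Lipschitz domain. -/
lemma IsLipschitzDomain.hardy (hd : 1 ≤ d) {Ω : Set (Euc d)} (hΩ : IsLipschitzDomain Ω) {p : ℝ}
    (hp : 1 < p) : ∃ C : ℝ≥0, ∃ Λ ≥ 1, ∃ δ₀ > 0, ∀ f : Euc d → ℝ, ContDiffOn ℝ (⊤ : ℕ∞) f Ω →
      (∀ᵐ Q ∂(sMeasure Ω), NTLim Ω f Q 0) → ∀ δ, 0 < δ → δ ≤ δ₀ →
      ∫⁻ y in collar Ω δ, ‖f y‖ₑ ^ p ≤ C * ENNReal.ofReal δ ^ p *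
        ∫⁻ y in collar Ω (Λ * δ), ‖fderiv ℝ f y‖ₑ ^ p := by
  obtain ⟨s, δ₀, Λ, hδ₀, hΛ, hs, hcov⟩ := hΩ.exists_charts hd
  have hΛ0 : 0 < Λ := by linarith
  refine ⟨(s.card * Λ ^ p).toNNReal, Λ, hΛ, δ₀ / (2 * Λ), by positivity,
    fun f hf hlim δ hδ hδδ => ?_⟩
  have hδΛ : 2 * (Λ * δ) ≤ δ₀ := by
    rw [le_div_iff₀ (by positivity)] at hδδ
    linarith
  have hδ2 : δ < δ₀ := by nlinarith
  have hsub : collar Ω δ ⊆ ⋃ κ ∈ s, collar Ω δ ∩ κ.cyl := fun x hx => by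
    obtain ⟨κ, hκ, hxκ⟩ := hcov x (hx.2.trans hδ2)
    exact mem_biUnion hκ ⟨hx, hxκ⟩
  have hone : ∀ κ ∈ s, ∫⁻ y in collar Ω δ ∩ κ.cyl, ‖f y‖ₑ ^ p ≤ ENNReal.ofReal (Λ * δ) ^ p *
      ∫⁻ y in collar Ω (Λ * δ), ‖fderiv ℝ f y‖ₑ ^ p := fun κ hκ => by
    obtain ⟨-, h2, h3⟩ := hs κ hκ
    have h4 : κ.lip * δ ≤ Λ * δ := by gcongr
    refine (κ.hardy hd hΩ hf hlim hp hδ (by nlinarith)).trans ?_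
    gcongr
    exact collar_mono Ω h4
  calc ∫⁻ y in collar Ω δ, ‖f y‖ₑ ^ p ≤ ∫⁻ y in ⋃ κ ∈ s, collar Ω δ ∩ κ.cyl, ‖f y‖ₑ ^ p :=
        lintegral_mono_set hsub
    _ ≤ ∑ κ ∈ s, ∫⁻ y in collar Ω δ ∩ κ.cyl, ‖f y‖ₑ ^ p := by
        rw [← Finset.tsum_subtype s fun κ => ∫⁻ y in collar Ω δ ∩ κ.cyl, ‖f y‖ₑ ^ p,
          ← iUnion_subtype (· ∈ s) fun κ => collar Ω δ ∩ GraphChart.cyl κ.1]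
        exact lintegral_iUnion_le _ _
    _ ≤ ∑ κ ∈ s, ENNReal.ofReal (Λ * δ) ^ p *
          ∫⁻ y in collar Ω (Λ * δ), ‖fderiv ℝ f y‖ₑ ^ p := Finset.sum_le_sum hone
    _ = _ := by
        rw [Finset.sum_const, nsmul_eq_mul, ← mul_assoc, ENNReal.ofNNReal_toNNReal]
        congr 1
        rw [ENNReal.ofReal_mul hΛ0.le, ENNReal.mul_rpow_of_nonneg _ _ (by linarith),
          ENNReal.ofReal_mul (by positivity), ENNReal.ofReal_rpow_of_pos hΛ0, ENNReal.ofReal_natCast]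
        ring

lemma ball_subset_of_le_infDist {Ω : Set (Euc d)} (hΩ : IsOpen Ω) {x : Euc d} (hx : x ∈ Ω)
    {r : ℝ} (hr : r ≤ infDist x (frontier Ω)) : ball x r ⊆ Ω := by
  intro y hy
  have hr0 : 0 < r := pos_of_mem_ball hy
  by_contra hyΩ
  have hpre : IsPreconnected (ball x r) := (convex_ball x r).isPreconnected
  have hsub : ball x r ⊆ Ω ∪ (closure Ω)ᶜ := by
    intro z hz
    by_contra h
    simp only [mem_union, mem_compl_iff, not_or, not_not] at h
    have hzf : z ∈ frontier Ω := by rw [hΩ.frontier_eq]; exact ⟨h.2, h.1⟩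
    have := infDist_le_dist_of_mem (x := x) hzf
    rw [mem_ball, dist_comm] at hz
    linarith
  have hyc : y ∈ (closure Ω)ᶜ := (hsub hy).resolve_left hyΩ
  obtain ⟨z, -, hz1, hz2⟩ := hpre Ω (closure Ω)ᶜ hΩ isClosed_closure.isOpen_compl hsub
    ⟨x, mem_ball_self hr0, hx⟩ ⟨y, hy, hyc⟩
  exact hz2 (subset_closure hz1)

/-- The points of `Ω` at distance at least `δ` from the boundary. -/
def core (Ω : Set (Euc d)) (δ : ℝ) : Set (Euc d) := {x | x ∈ Ω ∧ δ ≤ infDist x (frontier Ω)}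

lemma core_subset (Ω : Set (Euc d)) (δ : ℝ) : core Ω δ ⊆ Ω := fun _ hx => hx.1

lemma core_anti (Ω : Set (Euc d)) {δ δ' : ℝ} (h : δ ≤ δ') : core Ω δ' ⊆ core Ω δ :=
  fun _ hx => ⟨hx.1, h.trans hx.2⟩

lemma isClosed_core {Ω : Set (Euc d)} (hΩ : IsOpen Ω) {δ : ℝ} (hδ : 0 < δ) :
    IsClosed (core Ω δ) := by
  have : core Ω δ = closure Ω ∩ {x | δ ≤ infDist x (frontier Ω)} := by
    ext x
    refine ⟨fun h => ⟨subset_closure h.1, h.2⟩, fun h => ⟨?_, h.2⟩⟩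
    by_contra hx
    have hxf : x ∈ frontier Ω := by rw [hΩ.frontier_eq]; exact ⟨h.1, hx⟩
    have h2 : δ ≤ infDist x (frontier Ω) := h.2
    rw [infDist_zero_of_mem hxf] at h2
    linarith
  rw [this]
  exact isClosed_closure.inter (isClosed_le continuous_const (continuous_infDist_pt _))

lemma isCompact_core {Ω : Set (Euc d)} (hΩ : IsOpen Ω) (hb : Bornology.IsBounded Ω) {δ : ℝ}
    (hδ : 0 < δ) : IsCompact (core Ω δ) :=
  isCompact_of_isClosed_isBounded (isClosed_core hΩ hδ) (hb.subset (core_subset Ω δ))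

lemma mem_core_of_dist {Ω : Set (Euc d)} (hΩ : IsOpen Ω) {x y : Euc d} {δ r : ℝ}
    (hx : x ∈ core Ω (δ + r)) (hδ : 0 ≤ δ) (hy : dist y x < r) : y ∈ core Ω δ := by
  have h2 : δ + r ≤ infDist x (frontier Ω) := hx.2
  refine ⟨ball_subset_of_le_infDist hΩ hx.1 (r := r) (by linarith) hy, ?_⟩
  have := infDist_le_infDist_add_dist (s := frontier Ω) (x := x) (y := y)
  rw [dist_comm] at this
  linarith

lemma pder_comp_smul (f : Euc d → ℝ) (a : ℝ) (i : Fin d) :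
    pder i (fun x => f (a • x)) = fun x => a * pder i f (a • x) := by
  ext x
  simp only [pder]
  rw [fderiv_comp_smul]
  simp

lemma pder_const_mul {f : Euc d → ℝ} (hf : Differentiable ℝ f) (a : ℝ) (i : Fin d) :
    pder i (fun x => a * f x) = fun x => a * pder i f x := by
  ext x
  simp only [pder]
  rw [fderiv_const_mul (hf x)]
  simp

/-- The convolution of the indicator function of `S` with `g`. -/
def indConv (S : Set (Euc d)) (g : Euc d → ℝ) (x : Euc d) : ℝ :=
  ∫ t, S.indicator (fun _ => (1 : ℝ)) t * g (x - t)

lemma indConv_eq_convolution (S : Set (Euc d)) (g : Euc d → ℝ) :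
    indConv S g = convolution (S.indicator (fun _ => (1 : ℝ))) g
      (ContinuousLinearMap.lsmul ℝ ℝ) volume := by
  ext x
  rw [convolution_lsmul]
  rfl

lemma locallyIntegrable_indicator_one {S : Set (Euc d)} (hS : MeasurableSet S) :
    LocallyIntegrable (S.indicator (fun _ => (1 : ℝ))) (volume : Measure (Euc d)) :=
  (locallyIntegrable_const (1 : ℝ)).indicator hS

lemma indConv_smooth {S : Set (Euc d)} (hS : MeasurableSet S) {g : Euc d → ℝ}
    (hg : ContDiff ℝ (⊤ : ℕ∞) g) (hc : HasCompactSupport g) :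
    ContDiff ℝ (⊤ : ℕ∞) (indConv S g) := by
  rw [indConv_eq_convolution]
  exact hc.contDiff_convolution_right _ (locallyIntegrable_indicator_one hS) hg

lemma pder_indConv {S : Set (Euc d)} (hS : MeasurableSet S) {g : Euc d → ℝ}
    (hg : ContDiff ℝ (⊤ : ℕ∞) g) (hc : HasCompactSupport g) (i : Fin d) :
    pder i (indConv S g) = indConv S (pder i g) := by
  ext x
  rw [indConv_eq_convolution, indConv_eq_convolution]
  have h := hc.hasFDerivAt_convolution_right (ContinuousLinearMap.lsmul ℝ ℝ)
    (locallyIntegrable_indicator_one hS) (hg.of_le (by simp)) x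
  simp only [pder]
  rw [h.fderiv, convolution_precompR_apply _ (locallyIntegrable_indicator_one hS)
    (hc.fderiv ℝ) (hg.continuous_fderiv (by simp))]
  rfl

lemma abs_indConv_le {S : Set (Euc d)} {g : Euc d → ℝ}
    (hg : Continuous g) (hc : HasCompactSupport g) (x : Euc d) :
    |indConv S g x| ≤ ∫ t, |g t| := by
  rw [← integral_sub_left_eq_self (fun t => |g t|) volume x, indConv]
  have hi : Integrable (fun t => |g (x - t)|) :=
    ((hg.integrable_of_hasCompactSupport hc).abs).comp_sub_left x
  refine (abs_integral_le_integral_abs).trans (integral_mono_of_nonneg ?_ hi ?_)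
  · exact Eventually.of_forall fun t => abs_nonneg _
  · refine Eventually.of_forall fun t => ?_
    by_cases ht : t ∈ S <;> simp [ht]

lemma exists_bound_fin {ι : Type*} [Finite ι] (f : ι → ℝ) : ∃ C, 0 ≤ C ∧ ∀ i, f i ≤ C := by
  obtain ⟨C, hC⟩ := (Set.finite_range f).bddAbove
  exact ⟨max C 0, le_max_right _ _, fun i => (hC ⟨i, rfl⟩).trans (le_max_left _ _)⟩

/-- Mollified indicator functions: the derivatives of order `k ≤ 3` are `O(δ^{-k})`. -/
lemma exists_mollified_indicator (d : ℕ) : ∃ C : ℝ, 0 ≤ C ∧ ∀ (S : Set (Euc d)), MeasurableSet S →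
    ∀ δ, 0 < δ → ∃ φ : Euc d → ℝ, ContDiff ℝ (⊤ : ℕ∞) φ ∧
      (∀ x, Disjoint (ball x δ) S → φ x = 0) ∧ (∀ x, ball x δ ⊆ S → φ x = 1) ∧
      (∀ i x, |pder i φ x| ≤ C * δ⁻¹) ∧ (∀ i j x, |pder i (pder j φ) x| ≤ C * δ⁻¹ ^ 2) ∧
      ∀ i j k x, |pder i (pder j (pder k φ)) x| ≤ C * δ⁻¹ ^ 3 := by
  let b : ContDiffBump (0 : Euc d) := ⟨1 / 2, 1, by norm_num, by norm_num⟩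
  let ρ : Euc d → ℝ := b.normed volume
  have hρ : ContDiff ℝ (⊤ : ℕ∞) ρ := b.contDiff_normed
  have hρc : HasCompactSupport ρ := b.hasCompactSupport_normed
  obtain ⟨C₁, hC₁, h₁⟩ := exists_bound_fin fun i : Fin d => ∫ t, |pder i ρ t|
  obtain ⟨C₂, hC₂, h₂⟩ := exists_bound_fin fun i : Fin d × Fin d =>
    ∫ t, |pder i.1 (pder i.2 ρ) t|
  obtain ⟨C₃, hC₃, h₃⟩ := exists_bound_fin fun i : Fin d × Fin d × Fin d =>
    ∫ t, |pder i.1 (pder i.2.1 (pder i.2.2 ρ)) t|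
  refine ⟨C₁ + C₂ + C₃, by positivity, fun S hS δ hδ => ?_⟩
  let T : Set (Euc d) := (fun x => δ • x) ⁻¹' S
  have hT : MeasurableSet T := (measurable_const_smul δ) hS
  have hs1 := pder_smooth hρ
  have hs2 := fun i j => pder_smooth (hs1 j) i
  have hs3 := fun i j k => pder_smooth (hs2 j k) i
  have hc1 := pder_hasCompactSupport hρc
  have hc2 := fun i j => pder_hasCompactSupport (hc1 j) i
  have hc3 := fun i j k => pder_hasCompactSupport (hc2 j k) i
  have e1 : ∀ i, pder i (fun x => indConv T ρ (δ⁻¹ • x)) =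
      fun x => δ⁻¹ * indConv T (pder i ρ) (δ⁻¹ • x) := by
    intro i
    rw [pder_comp_smul, pder_indConv hT hρ hρc]
  have e2 : ∀ i j, pder i (pder j (fun x => indConv T ρ (δ⁻¹ • x))) =
      fun x => δ⁻¹ ^ 2 * indConv T (pder i (pder j ρ)) (δ⁻¹ • x) := by
    intro i j
    rw [e1, pder_const_mul, pder_comp_smul, pder_indConv hT (hs1 j) (hc1 j)]
    · ext x; ring
    · exact (differentiable_of_smooth (indConv_smooth hT (hs1 j) (hc1 j))).comp
        (differentiable_id.const_smul δ⁻¹)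
  have e3 : ∀ i j k, pder i (pder j (pder k (fun x => indConv T ρ (δ⁻¹ • x)))) =
      fun x => δ⁻¹ ^ 3 * indConv T (pder i (pder j (pder k ρ))) (δ⁻¹ • x) := by
    intro i j k
    rw [e2, pder_const_mul, pder_comp_smul, pder_indConv hT (hs2 j k) (hc2 j k)]
    · ext x; ring
    · exact (differentiable_of_smooth (indConv_smooth hT (hs2 j k) (hc2 j k))).comp
        (differentiable_id.const_smul δ⁻¹)
  have key : ∀ (t : ℝ) (x : Euc d), 0 ≤ t → ∀ g : Euc d → ℝ, ContDiff ℝ (⊤ : ℕ∞) g →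
      HasCompactSupport g → ∀ D, ∫ t, |g t| ≤ D → |t * indConv T g x| ≤ D * t := by
    intro t x ht g hg hc D hD
    rw [abs_mul, abs_of_nonneg ht, mul_comm]
    exact mul_le_mul_of_nonneg_right ((abs_indConv_le hg.continuous hc x).trans hD) ht
  have hδi : 0 ≤ δ⁻¹ := by positivity
  have hρ0 : ∀ y, 1 ≤ ‖y‖ → ρ y = 0 := by
    intro y hy
    by_contra h
    have : y ∈ Function.support ρ := h
    rw [b.support_normed_eq, mem_ball_zero_iff] at this
    exact absurd hy (not_le.2 this)
  have hmem : ∀ x t : Euc d, ‖δ⁻¹ • x - t‖ < 1 → δ • t ∈ ball x δ := by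
    intro x t h
    rw [mem_ball, dist_eq_norm, norm_sub_rev]
    have : x - δ • t = δ • (δ⁻¹ • x - t) := by
      rw [smul_sub, smul_inv_smul₀ hδ.ne']
    rw [this, norm_smul, Real.norm_of_nonneg hδ.le]
    nlinarith
  refine ⟨fun x => indConv T ρ (δ⁻¹ • x),
    (indConv_smooth hT hρ hρc).comp (contDiff_id.const_smul δ⁻¹), ?_, ?_, ?_, ?_, ?_⟩
  · intro x hx
    refine integral_eq_zero_of_ae (Eventually.of_forall fun t => ?_)
    by_cases ht : ‖δ⁻¹ • x - t‖ < 1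
    · have : t ∉ T := fun h => disjoint_left.1 hx (hmem x t ht) h
      simp [this]
    · simp [hρ0 _ (not_lt.1 ht)]
  · intro x hx
    have : ∫ t, ρ (δ⁻¹ • x - t) = 1 := by
      rw [integral_sub_left_eq_self ρ volume]
      exact b.integral_normed
    rw [← this]
    refine integral_congr_ae (Eventually.of_forall fun t => ?_)
    by_cases ht : ‖δ⁻¹ • x - t‖ < 1
    · have : t ∈ T := hx (hmem x t ht)
      simp [this]
    · simp [hρ0 _ (not_lt.1 ht)]
  · intro i x
    rw [e1]
    exact key _ _ hδi _ (hs1 i) (hc1 i) _ ((h₁ i).trans (by linarith))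
  · intro i j x
    rw [e2]
    exact key _ _ (by positivity) _ (hs2 i j) (hc2 i j) _ ((h₂ (i, j)).trans (by linarith))
  · intro i j k x
    rw [e3]
    exact key _ _ (by positivity) _ (hs3 i j k) (hc3 i j k) _
      ((h₃ (i, j, k)).trans (by linarith))

/-- Cutoff functions adapted to the boundary. -/
lemma exists_cutoff {Ω : Set (Euc d)} (hΩ : IsOpen Ω) : ∃ C : ℝ, 0 ≤ C ∧ ∀ δ, 0 < δ →
    ∃ φ : Euc d → ℝ, ContDiff ℝ (⊤ : ℕ∞) φ ∧
      (∀ x, x ∉ core Ω δ → φ x = 0) ∧ (∀ x ∈ core Ω (3 * δ), φ x = 1) ∧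
      (∀ i x, |pder i φ x| ≤ C * δ⁻¹) ∧ (∀ i j x, |pder i (pder j φ) x| ≤ C * δ⁻¹ ^ 2) ∧
      ∀ i j k x, |pder i (pder j (pder k φ)) x| ≤ C * δ⁻¹ ^ 3 := by
  obtain ⟨C, hC, h⟩ := exists_mollified_indicator d
  refine ⟨C, hC, fun δ hδ => ?_⟩
  obtain ⟨φ, hφ, h0, h1, hb⟩ := h (core Ω (2 * δ)) (isClosed_core hΩ (by linarith)).measurableSet
    δ hδ
  refine ⟨φ, hφ, fun x hx => h0 x ?_, fun x hx => h1 x ?_, hb⟩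
  · rw [disjoint_left]
    intro y hy hyc
    refine hx (mem_core_of_dist hΩ (r := δ) (x := y) ?_ hδ.le ?_)
    · rwa [← two_mul]
    · rwa [mem_ball, dist_comm] at hy
  · intro y hy
    refine mem_core_of_dist hΩ (r := δ) (x := x) ?_ (by linarith) hy
    rwa [show 2 * δ + δ = 3 * δ by ring]

lemma exists_smooth_extension {Ω : Set (Euc d)} (hΩ : IsOpen Ω) {δ : ℝ} (hδ : 0 < δ)
    {u : Euc d → ℝ} (hu : ContDiffOn ℝ (⊤ : ℕ∞) u Ω) :
    ∃ v : Euc d → ℝ, ContDiff ℝ (⊤ : ℕ∞) v ∧ EqOn v u (core Ω δ) := by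
  obtain ⟨C, -, h⟩ := exists_cutoff hΩ
  obtain ⟨χ, hχ, h0, h1, -⟩ := h (δ / 3) (by positivity)
  refine ⟨fun x => χ x * u x, contDiff_iff_contDiffAt.2 fun x => ?_, fun x hx => ?_⟩
  · by_cases hx : x ∈ Ω
    · exact hχ.contDiffAt.mul (hu.contDiffAt (hΩ.mem_nhds hx))
    · have hxc : (core Ω (δ / 3))ᶜ ∈ 𝓝 x :=
        (isClosed_core hΩ (by positivity)).isOpen_compl.mem_nhds fun h => hx h.1
      refine (contDiffAt_const (c := (0 : ℝ))).congr_of_eventuallyEq ?_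
      filter_upwards [hxc] with y hy
      rw [h0 y hy, zero_mul]
  · have := h1 x (by rwa [mul_div_cancel₀ _ (three_ne_zero)])
    simp [this]

lemma pder_const_fun (a : ℝ) (i : Fin d) : pder i (fun _ : Euc d => a) = fun _ => 0 := by
  ext x
  simp [pder]

lemma lap_const_fun (a : ℝ) : lap (fun _ : Euc d => a) = fun _ => 0 := by
  ext x
  simp [lap, pder_const_fun]

lemma greenDensity_eqOn {u w v z φ : Euc d → ℝ} {O : Set (Euc d)} (hO : IsOpen O)
    (hu : EqOn u v O) (hw : EqOn w z O) :
    EqOn (greenDensity u w φ) (greenDensity v z φ) O := by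
  intro x hx
  simp only [greenDensity, lap_eqOn hO hu hx, hw hx, hu hx, fun i => pder_eqOn hO hw i hx,
    fun i => pder_eqOn hO hu i hx, fun i j => pder_eqOn hO (pder_eqOn hO hu j) i hx]

lemma greenDensity_eq_zero {u w φ : Euc d → ℝ} {O : Set (Euc d)} (hO : IsOpen O) {a : ℝ}
    (hφ : EqOn φ (fun _ => a) O) {x : Euc d} (hx : x ∈ O) : greenDensity u w φ x = 0 := by
  have h1 : ∀ i, pder i φ x = 0 := fun i => by
    rw [pder_eqOn hO hφ i hx, pder_const_fun]
  have h2 : ∀ i j, pder i (pder j φ) x = 0 := fun i j => by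
    rw [pder_eqOn hO (pder_eqOn hO hφ j) i hx, pder_const_fun, pder_const_fun]
  have h3 : lap φ x = 0 := by
    rw [lap_eqOn hO hφ hx, lap_const_fun]
  have h4 : ∀ i, pder i (lap φ) x = 0 := fun i => by
    rw [pder_eqOn hO (lap_eqOn hO hφ) i hx, lap_const_fun, pder_const_fun]
  simp [greenDensity, h1, h2, h3, h4]

/-- Green's identity for functions that are only smooth in `Ω`. -/
lemma green_identity_on {Ω : Set (Euc d)} (hΩ : IsOpen Ω) (hb : Bornology.IsBounded Ω)
    {u w φ : Euc d → ℝ} (hu : ContDiffOn ℝ (⊤ : ℕ∞) u Ω) (hw : ContDiffOn ℝ (⊤ : ℕ∞) w Ω)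
    (hφ : ContDiff ℝ (⊤ : ℕ∞) φ) {δ : ℝ} (hδ : 0 < δ) (hc : ∀ x, x ∉ core Ω δ → φ x = 0) :
    ∫ x, φ x * (u x * bilap w x - w x * bilap u x) = - ∫ x, greenDensity u w φ x := by
  obtain ⟨v, hv, hvu⟩ := exists_smooth_extension hΩ (half_pos hδ) hu
  obtain ⟨z, hz, hzw⟩ := exists_smooth_extension hΩ (half_pos hδ) hw
  have hcs : HasCompactSupport φ :=
    HasCompactSupport.intro (isCompact_core hΩ hb hδ) hc
  let O : Set (Euc d) := {x | x ∈ Ω ∧ δ / 2 < infDist x (frontier Ω)}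
  have hO : IsOpen O :=
    hΩ.inter (isOpen_lt continuous_const (continuous_infDist_pt _))
  have hOc : O ⊆ core Ω (δ / 2) := fun x hx => ⟨hx.1, hx.2.le⟩
  have hcO : ∀ x, x ∉ O → x ∉ core Ω δ := fun x hx h =>
    hx ⟨h.1, (half_lt_self hδ).trans_le h.2⟩
  have hvO := hvu.mono hOc
  have hzO := hzw.mono hOc
  have e1 : ∀ x, φ x * (u x * bilap w x - w x * bilap u x) =
      φ x * (v x * bilap z x - z x * bilap v x) := by
    intro x
    by_cases hx : x ∈ O
    · rw [hvO hx, hzO hx, bilap_eqOn hO hvO hx, bilap_eqOn hO hzO hx]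
    · rw [hc x (hcO x hx), zero_mul, zero_mul]
  have e2 : ∀ x, greenDensity u w φ x = greenDensity v z φ x := by
    intro x
    by_cases hx : x ∈ O
    · exact (greenDensity_eqOn hO hvO hzO hx).symm
    · have hop : IsOpen (core Ω δ)ᶜ := (isClosed_core hΩ hδ).isOpen_compl
      rw [greenDensity_eq_zero hop (a := 0) (fun y hy => hc y hy) (hcO x hx),
        greenDensity_eq_zero hop (a := 0) (fun y hy => hc y hy) (hcO x hx)]
  simp only [e1, e2]
  exact green_identity hv hz hφ hcs

lemma abs_pder_le (f : Euc d → ℝ) (i : Fin d) (x : Euc d) : |pder i f x| ≤ ‖fderiv ℝ f x‖ := by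
  have := (fderiv ℝ f x).le_opNorm (EuclideanSpace.single i 1)
  simpa [pder] using this

lemma abs_pder_le_gnorm1 (f : Euc d → ℝ) (i : Fin d) (x : Euc d) :
    |pder i f x| ≤ gnorm1 f x := by
  rw [← Real.sqrt_sq_eq_abs]
  exact Real.sqrt_le_sqrt (Finset.single_le_sum (f := fun i => pder i f x ^ 2)
    (fun i _ => sq_nonneg _) (Finset.mem_univ i))

lemma gnorm1_pder_le_gnorm2 (u : Euc d → ℝ) (j : Fin d) (x : Euc d) :
    gnorm1 (pder j u) x ≤ gnorm2 u x := by
  refine Real.sqrt_le_sqrt (Finset.sum_le_sum fun i _ => ?_)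
  exact Finset.single_le_sum (f := fun j => pder i (pder j u) x ^ 2)
    (fun i _ => sq_nonneg _) (Finset.mem_univ j)

lemma fderiv_apply_eq_sum (f : Euc d → ℝ) (x v : Euc d) :
    fderiv ℝ f x v = ∑ i, v i * pder i f x := by
  conv_lhs => rw [← (EuclideanSpace.basisFun (Fin d) ℝ).sum_repr v, map_sum]
  simp [pder]

lemma norm_fderiv_le_gnorm1 (f : Euc d → ℝ) (x : Euc d) : ‖fderiv ℝ f x‖ ≤ gnorm1 f x := by
  refine ContinuousLinearMap.opNorm_le_bound _ (Real.sqrt_nonneg _) fun v => ?_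
  rw [fderiv_apply_eq_sum, Real.norm_eq_abs, EuclideanSpace.norm_eq, gnorm1, mul_comm]
  simp only [Real.norm_eq_abs, sq_abs]
  rw [← Real.sqrt_mul (by positivity)]
  exact Real.abs_le_sqrt (Finset.sum_mul_sq_le_sq_mul_sq _ _ _)

lemma norm_fderiv_le_sum (f : Euc d → ℝ) (x : Euc d) : ‖fderiv ℝ f x‖ ≤ ∑ i, |pder i f x| := by
  refine ContinuousLinearMap.opNorm_le_bound _ (by positivity) fun v => ?_
  rw [fderiv_apply_eq_sum, Finset.sum_mul]
  refine (norm_sum_le _ _).trans (Finset.sum_le_sum fun i _ => ?_)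
  rw [norm_mul, mul_comm, Real.norm_eq_abs (pder i f x)]
  exact mul_le_mul_of_nonneg_left (PiLp.norm_apply_le v i) (abs_nonneg _)

lemma sum_abs_le_card_mul {f : Fin d → ℝ} {B : ℝ} (h : ∀ i, |f i| ≤ B) :
    |∑ i, f i| ≤ d * B := by
  refine (Finset.abs_sum_le_sum_abs _ _).trans ((Finset.sum_le_sum fun i _ => h i).trans ?_)
  simp

/-- Pointwise bound for the Green density in terms of a cutoff function at scale `r`. -/
lemma abs_greenDensity_le {u w φ : Euc d → ℝ} (hφ : ContDiff ℝ (⊤ : ℕ∞) φ) {C s : ℝ} (hC : 0 ≤ C)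
    (hs : 0 ≤ s) (h1 : ∀ i x, |pder i φ x| ≤ C * s)
    (h2 : ∀ i j x, |pder i (pder j φ) x| ≤ C * s ^ 2)
    (h3 : ∀ i j k x, |pder i (pder j (pder k φ)) x| ≤ C * s ^ 3) (x : Euc d) :
    |greenDensity u w φ x| ≤ 4 * d ^ 2 * C * s * ((‖fderiv ℝ w x‖ + s * ‖w x‖) *
      (gnorm2 u x + (s * ‖fderiv ℝ u x‖ + s ^ 2 * ‖u x‖))) := by
  have hU2 : 0 ≤ gnorm2 u x := Real.sqrt_nonneg _
  have hW1 := norm_nonneg (fderiv ℝ w x)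
  have hU1 := norm_nonneg (fderiv ℝ u x)
  have hu2 : ∀ i j, |pder i (pder j u) x| ≤ gnorm2 u x := fun i j =>
    (abs_pder_le_gnorm1 _ _ _).trans (gnorm1_pder_le_gnorm2 _ _ _)
  have hlu : |lap u x| ≤ d * gnorm2 u x := sum_abs_le_card_mul fun i => hu2 i i
  have hlφ : |lap φ x| ≤ d * (C * s ^ 2) := sum_abs_le_card_mul fun i => h2 i i x
  have hlφ' : ∀ i, |pder i (lap φ) x| ≤ d * (C * s ^ 3) := fun i => by
    have : pder i (lap φ) x = ∑ j, pder i (pder j (pder j φ)) x :=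
      pder_sum _ (fun j => differentiable_of_smooth (pder_smooth (pder_smooth hφ j) j)) i x
    rw [this]
    exact sum_abs_le_card_mul fun j => h3 i j j x
  have mul_le : ∀ {a b A B : ℝ}, |a| ≤ A → |b| ≤ B → |a * b| ≤ A * B := fun ha hb => by
    rw [abs_mul]
    exact mul_le_mul ha hb (abs_nonneg _) ((abs_nonneg _).trans ha)
  have add_le : ∀ {a b A B : ℝ}, |a| ≤ A → |b| ≤ B → |a + b| ≤ A + B := fun ha hb =>
    (abs_add_le _ _).trans (add_le_add ha hb)
  have h2' : |(2 : ℝ)| ≤ 2 := by norm_num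
  have t := add_le
    (mul_le hlu (add_le (mul_le h2' (sum_abs_le_card_mul fun i =>
      mul_le (abs_pder_le w i x) (h1 i x))) (mul_le (le_refl |w x|) hlφ)))
    (sum_abs_le_card_mul fun i => mul_le (abs_pder_le w i x) (add_le (add_le
      (mul_le h2' (sum_abs_le_card_mul fun j => add_le (mul_le (hu2 i j) (h1 j x))
        (mul_le (abs_pder_le u j x) (h2 i j x)))) (mul_le (abs_pder_le u i x) hlφ))
      (mul_le (le_refl |u x|) (hlφ' i))))
  refine t.trans ?_
  rw [Real.norm_eq_abs, Real.norm_eq_abs]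
  set W1 := ‖fderiv ℝ w x‖
  set U1 := ‖fderiv ℝ u x‖
  set U2 := gnorm2 u x
  have hu0 := abs_nonneg (u x)
  have hw0 := abs_nonneg (w x)
  have hd0 : (0 : ℝ) ≤ d := Nat.cast_nonneg d
  rw [← sub_nonneg]
  have : 4 * d ^ 2 * C * s * ((W1 + s * |w x|) * (U2 + (s * U1 + s ^ 2 * |u x|))) -
      (d * U2 * (2 * (d * (W1 * (C * s))) + |w x| * (d * (C * s ^ 2))) +
        d * (W1 * (2 * (d * (U2 * (C * s) + U1 * (C * s ^ 2))) + U1 * (d * (C * s ^ 2)) +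
          |u x| * (d * (C * s ^ 3))))) =
      d ^ 2 * C * (3 * s ^ 2 * |w x| * U2 + 4 * s ^ 2 * |w x| * (s * U1 + s ^ 2 * |u x|) +
        s ^ 2 * W1 * U1 + 3 * s ^ 3 * W1 * |u x|) := by ring
  rw [this]
  positivity

lemma lintegral_add_rpow_le {α : Type*} [MeasurableSpace α] {μ : Measure α} {f g : α → ℝ≥0∞}
    (hf : AEMeasurable f μ) {p : ℝ} (hp : 1 ≤ p) :
    ∫⁻ x, (f x + g x) ^ p ∂μ ≤ 2 ^ (p - 1) * (∫⁻ x, f x ^ p ∂μ + ∫⁻ x, g x ^ p ∂μ) := by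
  rw [← lintegral_add_left' (hf.pow_const p), ← lintegral_const_mul' _ _ (by simp)]
  exact lintegral_mono fun x => ENNReal.rpow_add_le_mul_rpow_add_rpow _ _ hp

lemma ofReal_inv_mul_ofReal {r : ℝ} (hr : 0 < r) :
    ENNReal.ofReal r⁻¹ * ENNReal.ofReal r = 1 := by
  rw [← ENNReal.ofReal_mul (by positivity), inv_mul_cancel₀ hr.ne', ENNReal.ofReal_one]

lemma lintegral_const_mul_rpow {α : Type*} [MeasurableSpace α] {μ : Measure α} (f : α → ℝ≥0∞)
    {c : ℝ≥0∞} (hc : c ≠ ∞) {p : ℝ} (hp : 0 ≤ p) :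
    ∫⁻ x, (c * f x) ^ p ∂μ = c ^ p * ∫⁻ x, f x ^ p ∂μ := by
  simp only [ENNReal.mul_rpow_of_nonneg _ _ hp]
  exact lintegral_const_mul' _ _ (ENNReal.rpow_ne_top_of_nonneg hp hc)

/-- Hardy's inequality in scale-invariant form. -/
lemma IsLipschitzDomain.hardy_scaled (hd : 1 ≤ d) {Ω : Set (Euc d)} (hΩ : IsLipschitzDomain Ω)
    {p : ℝ} (hp : 1 < p) : ∃ C : ℝ≥0, ∃ Λ ≥ 1, ∃ δ₀ > 0, ∀ f : Euc d → ℝ,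
      ContDiffOn ℝ (⊤ : ℕ∞) f Ω → (∀ᵐ Q ∂(sMeasure Ω), NTLim Ω f Q 0) → ∀ r, 0 < r → r ≤ δ₀ →
      ∫⁻ y in collar Ω r, (ENNReal.ofReal r⁻¹ * ‖f y‖ₑ) ^ p ≤ C *
        ∫⁻ y in collar Ω (Λ * r), ‖fderiv ℝ f y‖ₑ ^ p := by
  obtain ⟨C, Λ, hΛ, δ₀, hδ₀, h⟩ := hΩ.hardy hd hp
  refine ⟨C, Λ, hΛ, δ₀, hδ₀, fun f hf hlim r hr hrδ => ?_⟩
  rw [lintegral_const_mul_rpow _ ENNReal.ofReal_ne_top (by linarith)]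
  refine (mul_le_mul_right (h f hf hlim r hr hrδ) _).trans_eq ?_
  rw [← mul_assoc, mul_left_comm, ← ENNReal.mul_rpow_of_nonneg _ _ (by linarith),
    ofReal_inv_mul_ofReal hr, ENNReal.one_rpow, mul_one]

lemma lintegral_ntMax_rpow_ne_top {Ω : Set (Euc d)} {w : Euc d → ℝ} {p : ℝ} (hp : 0 < p)
    (h : ntMaxLp Ω w p < ⊤) : ∫⁻ Q, ntMax Ω w Q ^ p ∂(sMeasure Ω) ≠ ∞ := by
  intro htop
  rw [ntMaxLp, htop, ENNReal.top_rpow_of_pos (by positivity)] at h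
  exact lt_irrefl _ h

lemma iSup_enorm_rpow_le {Ω : Set (Euc d)} (w : Euc d → ℝ) {p : ℝ} (hp : 0 ≤ p) (Q : Euc d) :
    ⨆ x ∈ ntCone Ω Q, ‖w x‖ₑ ^ p ≤ ntMax Ω w Q ^ p := by
  refine iSup₂_le fun x hx => ENNReal.rpow_le_rpow ?_ hp
  exact le_iSup₂ (f := fun x (_ : x ∈ ntCone Ω Q) => (‖w x‖₊ : ℝ≥0∞)) x hx

lemma IsLipschitzDomain.lintegral_collar_rpow_le (hd : 1 ≤ d) {Ω : Set (Euc d)}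
    (hΩ : IsLipschitzDomain Ω) {w : Euc d → ℝ} {p : ℝ} (hp : 0 < p) (hw : ntMaxLp Ω w p < ⊤) :
    ∃ M : ℝ≥0, ∃ δ₀ > 0, ∀ r, 0 < r → r ≤ δ₀ →
      ∫⁻ x in collar Ω r, ‖w x‖ₑ ^ p ≤ M * ENNReal.ofReal r := by
  obtain ⟨C, δ₀, hδ₀, h⟩ := hΩ.lintegral_collar_le hd
  have hfin := lintegral_ntMax_rpow_ne_top hp hw
  refine ⟨C * (∫⁻ Q, ntMax Ω w Q ^ p ∂(sMeasure Ω)).toNNReal, δ₀, hδ₀, fun r hr hrδ => ?_⟩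
  refine (h r hr hrδ _).trans ?_
  rw [ENNReal.coe_mul, ENNReal.coe_toNNReal hfin, mul_right_comm]
  gcongr with Q
  refine le_trans ?_ (iSup_enorm_rpow_le w hp.le Q)
  exact biSup_mono fun x hx => hx.1

lemma aemeasurable_collar {Ω : Set (Euc d)} (hΩ : IsOpen Ω) {Y : Type*} [TopologicalSpace Y]
    [MeasurableSpace Y] [BorelSpace Y] [TopologicalSpace.PseudoMetrizableSpace Y]
    {f : Euc d → Y}
    (hf : ContinuousOn f Ω) (r : ℝ) : AEMeasurable f (volume.restrict (collar Ω r)) :=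
  (hf.aemeasurable hΩ.measurableSet).mono_measure
    (Measure.restrict_mono (fun _ hx => hx.1) le_rfl)

lemma continuousOn_fderiv_of_smoothOn {Ω : Set (Euc d)} (hΩ : IsOpen Ω) {f : Euc d → ℝ}
    (hf : ContDiffOn ℝ (⊤ : ℕ∞) f Ω) : ContinuousOn (fderiv ℝ f) Ω :=
  hf.continuousOn_fderiv_of_isOpen hΩ (by simp)

lemma continuousOn_gnorm2 {Ω : Set (Euc d)} (hΩ : IsOpen Ω) {f : Euc d → ℝ}
    (hf : ContDiffOn ℝ (⊤ : ℕ∞) f Ω) : ContinuousOn (gnorm2 f) Ω :=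
  Real.continuous_sqrt.comp_continuousOn <| continuousOn_finsetSum _ fun i _ =>
    continuousOn_finsetSum _ fun j _ =>
      (pder_smoothOn hΩ (pder_smoothOn hΩ hf j) i).continuousOn.pow 2

lemma enorm_le_enorm_of_norm_le {E F : Type*} [SeminormedAddGroup E] [SeminormedAddGroup F]
    {a : E} {b : F} (h : ‖a‖ ≤ ‖b‖) : ‖a‖ₑ ≤ ‖b‖ₑ := by
  rw [← ofReal_norm, ← ofReal_norm]
  exact ENNReal.ofReal_le_ofReal h

/-- Size of a function with vanishing boundary data and with controlled second derivatives. -/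
lemma IsLipschitzDomain.lintegral_collar_jet2 (hd : 1 ≤ d) {Ω : Set (Euc d)}
    (hΩ : IsLipschitzDomain Ω) {u : Euc d → ℝ} {p : ℝ} (hp : 1 < p)
    (hu : ContDiffOn ℝ (⊤ : ℕ∞) u Ω) (hmax : ntMaxLp Ω (gnorm2 u) p < ⊤)
    (hlim : ∀ᵐ Q ∂(sMeasure Ω), NTLim Ω u Q 0 ∧ ∀ i, NTLim Ω (pder i u) Q 0) :
    ∃ M : ℝ≥0, ∃ δ₀ > 0, ∀ r, 0 < r → r ≤ δ₀ →
      ∫⁻ x in collar Ω r, (‖gnorm2 u x‖ₑ + (ENNReal.ofReal r⁻¹ * ‖fderiv ℝ u x‖ₑ +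
        ENNReal.ofReal r⁻¹ ^ 2 * ‖u x‖ₑ)) ^ p ≤ M * ENNReal.ofReal r := by
  obtain ⟨C, Λ, hΛ, δ₁, hδ₁, hardy⟩ := hΩ.hardy_scaled hd hp
  obtain ⟨M, δ₂, hδ₂, hM⟩ := hΩ.lintegral_collar_rpow_le hd (by linarith) hmax
  have hp0 : 0 ≤ p := by linarith
  have hΛ0 : 0 < Λ := by linarith
  have hgrad : ∀ r, 0 < r → r ≤ min δ₁ (δ₂ / Λ) →
      ∫⁻ x in collar Ω r, (ENNReal.ofReal r⁻¹ * ‖fderiv ℝ u x‖ₑ) ^ p ≤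
        (d : ℝ≥0∞) ^ (p - 1) * (d * (C * (M * ENNReal.ofReal (Λ * r)))) := by
    intro r hr hrδ
    have hpt : ∀ x, (ENNReal.ofReal r⁻¹ * ‖fderiv ℝ u x‖ₑ) ^ p ≤
        (d : ℝ≥0∞) ^ (p - 1) * ∑ j, (ENNReal.ofReal r⁻¹ * ‖pder j u x‖ₑ) ^ p := by
      intro x
      have h1 : ‖fderiv ℝ u x‖ₑ ≤ ∑ j, ‖pder j u x‖ₑ := by
        simp only [← ofReal_norm]
        rw [← ENNReal.ofReal_sum_of_nonneg fun i _ => norm_nonneg _]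
        exact ENNReal.ofReal_le_ofReal (norm_fderiv_le_sum u x)
      have h2 := ENNReal.rpow_sum_le_const_mul_sum_rpow Finset.univ
        (fun j => ENNReal.ofReal r⁻¹ * ‖pder j u x‖ₑ) hp.le
      rw [Finset.card_univ, Fintype.card_fin] at h2
      refine le_trans (ENNReal.rpow_le_rpow ?_ hp0) h2
      rw [← Finset.mul_sum]
      gcongr
    have hj : ∀ j : Fin d, ∫⁻ x in collar Ω r, (ENNReal.ofReal r⁻¹ * ‖pder j u x‖ₑ) ^ p ≤
        C * (M * ENNReal.ofReal (Λ * r)) := by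
      intro j
      refine (hardy (pder j u) (pder_smoothOn hΩ.1 hu j) (hlim.mono fun Q h => h.2 j) r hr
        (hrδ.trans (min_le_left _ _))).trans ?_
      gcongr
      refine le_trans ?_ (hM (Λ * r) (by positivity) ?_)
      · refine lintegral_mono fun x => ENNReal.rpow_le_rpow (enorm_le_enorm_of_norm_le ?_) hp0
        exact ((norm_fderiv_le_gnorm1 _ x).trans (gnorm1_pder_le_gnorm2 u j x)).trans
          (le_abs_self _)
      · have := hrδ.trans (min_le_right _ _)
        rw [le_div_iff₀ hΛ0] at this
        linarith
    calc ∫⁻ x in collar Ω r, (ENNReal.ofReal r⁻¹ * ‖fderiv ℝ u x‖ₑ) ^ p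
        ≤ ∫⁻ x in collar Ω r, (d : ℝ≥0∞) ^ (p - 1) *
            ∑ j, (ENNReal.ofReal r⁻¹ * ‖pder j u x‖ₑ) ^ p := lintegral_mono hpt
      _ = (d : ℝ≥0∞) ^ (p - 1) *
            ∑ j, ∫⁻ x in collar Ω r, (ENNReal.ofReal r⁻¹ * ‖pder j u x‖ₑ) ^ p := by
          rw [lintegral_const_mul' _ _ (ENNReal.rpow_ne_top_of_nonneg (by linarith) (by simp)),
            lintegral_finsetSum' _ fun j _ => ?_]
          exact (((aemeasurable_collar hΩ.1 (pder_smoothOn hΩ.1 hu j).continuousOn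
            r).enorm).const_mul _).pow_const p
      _ ≤ (d : ℝ≥0∞) ^ (p - 1) * ∑ _j : Fin d, C * (M * ENNReal.ofReal (Λ * r)) := by
          gcongr with j _
          exact hj j
      _ = _ := by simp
  have hfun : ∀ r, 0 < r → r ≤ min δ₁ (δ₂ / Λ) / Λ →
      ∫⁻ x in collar Ω r, (ENNReal.ofReal r⁻¹ ^ 2 * ‖u x‖ₑ) ^ p ≤
        C * (ENNReal.ofReal Λ ^ p * ((d : ℝ≥0∞) ^ (p - 1) *
          (d * (C * (M * ENNReal.ofReal (Λ * (Λ * r))))))) := by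
    intro r hr hrδ
    rw [le_div_iff₀ hΛ0] at hrδ
    have hr1 : r ≤ δ₁ := by
      have := hrδ.trans (min_le_left _ _)
      nlinarith
    have e : ENNReal.ofReal r⁻¹ = ENNReal.ofReal Λ * ENNReal.ofReal (Λ * r)⁻¹ := by
      rw [← ENNReal.ofReal_mul hΛ0.le, mul_inv, mul_inv_cancel_left₀ hΛ0.ne']
    calc ∫⁻ x in collar Ω r, (ENNReal.ofReal r⁻¹ ^ 2 * ‖u x‖ₑ) ^ p
        = ENNReal.ofReal r⁻¹ ^ p *
            ∫⁻ x in collar Ω r, (ENNReal.ofReal r⁻¹ * ‖u x‖ₑ) ^ p := by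
          rw [← lintegral_const_mul_rpow _ ENNReal.ofReal_ne_top hp0]
          simp only [pow_two, mul_assoc]
      _ ≤ ENNReal.ofReal r⁻¹ ^ p * (C * ∫⁻ y in collar Ω (Λ * r), ‖fderiv ℝ u y‖ₑ ^ p) := by
          gcongr
          exact hardy u hu (hlim.mono fun Q h => h.1) r hr hr1
      _ = C * (ENNReal.ofReal Λ ^ p *
            ∫⁻ x in collar Ω (Λ * r), (ENNReal.ofReal (Λ * r)⁻¹ * ‖fderiv ℝ u x‖ₑ) ^ p) := by
          rw [lintegral_const_mul_rpow _ ENNReal.ofReal_ne_top hp0, e,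
            ENNReal.mul_rpow_of_nonneg _ _ hp0]
          ring
      _ ≤ _ := by
          gcongr
          exact hgrad (Λ * r) (by positivity) (by linarith)
  let A : ℝ≥0∞ := (d : ℝ≥0∞) ^ (p - 1) * (d * (C * (M * ENNReal.ofReal Λ)))
  let B : ℝ≥0∞ := C * (ENNReal.ofReal Λ ^ p * ((d : ℝ≥0∞) ^ (p - 1) *
          (d * (C * (M * (ENNReal.ofReal Λ * ENNReal.ofReal Λ))))))
  let K : ℝ≥0∞ := 2 ^ (p - 1) * (M + 2 ^ (p - 1) * (A + B))
  have hpow : ∀ a : ℝ≥0∞, a ≠ ∞ → a ^ (p - 1) ≠ ∞ := fun a ha =>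
    ENNReal.rpow_ne_top_of_nonneg (by linarith) ha
  have hA : A ≠ ∞ := ENNReal.mul_ne_top (hpow _ (by simp)) (ENNReal.mul_ne_top (by simp)
    (ENNReal.mul_ne_top (by simp) (ENNReal.mul_ne_top (by simp) (by simp))))
  have hB : B ≠ ∞ := ENNReal.mul_ne_top (by simp) (ENNReal.mul_ne_top
    (ENNReal.rpow_ne_top_of_nonneg hp0 (by simp)) (ENNReal.mul_ne_top (hpow _ (by simp))
    (ENNReal.mul_ne_top (by simp) (ENNReal.mul_ne_top (by simp) (ENNReal.mul_ne_top (by simp)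
      (ENNReal.mul_ne_top (by simp) (by simp)))))))
  have hK : K ≠ ∞ := ENNReal.mul_ne_top (hpow _ (by simp)) (ENNReal.add_ne_top.2 ⟨by simp,
    ENNReal.mul_ne_top (hpow _ (by simp)) (ENNReal.add_ne_top.2 ⟨hA, hB⟩)⟩)
  refine ⟨K.toNNReal, min (min δ₁ (δ₂ / Λ) / Λ) δ₂, by positivity, fun r hr hrδ => ?_⟩
  rw [ENNReal.coe_toNNReal hK]
  have h1 := hrδ.trans (min_le_left _ _)
  have h2 : r ≤ min δ₁ (δ₂ / Λ) := by
    rw [le_div_iff₀ hΛ0] at h1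
    nlinarith
  have m1 := (aemeasurable_collar hΩ.1 (continuousOn_gnorm2 hΩ.1 hu) r).enorm
  have m2 := (aemeasurable_collar hΩ.1
    (continuousOn_fderiv_of_smoothOn hΩ.1 hu) r).enorm.const_mul (ENNReal.ofReal r⁻¹)
  calc _ ≤ 2 ^ (p - 1) * (M * ENNReal.ofReal r + 2 ^ (p - 1) *
        ((d : ℝ≥0∞) ^ (p - 1) * (d * (C * (M * ENNReal.ofReal (Λ * r)))) +
        C * (ENNReal.ofReal Λ ^ p * ((d : ℝ≥0∞) ^ (p - 1) *
          (d * (C * (M * ENNReal.ofReal (Λ * (Λ * r))))))))) := by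
        refine (lintegral_add_rpow_le m1 hp.le).trans ?_
        gcongr
        · exact hM r hr (hrδ.trans (min_le_right _ _))
        · refine (lintegral_add_rpow_le m2 hp.le).trans ?_
          gcongr
          · exact hgrad r hr h2
          · exact hfun r hr h1
    _ = K * ENNReal.ofReal r := by
        simp only [K, A, B, ENNReal.ofReal_mul hΛ0.le]
        ring

lemma ntLim_gnorm1 {Ω : Set (Euc d)} {w : Euc d → ℝ} {Q : Euc d}
    (h : ∀ i, NTLim Ω (pder i w) Q 0) : NTLim Ω (gnorm1 w) Q 0 := by
  have h1 : Tendsto (fun x => ∑ i, pder i w x ^ 2) (𝓝[ntCone Ω Q] Q) (𝓝 (∑ _i : Fin d, 0 ^ 2)) :=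
    tendsto_finsetSum _ fun i _ => (h i).pow 2
  have h2 := (Real.continuous_sqrt.tendsto _).comp h1
  have h3 : √(∑ _i : Fin d, (0 : ℝ) ^ 2) = 0 := by simp
  rwa [h3] at h2

/-- A function whose boundary data vanish to first order is small near the boundary. -/
lemma IsLipschitzDomain.lintegral_collar_jet1 (hd : 1 ≤ d) {Ω : Set (Euc d)}
    (hΩ : IsLipschitzDomain Ω) {w : Euc d → ℝ} {q : ℝ} (hq : 1 < q)
    (hw : ContDiffOn ℝ (⊤ : ℕ∞) w Ω) (hmax : ntMaxLp Ω (gnorm1 w) q < ⊤)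
    (hlim : ∀ᵐ Q ∂(sMeasure Ω), NTLim Ω w Q 0 ∧ ∀ i, NTLim Ω (pder i w) Q 0)
    {ε : ℝ≥0∞} (hε : ε ≠ 0) :
    ∃ δ₀ > 0, ∀ r, 0 < r → r ≤ δ₀ →
      ∫⁻ x in collar Ω r, (‖fderiv ℝ w x‖ₑ + ENNReal.ofReal r⁻¹ * ‖w x‖ₑ) ^ q ≤
        ε * ENNReal.ofReal r := by
  obtain ⟨C, Λ, hΛ, δ₁, hδ₁, hardy⟩ := hΩ.hardy_scaled hd hq
  have hq0 : 0 < q := by linarith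
  have hΛ0 : 0 < Λ := by linarith
  let K : ℝ≥0∞ := 2 ^ (q - 1) * (1 + C * ENNReal.ofReal Λ)
  have hK : K ≠ ∞ := ENNReal.mul_ne_top (ENNReal.rpow_ne_top_of_nonneg (by linarith) (by simp))
    (ENNReal.add_ne_top.2 ⟨by simp, ENNReal.mul_ne_top (by simp) (by simp)⟩)
  have hεK : ε / K ≠ 0 := ENNReal.div_ne_zero.2 ⟨hε, hK⟩
  have hlim' : ∀ᵐ Q ∂(sMeasure Ω),
      Tendsto (fun x => ‖gnorm1 w x‖ₑ ^ q) (𝓝[ntCone Ω Q] Q) (𝓝 0) := by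
    filter_upwards [hlim] with Q hQ
    have h1 := (ENNReal.continuous_rpow_const (y := q)).tendsto _ |>.comp
      ((continuous_enorm.tendsto _).comp (ntLim_gnorm1 hQ.2))
    simpa [Function.comp_def, hq0] using h1
  have hmax' : ∫⁻ Q, (⨆ x ∈ ntCone Ω Q, ‖gnorm1 w x‖ₑ ^ q) ∂(sMeasure Ω) ≠ ∞ :=
    ne_top_of_le_ne_top (lintegral_ntMax_rpow_ne_top hq0 hmax)
      (lintegral_mono fun Q => iSup_enorm_rpow_le _ hq0.le Q)
  obtain ⟨δ₂, hδ₂, hsmall⟩ := hΩ.lintegral_collar_small hd hlim' hmax' hεK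
  have hgrad : ∀ r, 0 < r → r ≤ δ₂ →
      ∫⁻ x in collar Ω r, ‖fderiv ℝ w x‖ₑ ^ q ≤ ε / K * ENNReal.ofReal r := by
    intro r hr hrδ
    refine (lintegral_mono fun x => ENNReal.rpow_le_rpow
      (enorm_le_enorm_of_norm_le ?_) hq0.le).trans (hsmall r hr hrδ)
    exact (norm_fderiv_le_gnorm1 _ x).trans (le_abs_self _)
  refine ⟨min δ₁ (δ₂ / Λ), by positivity, fun r hr hrδ => ?_⟩
  have hr1 := hrδ.trans (min_le_left _ _)
  have hr2 := hrδ.trans (min_le_right _ _)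
  rw [le_div_iff₀ hΛ0] at hr2
  have m1 := (aemeasurable_collar hΩ.1 (continuousOn_fderiv_of_smoothOn hΩ.1 hw) r).enorm
  calc _ ≤ 2 ^ (q - 1) * (ε / K * ENNReal.ofReal r +
        C * (ε / K * ENNReal.ofReal (Λ * r))) := by
        refine (lintegral_add_rpow_le m1 hq.le).trans ?_
        gcongr
        · exact hgrad r hr (by nlinarith)
        · refine (hardy w hw (hlim.mono fun Q h => h.1) r hr hr1).trans ?_
          gcongr
          exact hgrad (Λ * r) (by positivity) (by linarith)
    _ = ε / K * K * ENNReal.ofReal r := by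
        simp only [K, ENNReal.ofReal_mul hΛ0.le]
        ring
    _ ≤ ε * ENNReal.ofReal r := by
        gcongr
        exact ENNReal.mul_le_of_le_div le_rfl

/-- The Green density of a cutoff at scale `r`, integrated over the collar, tends to zero. -/
lemma IsLipschitzDomain.lintegral_collar_pairing (hd : 1 ≤ d) {Ω : Set (Euc d)}
    (hΩ : IsLipschitzDomain Ω) {u w : Euc d → ℝ} {p q : ℝ} (hpq : p.HolderConjugate q)
    (hu : ContDiffOn ℝ (⊤ : ℕ∞) u Ω) (humax : ntMaxLp Ω (gnorm2 u) p < ⊤)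
    (hulim : ∀ᵐ Q ∂(sMeasure Ω), NTLim Ω u Q 0 ∧ ∀ i, NTLim Ω (pder i u) Q 0)
    (hw : ContDiffOn ℝ (⊤ : ℕ∞) w Ω) (hwmax : ntMaxLp Ω (gnorm1 w) q < ⊤)
    (hwlim : ∀ᵐ Q ∂(sMeasure Ω), NTLim Ω w Q 0 ∧ ∀ i, NTLim Ω (pder i w) Q 0)
    {ε : ℝ≥0∞} (hε : ε ≠ 0) :
    ∃ δ₀ > 0, ∀ r, 0 < r → r ≤ δ₀ →
      ∫⁻ x in collar Ω r, (‖fderiv ℝ w x‖ₑ + ENNReal.ofReal r⁻¹ * ‖w x‖ₑ) *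
        (‖gnorm2 u x‖ₑ + (ENNReal.ofReal r⁻¹ * ‖fderiv ℝ u x‖ₑ +
          ENNReal.ofReal r⁻¹ ^ 2 * ‖u x‖ₑ)) ≤ ε * ENNReal.ofReal r := by
  obtain ⟨M, δ₁, hδ₁, hM⟩ := hΩ.lintegral_collar_jet2 hd hpq.lt hu humax hulim
  have hp0 := hpq.pos
  have hq0 := hpq.symm.pos
  let N : ℝ≥0∞ := (M : ℝ≥0∞) ^ (1 / p) + 1
  have hN : N ≠ ∞ := ENNReal.add_ne_top.2
    ⟨ENNReal.rpow_ne_top_of_nonneg (by positivity) (by simp), by simp⟩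
  have hεN : (ε / N) ^ q ≠ 0 := by
    have : ε / N ≠ 0 := ENNReal.div_ne_zero.2 ⟨hε, hN⟩
    simp [ENNReal.rpow_eq_zero_iff, this, hq0.not_gt]
  obtain ⟨δ₂, hδ₂, hsmall⟩ := hΩ.lintegral_collar_jet1 hd hpq.symm.lt hw hwmax hwlim hεN
  refine ⟨min δ₁ δ₂, by positivity, fun r hr hrδ => ?_⟩
  have m1 : AEMeasurable (fun x => ‖fderiv ℝ w x‖ₑ + ENNReal.ofReal r⁻¹ * ‖w x‖ₑ)
      (volume.restrict (collar Ω r)) :=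
    (aemeasurable_collar hΩ.1 (continuousOn_fderiv_of_smoothOn hΩ.1 hw) r).enorm.add
      ((aemeasurable_collar hΩ.1 hw.continuousOn r).enorm.const_mul _)
  have m2 : AEMeasurable (fun x => ‖gnorm2 u x‖ₑ + (ENNReal.ofReal r⁻¹ * ‖fderiv ℝ u x‖ₑ +
      ENNReal.ofReal r⁻¹ ^ 2 * ‖u x‖ₑ)) (volume.restrict (collar Ω r)) :=
    (aemeasurable_collar hΩ.1 (continuousOn_gnorm2 hΩ.1 hu) r).enorm.add
      (((aemeasurable_collar hΩ.1 (continuousOn_fderiv_of_smoothOn hΩ.1 hu) r).enorm.const_mul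
        _).add ((aemeasurable_collar hΩ.1 hu.continuousOn r).enorm.const_mul _))
  refine (ENNReal.lintegral_mul_le_Lp_mul_Lq _ hpq.symm m1 m2).trans ?_
  have h1 := ENNReal.rpow_le_rpow (hsmall r hr (hrδ.trans (min_le_right _ _)))
    (z := 1 / q) (by positivity)
  have h2 := ENNReal.rpow_le_rpow (hM r hr (hrδ.trans (min_le_left _ _)))
    (z := 1 / p) (by positivity)
  refine (mul_le_mul' h1 h2).trans ?_
  have hr0 : ENNReal.ofReal r ≠ 0 := by simpa using hr
  have hsum : ENNReal.ofReal r ^ (1 / q) * ENNReal.ofReal r ^ (1 / p) = ENNReal.ofReal r := by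
    rw [← ENNReal.rpow_add _ _ hr0 ENNReal.ofReal_ne_top, one_div, one_div, add_comm,
      hpq.inv_add_inv_eq_one, ENNReal.rpow_one]
  rw [ENNReal.mul_rpow_of_nonneg _ _ (by positivity), ENNReal.mul_rpow_of_nonneg _ _ (by positivity),
    ← ENNReal.rpow_mul, mul_one_div_cancel hq0.ne', ENNReal.rpow_one, mul_mul_mul_comm, hsum]
  gcongr
  calc ε / N * (M : ℝ≥0∞) ^ (1 / p) ≤ ε / N * N := by
        gcongr
        exact le_self_add
    _ ≤ ε := ENNReal.mul_le_of_le_div le_rfl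

lemma eq_zero_of_abs_le_mul {a B : ℝ} (hB : 0 ≤ B) (h : ∀ η > 0, |a| ≤ B * η) : a = 0 := by
  by_contra ha
  have ha' := abs_pos.2 ha
  have := h (|a| / (2 * (B + 1))) (by positivity)
  rw [mul_div_assoc', le_div_iff₀ (by positivity)] at this
  nlinarith

/-- Green's formula without boundary terms: if `u` and `w` have vanishing boundary data, `u` is
biharmonic, and `Δ²w` vanishes near the boundary, then `u` is orthogonal to `Δ²w`. -/
lemma IsLipschitzDomain.integral_mul_bilap_eq_zero (hd : 1 ≤ d) {Ω : Set (Euc d)}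
    (hΩ : IsLipschitzDomain Ω) {u w : Euc d → ℝ} {p q : ℝ} (hpq : p.HolderConjugate q)
    (hu : Biharmonic Ω u) (humax : ntMaxLp Ω (gnorm2 u) p < ⊤)
    (hulim : ∀ᵐ Q ∂(sMeasure Ω), NTLim Ω u Q 0 ∧ ∀ i, NTLim Ω (pder i u) Q 0)
    (hw : ContDiffOn ℝ (⊤ : ℕ∞) w Ω) (hwmax : ntMaxLp Ω (gnorm1 w) q < ⊤)
    (hwlim : ∀ᵐ Q ∂(sMeasure Ω), NTLim Ω w Q 0 ∧ ∀ i, NTLim Ω (pder i w) Q 0)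
    {ρ : ℝ} (hρ : 0 < ρ) (hsupp : ∀ x ∈ Ω, x ∉ core Ω ρ → bilap w x = 0) :
    ∫ x in Ω, u x * bilap w x = 0 := by
  obtain ⟨C, hC, hcut⟩ := exists_cutoff hΩ.1
  refine eq_zero_of_abs_le_mul (B := 4 * d ^ 2 * (216 * C)) (by positivity) fun η hη => ?_
  obtain ⟨δ₀, hδ₀, hpair⟩ := hΩ.lintegral_collar_pairing hd hpq hu.1 humax hulim hw hwmax hwlim
    (ε := ENNReal.ofReal η) (by simpa using hη)
  obtain ⟨r, hr, hrδ, hrρ⟩ : ∃ r, 0 < r ∧ r ≤ δ₀ ∧ r ≤ ρ :=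
    ⟨min δ₀ ρ, by positivity, min_le_left _ _, min_le_right _ _⟩
  obtain ⟨φ, hφ, h0, h1, hb1, hb2, hb3⟩ := hcut (r / 6) (by positivity)
  have hgreen := green_identity_on hΩ.1 hΩ.2.1 hu.1 hw hφ (by positivity) h0
  have hlhs : ∫ x in Ω, u x * bilap w x =
      ∫ x, φ x * (u x * bilap w x - w x * bilap u x) := by
    rw [← integral_indicator hΩ.1.measurableSet]
    congr 1 with x
    by_cases hx : x ∈ Ω
    · rw [indicator_of_mem hx, hu.2 x hx]
      by_cases hxc : x ∈ core Ω ρ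
      · rw [h1 x (core_anti Ω (by linarith) hxc)]
        ring
      · rw [hsupp x hx hxc]
        ring
    · rw [indicator_of_notMem hx, h0 x fun h => hx h.1, zero_mul]
  have hinv : (r / 6)⁻¹ = 6 * r⁻¹ := by field_simp
  have hri : 0 ≤ r⁻¹ := by positivity
  rw [hinv] at hb1 hb2 hb3
  have hpt := abs_greenDensity_le (u := u) (w := w) hφ (C := 216 * C) (s := r⁻¹) (by positivity) hri
    (fun i x => (hb1 i x).trans (by nlinarith [mul_nonneg hC hri]))
    (fun i j x => (hb2 i j x).trans (by nlinarith [mul_nonneg hC (pow_nonneg hri 2)]))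
    (fun i j k x => (hb3 i j k x).trans (by nlinarith [mul_nonneg hC (pow_nonneg hri 3)]))
  have hzero : ∀ x, x ∉ collar Ω r → greenDensity u w φ x = 0 := by
    intro x hx
    by_cases hxΩ : x ∈ Ω
    · refine greenDensity_eq_zero (O := {x | x ∈ Ω ∧ r / 2 < infDist x (frontier Ω)}) (a := 1)
        (hΩ.1.inter (isOpen_lt continuous_const (continuous_infDist_pt _)))
        (fun y hy => h1 y ⟨hy.1, ?_⟩) ⟨hxΩ, ?_⟩
      · have : r / 2 < infDist y (frontier Ω) := hy.2
        linarith
      · have : r ≤ infDist x (frontier Ω) := by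
          by_contra h
          exact hx ⟨hxΩ, not_le.1 h⟩
        linarith
    · exact greenDensity_eq_zero (isClosed_core hΩ.1 (by positivity)).isOpen_compl (a := 0)
        (fun y hy => h0 y hy) fun h => hxΩ h.1
  have hbound : ∫⁻ x, ‖greenDensity u w φ x‖ₑ ≤
      ENNReal.ofReal (4 * d ^ 2 * (216 * C) * η) := by
    have hsup : ∫⁻ x, ‖greenDensity u w φ x‖ₑ = ∫⁻ x in collar Ω r, ‖greenDensity u w φ x‖ₑ := by
      rw [← lintegral_indicator (measurableSet_collar hΩ.1 r)]
      congr 1 with x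
      by_cases hx : x ∈ collar Ω r
      · rw [indicator_of_mem hx]
      · rw [indicator_of_notMem hx, hzero x hx, enorm_zero]
    rw [hsup]
    calc ∫⁻ x in collar Ω r, ‖greenDensity u w φ x‖ₑ
        ≤ ∫⁻ x in collar Ω r, ENNReal.ofReal (4 * d ^ 2 * (216 * C) * r⁻¹) *
          ((‖fderiv ℝ w x‖ₑ + ENNReal.ofReal r⁻¹ * ‖w x‖ₑ) *
          (‖gnorm2 u x‖ₑ + (ENNReal.ofReal r⁻¹ * ‖fderiv ℝ u x‖ₑ +
            ENNReal.ofReal r⁻¹ ^ 2 * ‖u x‖ₑ))) := by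
          refine lintegral_mono fun x => ?_
          have hg : 0 ≤ gnorm2 u x := Real.sqrt_nonneg _
          rw [← ofReal_norm (greenDensity u w φ x), Real.norm_eq_abs]
          refine (ENNReal.ofReal_le_ofReal (hpt x)).trans_eq ?_
          rw [ENNReal.ofReal_mul (p := 4 * d ^ 2 * (216 * C) * r⁻¹) (by positivity),
            ENNReal.ofReal_mul (p := ‖fderiv ℝ w x‖ + r⁻¹ * ‖w x‖) (by positivity),
            ENNReal.ofReal_add (p := ‖fderiv ℝ w x‖) (by positivity) (by positivity),
            ENNReal.ofReal_add (p := gnorm2 u x) (by positivity) (by positivity),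
            ENNReal.ofReal_add (p := r⁻¹ * _) (by positivity) (by positivity),
            ENNReal.ofReal_mul (p := r⁻¹) (q := ‖w x‖) hri,
            ENNReal.ofReal_mul (p := r⁻¹) (q := ‖fderiv ℝ u x‖) hri,
            ENNReal.ofReal_mul (p := r⁻¹ ^ 2) (by positivity),
            ENNReal.ofReal_pow hri]
          simp only [ofReal_norm]
          rw [← ofReal_norm (gnorm2 u x), Real.norm_of_nonneg hg]
      _ ≤ ENNReal.ofReal (4 * d ^ 2 * (216 * C) * r⁻¹) *
          (ENNReal.ofReal η * ENNReal.ofReal r) := by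
          rw [lintegral_const_mul' _ _ ENNReal.ofReal_ne_top]
          gcongr
          exact hpair r hr hrδ
      _ = ENNReal.ofReal (4 * d ^ 2 * (216 * C) * η) := by
          rw [← ENNReal.ofReal_mul hη.le, ← ENNReal.ofReal_mul (by positivity)]
          congr 1
          field_simp
  rw [hlhs, hgreen, abs_neg]
  have := (enorm_integral_le_lintegral_enorm (greenDensity u w φ)).trans hbound
  rw [← ofReal_norm, Real.norm_eq_abs] at this
  exact (ENNReal.ofReal_le_ofReal_iff (by positivity)).1 this

lemma pder_comp_sub (f : Euc d → ℝ) (a : Euc d) (i : Fin d) :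
    pder i (fun x => f (x - a)) = fun x => pder i f (x - a) := by
  ext x
  simp only [pder, fderiv_comp_sub]

lemma lap_comp_sub (f : Euc d → ℝ) (a : Euc d) :
    lap (fun x => f (x - a)) = fun x => lap f (x - a) := by
  ext x
  simp only [lap, pder_comp_sub]

lemma bilap_comp_sub (f : Euc d → ℝ) (a : Euc d) :
    bilap (fun x => f (x - a)) = fun x => bilap f (x - a) := by
  simp only [bilap, lap_comp_sub]

lemma differentiableAt_of_smoothOn {Ω : Set (Euc d)} (hΩ : IsOpen Ω) {f : Euc d → ℝ}
    (hf : ContDiffOn ℝ (⊤ : ℕ∞) f Ω) {x : Euc d} (hx : x ∈ Ω) : DifferentiableAt ℝ f x :=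
  (hf.contDiffAt (hΩ.mem_nhds hx)).differentiableAt (by simp)

lemma pder_sub_on {Ω : Set (Euc d)} (hΩ : IsOpen Ω) {f g : Euc d → ℝ}
    (hf : ContDiffOn ℝ (⊤ : ℕ∞) f Ω) (hg : ContDiffOn ℝ (⊤ : ℕ∞) g Ω) (i : Fin d) :
    EqOn (pder i fun y => f y - g y) (fun y => pder i f y - pder i g y) Ω := fun _ hx =>
  pder_sub_at (differentiableAt_of_smoothOn hΩ hf hx) (differentiableAt_of_smoothOn hΩ hg hx) i

lemma lap_smoothOn {Ω : Set (Euc d)} (hΩ : IsOpen Ω) {f : Euc d → ℝ}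
    (hf : ContDiffOn ℝ (⊤ : ℕ∞) f Ω) : ContDiffOn ℝ (⊤ : ℕ∞) (lap f) Ω :=
  ContDiffOn.sum fun i _ => pder_smoothOn hΩ (pder_smoothOn hΩ hf i) i

lemma lap_sub_on {Ω : Set (Euc d)} (hΩ : IsOpen Ω) {f g : Euc d → ℝ}
    (hf : ContDiffOn ℝ (⊤ : ℕ∞) f Ω) (hg : ContDiffOn ℝ (⊤ : ℕ∞) g Ω) :
    EqOn (lap fun y => f y - g y) (fun y => lap f y - lap g y) Ω := by
  intro x hx
  simp only [lap]
  rw [← Finset.sum_sub_distrib]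
  refine Finset.sum_congr rfl fun i _ => ?_
  rw [pder_eqOn hΩ (pder_sub_on hΩ hf hg i) i hx]
  exact pder_sub_on hΩ (pder_smoothOn hΩ hf i) (pder_smoothOn hΩ hg i) i hx

lemma bilap_sub_on {Ω : Set (Euc d)} (hΩ : IsOpen Ω) {f g : Euc d → ℝ}
    (hf : ContDiffOn ℝ (⊤ : ℕ∞) f Ω) (hg : ContDiffOn ℝ (⊤ : ℕ∞) g Ω) :
    EqOn (bilap fun y => f y - g y) (fun y => bilap f y - bilap g y) Ω := by
  intro x hx
  simp only [bilap]
  rw [lap_eqOn hΩ (lap_sub_on hΩ hf hg) hx]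
  exact lap_sub_on hΩ (lap_smoothOn hΩ hf) (lap_smoothOn hΩ hg) hx

lemma gnorm1_le_sum (f : Euc d → ℝ) (x : Euc d) : gnorm1 f x ≤ ∑ i, |pder i f x| := by
  refine Real.sqrt_le_iff.2 ⟨by positivity, ?_⟩
  simp only [← sq_abs (pder _ f x)]
  exact Finset.sum_sq_le_sq_sum_of_nonneg fun i _ => abs_nonneg _

/-- Subtracting from `V` a smooth function does not affect the integrability of the maximal
function of the gradient. -/
lemma IsLipschitzDomain.ntMaxLp_gnorm1_sub_lt_top (hd : 1 ≤ d) {Ω : Set (Euc d)}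
    (hΩ : IsLipschitzDomain Ω) {F V : Euc d → ℝ} {q : ℝ} (hq : 1 < q)
    (hF : ContDiff ℝ (⊤ : ℕ∞) F) (hV : ContDiffOn ℝ (⊤ : ℕ∞) V Ω)
    (hmax : ntMaxLp Ω (gnorm1 V) q < ⊤) : ntMaxLp Ω (gnorm1 fun y => F y - V y) q < ⊤ := by
  have := hΩ.isFiniteMeasure hd
  have hcont : Continuous fun x => ∑ i, |pder i F x| :=
    continuous_finsetSum _ fun i _ => (pder_smooth hF i).continuous.abs
  obtain ⟨B, hB⟩ := hΩ.2.1.isCompact_closure.bddAbove_image hcont.continuousOn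
  have hle : ∀ Q, ntMax Ω (gnorm1 fun y => F y - V y) Q ≤
      ENNReal.ofReal B + d * ntMax Ω (gnorm1 V) Q := by
    intro Q
    refine iSup₂_le fun x hx => ?_
    have hg : 0 ≤ gnorm1 V x := Real.sqrt_nonneg _
    have h1 : gnorm1 (fun y => F y - V y) x ≤ B + d * gnorm1 V x := by
      calc gnorm1 (fun y => F y - V y) x ≤ ∑ i, |pder i (fun y => F y - V y) x| :=
            gnorm1_le_sum _ x
        _ ≤ ∑ i, (|pder i F x| + gnorm1 V x) := by
            refine Finset.sum_le_sum fun i _ => ?_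
            rw [pder_sub_on hΩ.1 hF.contDiffOn hV i hx.1]
            exact (abs_sub _ _).trans (by gcongr; exact abs_pder_le_gnorm1 V i x)
        _ ≤ B + d * gnorm1 V x := by
            rw [Finset.sum_add_distrib]
            simp only [Finset.sum_const, Finset.card_univ, Fintype.card_fin, nsmul_eq_mul]
            gcongr
            exact hB (mem_image_of_mem _ (subset_closure hx.1))
    have h2 : ‖gnorm1 V x‖ₑ ≤ ntMax Ω (gnorm1 V) Q :=
      le_iSup₂ (f := fun x (_ : x ∈ ntCone Ω Q) => (‖gnorm1 V x‖₊ : ℝ≥0∞)) x hx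
    calc (‖gnorm1 (fun y => F y - V y) x‖₊ : ℝ≥0∞)
        = ENNReal.ofReal (gnorm1 (fun y => F y - V y) x) :=
          (Real.enorm_of_nonneg (Real.sqrt_nonneg _))
      _ ≤ ENNReal.ofReal (B + d * gnorm1 V x) := ENNReal.ofReal_le_ofReal h1
      _ ≤ ENNReal.ofReal B + d * ‖gnorm1 V x‖ₑ := by
          refine ENNReal.ofReal_add_le.trans_eq ?_
          rw [ENNReal.ofReal_mul (by positivity), ENNReal.ofReal_natCast, Real.enorm_of_nonneg hg]
      _ ≤ _ := by gcongr
  have hq0 : 0 ≤ q := by linarith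
  have hfin : ∫⁻ Q, ntMax Ω (gnorm1 fun y => F y - V y) Q ^ q ∂(sMeasure Ω) ≠ ∞ := by
    refine ne_top_of_le_ne_top ?_ (lintegral_mono fun Q => ENNReal.rpow_le_rpow (hle Q) hq0)
    refine ne_top_of_le_ne_top ?_ (lintegral_add_rpow_le aemeasurable_const hq.le)
    rw [lintegral_const, lintegral_const_mul_rpow _ (by simp) hq0]
    refine ENNReal.mul_ne_top (ENNReal.rpow_ne_top_of_nonneg (by linarith) (by simp))
      (ENNReal.add_ne_top.2 ⟨ENNReal.mul_ne_top (ENNReal.rpow_ne_top_of_nonneg hq0 (by simp))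
        (measure_ne_top _ _), ENNReal.mul_ne_top (ENNReal.rpow_ne_top_of_nonneg hq0 (by simp))
        (lintegral_ntMax_rpow_ne_top (by linarith) hmax)⟩)
  exact ENNReal.rpow_lt_top_of_nonneg (by positivity) hfin

/-- Averages of `v` against rescalings of a kernel converge to a multiple of `v x₀`. -/
lemma tendsto_integral_kernel_mul {K v : Euc d → ℝ} (hK : Continuous K)
    (hK0 : ∀ y, 1 ≤ ‖y‖ → K y = 0) (hv : Measurable v) {x₀ : Euc d} (hc : ContinuousAt v x₀) :
    Tendsto (fun ε : ℝ => ∫ z, K z * v (x₀ + ε • z)) (𝓝[>] 0) (𝓝 (∫ z, K z * v x₀)) := by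
  have hKc : HasCompactSupport K := HasCompactSupport.intro (isCompact_closedBall 0 1) fun y hy =>
    hK0 y (by simpa using (not_le.1 fun h => hy (by simpa using h)).le)
  obtain ⟨ρ, hρ, hball⟩ := Metric.continuousAt_iff.1 hc 1 one_pos
  refine tendsto_integral_filter_of_dominated_convergence (fun z => ‖K z‖ * (‖v x₀‖ + 1))
    (Eventually.of_forall fun ε => ?_) ?_ ?_ ?_
  · exact (hK.measurable.mul (hv.comp (by fun_prop))).aestronglyMeasurable
  · filter_upwards [Ioo_mem_nhdsGT hρ] with ε hε
    refine Eventually.of_forall fun z => ?_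
    by_cases hz : 1 ≤ ‖z‖
    · simp [hK0 z hz]
    · rw [norm_mul]
      gcongr
      have hd : dist (x₀ + ε • z) x₀ < ρ := by
        rw [dist_eq_norm, add_sub_cancel_left, norm_smul, Real.norm_of_nonneg hε.1.le]
        nlinarith [hε.1, hε.2, norm_nonneg z, not_le.1 hz]
      have h1 := hball hd
      rw [dist_eq_norm] at h1
      have h2 := norm_sub_norm_le (v (x₀ + ε • z)) (v x₀)
      linarith
  · exact (hK.integrable_of_hasCompactSupport hKc).norm.mul_const _
  · refine Eventually.of_forall fun z => ?_
    refine tendsto_const_nhds.mul (hc.tendsto.comp ?_)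
    have : Continuous fun ε : ℝ => x₀ + ε • z := by fun_prop
    have h0 := this.tendsto 0
    simp only [zero_smul, add_zero] at h0
    exact h0.mono_left nhdsWithin_le_nhds

lemma ntCone_subset (Ω : Set (Euc d)) (Q : Euc d) : ntCone Ω Q ⊆ Ω := fun _ hx => hx.1

/-- Vanishing of the boundary data of the difference of two functions with equal data. -/
lemma hasBVals1_sub_zero {Ω : Set (Euc d)} (hΩ : IsOpen Ω) {F V f : Euc d → ℝ}
    (hF : ContDiff ℝ (⊤ : ℕ∞) F) (hV : ContDiffOn ℝ (⊤ : ℕ∞) V Ω) {O : Set (Euc d)}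
    (hO : IsOpen O) (hfO : frontier Ω ⊆ O) (hFf : EqOn F f O) (hb : HasBVals1 Ω V f) :
    ∀ᵐ Q ∂(sMeasure Ω), NTLim Ω (fun y => F y - V y) Q 0 ∧
      ∀ i, NTLim Ω (pder i fun y => F y - V y) Q 0 := by
  filter_upwards [hb, ae_mem_frontier Ω] with Q hQ hQf
  refine ⟨?_, fun i => ?_⟩
  · have h1 := ((hF.continuous.tendsto Q).mono_left nhdsWithin_le_nhds).sub hQ.1
    rwa [hFf (hfO hQf), sub_self] at h1
  · have h1 := (((pder_smooth hF i).continuous.tendsto Q).mono_left nhdsWithin_le_nhds).sub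
      (hQ.2 i)
    rw [pder_eqOn hO hFf i (hfO hQf), sub_self] at h1
    refine h1.congr' ?_
    filter_upwards [self_mem_nhdsWithin] with x hx
    exact (pder_sub_on hΩ hF.contDiffOn hV i (ntCone_subset Ω Q hx)).symm

/-- Theorem 3.1: if for each pole `x ∈ Ω` the `L^q` Dirichlet problem
with boundary data `D^α Γ^x`, `|α| ≤ 1`, has a solution, then solutions of the `L^p`
regularity problem are unique. -/
theorem regularity_uniqueness
    (d : ℕ) (hd : 2 ≤ d) (Ω : Set (Euc d)) (hΩ : IsLipschitzDomain Ω)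
    (p q : ℝ) (hp : 1 < p) (hpq : 1 / p + 1 / q = 1) (c : ℝ) (hc : c ≠ 0)
    (hV : ∀ x ∈ Ω, ∃ V : Euc d → ℝ, Biharmonic Ω V ∧ ntMaxLp Ω (gnorm1 V) q < ⊤ ∧
      HasBVals1 Ω V (fun y => fundSol d c (y - x))) :
    ∀ u : Euc d → ℝ, Biharmonic Ω u → ntMaxLp Ω (gnorm2 u) p < ⊤ →
      HasBVals1 Ω u (fun _ => 0) → ∀ y ∈ Ω, u y = 0 := by
  intro u hu humax hubv x₀ hx₀
  have hd1 : 1 ≤ d := by omega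
  have hH : p.HolderConjugate q :=
    Real.holderConjugate_iff.2 ⟨hp, by simpa only [one_div] using hpq⟩
  have hulim : ∀ᵐ Q ∂(sMeasure Ω), NTLim Ω u Q 0 ∧ ∀ i, NTLim Ω (pder i u) Q 0 := by
    simpa only [HasBVals1, pder_const_fun] using hubv
  obtain ⟨V, hVbi, hVmax, hVbv⟩ := hV x₀ hx₀
  obtain ⟨K, hKc, hK0, hKint, hE⟩ := exists_regularized_fundSol hd hc
  have hne : (frontier Ω).Nonempty := hΩ.frontier_nonempty hd1
  have hρ : 0 < infDist x₀ (frontier Ω) := infDist_frontier_pos hΩ.1 hne hx₀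
  set ρ := infDist x₀ (frontier Ω) with hρdef
  have hzero : ∀ ε, 0 < ε → ε ≤ ρ / 2 → ∫ z, K z * Ω.indicator u (x₀ + ε • z) = 0 := by
    intro ε hε hερ
    obtain ⟨E, hEs, hEf, A, hA, hEb⟩ := hE ε hε
    have hFs : ContDiff ℝ (⊤ : ℕ∞) fun y => E (y - x₀) :=
      hEs.comp (contDiff_id.sub contDiff_const)
    have hO : IsOpen {y : Euc d | ε < ‖y - x₀‖} :=
      isOpen_lt continuous_const (by fun_prop)
    have hfO : frontier Ω ⊆ {y : Euc d | ε < ‖y - x₀‖} := by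
      intro y hy
      have := infDist_le_dist_of_mem (x := x₀) hy
      rw [dist_comm, dist_eq_norm] at this
      rw [mem_ofPred_eq]
      linarith
    have hFf : EqOn (fun y => E (y - x₀)) (fun y => fundSol d c (y - x₀))
        {y : Euc d | ε < ‖y - x₀‖} := fun y hy => hEf _ (le_of_lt hy)
    have hbilap : ∀ x ∈ Ω, bilap (fun y => E (y - x₀) - V y) x =
        A * K (ε⁻¹ • (x - x₀)) := by
      intro x hx
      rw [bilap_sub_on hΩ.1 hFs.contDiffOn hVbi.1 hx]
      simp only [bilap_comp_sub, hEb, hVbi.2 x hx, sub_zero]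
    have hK0' : ∀ x, ε ≤ ‖x - x₀‖ → K (ε⁻¹ • (x - x₀)) = 0 := by
      intro x hx
      apply hK0
      rw [norm_smul, norm_inv, Real.norm_of_nonneg hε.le, inv_mul_eq_div, one_le_div hε]
      exact hx
    have hgreen := hΩ.integral_mul_bilap_eq_zero hd1 hH hu humax hulim
      (hFs.contDiffOn.sub hVbi.1)
      (hΩ.ntMaxLp_gnorm1_sub_lt_top hd1 hH.symm.lt hFs hVbi.1 hVmax)
      (hasBVals1_sub_zero hΩ.1 hFs hVbi.1 hO hfO hFf hVbv) (half_pos hρ) (by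
        intro x hx hxc
        rw [hbilap x hx, hK0', mul_zero]
        by_contra! hlt
        refine hxc (mem_core_of_dist hΩ.1 (x := x₀) (r := ρ / 2) ?_ (half_pos hρ).le ?_)
        · rw [add_halves]
          exact ⟨hx₀, hρdef.le⟩
        · rw [dist_eq_norm]
          linarith)
    have hind : ∫ x, A * (K (ε⁻¹ • (x - x₀)) * Ω.indicator u x) = 0 := by
      rw [← hgreen, ← integral_indicator hΩ.1.measurableSet]
      congr 1 with x
      by_cases hx : x ∈ Ω
      · rw [indicator_of_mem hx, indicator_of_mem hx, hbilap x hx]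
        ring
      · rw [indicator_of_notMem hx, indicator_of_notMem hx]
        ring
    rw [integral_const_mul, mul_eq_zero, or_iff_right hA,
      ← integral_add_left_eq_self _ x₀] at hind
    have hsub := Measure.integral_comp_smul (volume : Measure (Euc d))
      (fun x => K (ε⁻¹ • (x₀ + x - x₀)) * Ω.indicator u (x₀ + x)) ε
    rw [hind, smul_zero] at hsub
    rw [← hsub]
    congr 1 with z
    rw [add_sub_cancel_left, inv_smul_smul₀ hε.ne']
  have hcont : ContinuousAt (Ω.indicator u) x₀ := by
    refine (hu.1.continuousOn.continuousAt (hΩ.1.mem_nhds hx₀)).congr ?_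
    filter_upwards [hΩ.1.mem_nhds hx₀] with x hx
    rw [indicator_of_mem hx]
  have hlim := tendsto_integral_kernel_mul hKc hK0
    (measurable_indicator_of_continuousOn hΩ.1 hu.1.continuousOn) hcont
  have hev : (fun ε : ℝ => ∫ z, K z * Ω.indicator u (x₀ + ε • z)) =ᶠ[𝓝[>] 0] fun _ => 0 := by
    filter_upwards [Ioc_mem_nhdsGT (half_pos hρ)] with ε hε
    exact hzero ε hε.1 hε.2
  have h0 := tendsto_nhds_unique (hlim.congr' hev) tendsto_const_nhds
  rw [integral_mul_const, mul_eq_zero, or_iff_right hKint, indicator_of_mem hx₀] at h0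
  exact h0

end
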